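/- arXiv:2103.11347 — 2 statements merged into one kernel-verified Lean document; each statement's English description precedes it below -/
import Mathlib

section
/- Consider the circular billiard with boundary the unit circle S = {q ∈ ℝ² : ‖q‖ = 1}. Let p₀ ∈ ℝ² with 0 < ‖p₀‖ < 1 (an interior point which is not the center), and let α ∈ (0, π). Then the set of ordered pairs (v, v′) of unit vectors in ℝ² with ⟨v, v′⟩ = cos α, such that some billiard trajectory from the shot (p₀, v) is periodic and some billiard trajectory from the shot (p₀, v′) is periodic, is finite. -/
noncomputable section

/-- The Euclidean inner product on `ℝ × ℝ`. -/
def ip (v w : ℝ × ℝ) : ℝ := v.1 * w.1 + v.2 * w.2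

/-- The Euclidean norm on `ℝ × ℝ`. -/
def nrm (v : ℝ × ℝ) : ℝ := Real.sqrt (ip v v)

/-- The unit direction vectors along a trajectory: `u 0 = v` and, for `k ≥ 1`,
`u k` is the normalization of `q (k+1) - q k`. -/
def dirs (q : ℕ → ℝ × ℝ) (v : ℝ × ℝ) : ℕ → ℝ × ℝ
  | 0 => v
  | k + 1 => (nrm (q (k + 2) - q (k + 1)))⁻¹ • (q (k + 2) - q (k + 1))

/-- `q` is a billiard trajectory from the shot `(p, v)` in the circular billiard with
boundary the unit circle; the outward unit normal at a boundary point `q_k` is `q_k`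
itself. -/
def IsCircTrajectory (p v : ℝ × ℝ) (q : ℕ → ℝ × ℝ) : Prop :=
  q 0 = p ∧
  (∀ k, 1 ≤ k → nrm (q k) = 1 ∧ q (k + 1) ≠ q k) ∧
  (∃ t : ℝ, 0 < t ∧ q 1 = p + t • v) ∧
  (∀ k : ℕ, dirs q v (k + 1) =
    dirs q v k - (2 * ip (dirs q v k) (q (k + 1))) • q (k + 1))

/-- The trajectory is periodic. -/
def IsPeriodicTraj (q : ℕ → ℝ × ℝ) : Prop :=
  ∃ n : ℕ, 1 ≤ n ∧ ∀ k, 1 ≤ k → q (k + n) = q k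

/-!
Identify the plane with `ℂ`. The phase `z = i · conj u_k · q_{k+1}` is the same at every bounce and
`q_{k+2} = z² q_{k+1}`, so the phase of a periodic trajectory is a root of unity; its real part is
the signed distance from the center to the line of the shot. For two lines through `p₀` at angle `α`
these distances satisfy `x² + x'² - 2 c x x' = R (1 - c²)` with `c = cos α` and `R = ‖p₀‖²`. For
`a = z z'` and `b = z conj z'` this is the hyperbola `(Re a - c) (Re b - c) = -K` with
`K = (1 - R) (1 - c²) ≠ 0`, and it remains to see that only finitely many pairs of roots of unity
lie on it.

If `Re a + Re b` takes two values on these pairs, then `c` and `K` lie in a cyclotomic field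
`ℚ(ζ_M)`. The conjugates over `ℚ(ζ_M)` of a root of unity `a` of large order are almost dense in the
circle, so some field homomorphism `σ` fixing `c` and `K` brings `Re (σ a)` so close to `c` that the
product `(Re (σ a) - c) (Re (σ b) - c)` is smaller than `|K|`. Hence the orders are bounded. If
`Re a + Re b` is constant, then `Re a` and `Re b` are the roots of a single quadratic polynomial.
-/

open scoped ComplexConjugate

theorem nonempty_algHom_of_isTranscendenceBasis {ι E K L : Type*} [Field E] [Field K] [Field L]
    [Algebra E K] [Algebra E L] [IsAlgClosed L] {x : ι → K} {y : ι → L}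
    (hx : IsTranscendenceBasis E x) (hy : AlgebraicIndependent E y) : Nonempty (K →ₐ[E] L) := by
  let R := Algebra.adjoin E (Set.range x)
  let f : R →ₐ[E] L := (MvPolynomial.aeval y).comp hx.1.aevalEquiv.symm.toAlgHom
  have hf : Function.Injective f := by
    simpa only [f] using! Function.Injective.comp hy hx.1.aevalEquiv.symm.injective
  let : Algebra R L := f.toRingHom.toAlgebra
  have : FaithfulSMul R L := (faithfulSMul_iff_algebraMap_injective R L).2 hf
  have : IsScalarTower E R L := .of_algebraMap_eq fun r => (f.commutes r).symm
  have := hx.isAlgebraic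
  exact ⟨(IsAlgClosed.lift : K →ₐ[R] L).restrictScalars E⟩

theorem exists_ringHom_extending_algHom {F E K L ι : Type*} [Field F] [Field E] [Field K]
    [Field L] [Algebra F E] [Algebra F K] [Algebra F L] [Algebra E K] [IsScalarTower F E K]
    [Algebra.IsAlgebraic F E] [IsAlgClosed L] {x : ι → K} {y : ι → L}
    (hx : IsTranscendenceBasis F x) (hy : AlgebraicIndependent F y) (φ : E →ₐ[F] L) :
    ∃ σ : K →+* L, ∀ r : E, σ (algebraMap E K r) = φ r := by
  let : Algebra E L := φ.toRingHom.toAlgebra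
  have : IsScalarTower F E L := .of_algebraMap_eq fun r => (φ.commutes r).symm
  obtain ⟨σ⟩ := nonempty_algHom_of_isTranscendenceBasis
    ((Algebra.IsAlgebraic.isTranscendenceBasis_iff F E).1 hx) (hy.extendScalars E)
  exact ⟨σ, σ.commutes⟩

theorem exists_ringHom_pow_of_coprime (K : Type*) [Field K] [CharZero K] [IsAlgClosed K]
    {n k : ℕ} (hn : n ≠ 0) (hk : k.Coprime n) :
    ∃ σ : K →+* K, ∀ ζ : K, ζ ^ n = 1 → σ ζ = ζ ^ k := by
  have : NeZero n := ⟨hn⟩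
  obtain ⟨ω, hω⟩ := HasEnoughRootsOfUnity.exists_primitiveRoot K n
  have hωint : IsIntegral ℚ ω := hω.isIntegral (Nat.pos_of_ne_zero hn) |>.tower_top
  have hconj : ω ^ k ∈ (minpoly ℚ ω).aroots K := by
    rw [Polynomial.mem_aroots, ← Polynomial.cyclotomic_eq_minpoly_rat hω (Nat.pos_of_ne_zero hn),
      Polynomial.cyclotomic_eq_minpoly_rat (hω.pow_of_coprime k hk) (Nat.pos_of_ne_zero hn)]
    exact ⟨minpoly.ne_zero (hωint.pow k), minpoly.aeval _ _⟩
  let φ := (IntermediateField.algHomAdjoinIntegralEquiv ℚ hωint).symm ⟨ω ^ k, hconj⟩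
  have := IntermediateField.isAlgebraic_adjoin_simple hωint
  obtain ⟨ι, x, hx⟩ := exists_isTranscendenceBasis' ℚ K
  obtain ⟨σ, hσ⟩ := exists_ringHom_extending_algHom hx hx.1 φ
  have hσω : σ ω = ω ^ k :=
    (hσ (IntermediateField.AdjoinSimple.gen ℚ ω)).trans
      (IntermediateField.algHomAdjoinIntegralEquiv_symm_apply_gen ℚ hωint _)
  refine ⟨σ, fun ζ hζ => ?_⟩
  obtain ⟨i, -, rfl⟩ := hω.eq_pow_of_pow_eq_one hζ
  rw [map_pow, hσω, pow_right_comm]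

theorem norm_exp_ofReal_mul_I_sub_le (x y : ℝ) :
    ‖Complex.exp (x * Complex.I) - Complex.exp (y * Complex.I)‖ ≤ |x - y| := by
  have hfactor : Complex.exp (x * Complex.I) - Complex.exp (y * Complex.I) =
      Complex.exp (y * Complex.I) * (Complex.exp (Complex.I * (x - y : ℝ)) - 1) := by
    rw [mul_sub, mul_one, ← Complex.exp_add]
    push_cast
    ring_nf
  rw [hfactor, norm_mul, Complex.norm_exp_ofReal_mul_I, one_mul]
  exact Real.norm_exp_I_mul_ofReal_sub_one_le

theorem exists_pow_rootOfUnity_near {m : ℕ} (hm : m ≠ 0) {w : ℂ} (hw : ‖w‖ = 1) :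
    ∃ s : ℕ, ‖Complex.exp (2 * Real.pi * Complex.I / m) ^ s - w‖ ≤ 2 * Real.pi / m ∧
      ‖Complex.exp (2 * Real.pi * Complex.I / m) ^ (s + 1) - w‖ ≤ 2 * Real.pi / m := by
  set step : ℝ := 2 * Real.pi / m
  have hstep : 0 < step := by positivity
  have hpow (j : ℕ) : Complex.exp (2 * Real.pi * Complex.I / m) ^ j =
      Complex.exp ((j * step : ℝ) * Complex.I) := by
    rw [← Complex.exp_nat_mul]
    push_cast [step]
    ring_nf
  set θ : ℝ := w.arg + 2 * Real.pi
  have hθ : 0 ≤ θ := by linarith [Complex.neg_pi_lt_arg w, Real.pi_pos]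
  have hwθ : w = Complex.exp (θ * Complex.I) := by
    rw [← Complex.norm_mul_exp_arg_mul_I w, hw]
    push_cast [θ]
    rw [add_mul, Complex.exp_add, Complex.exp_two_pi_mul_I, mul_one, one_mul]
  have hle : ⌊θ / step⌋₊ * step ≤ θ :=
    (le_div_iff₀ hstep).1 (Nat.floor_le (div_nonneg hθ hstep.le))
  have hlt : θ < (⌊θ / step⌋₊ + 1) * step := (div_lt_iff₀ hstep).1 (Nat.lt_floor_add_one _)
  have near (j : ℕ) (hj : |j * step - θ| ≤ step) :
      ‖Complex.exp (2 * Real.pi * Complex.I / m) ^ j - w‖ ≤ step := by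
    rw [hpow, hwθ]
    exact (norm_exp_ofReal_mul_I_sub_le _ _).trans hj
  refine ⟨⌊θ / step⌋₊, near _ ?_, near _ ?_⟩
  · rw [abs_le]
    constructor <;> linarith
  · rw [abs_le]
    push_cast
    constructor <;> linarith

theorem exists_pow_primitiveRoot_near {m : ℕ} (hm : m ≠ 0) {g : ℂ} (hg : IsPrimitiveRoot g m)
    {w : ℂ} (hw : ‖w‖ = 1) :
    ∃ u s : ℕ, ‖g ^ (u * s) - w‖ ≤ 2 * Real.pi / m ∧ ‖g ^ (u * (s + 1)) - w‖ ≤ 2 * Real.pi / m := by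
  have : NeZero m := ⟨hm⟩
  obtain ⟨u, -, hu⟩ := hg.eq_pow_of_pow_eq_one (Complex.isPrimitiveRoot_exp m hm).pow_eq_one
  obtain ⟨s, hs⟩ := exists_pow_rootOfUnity_near hm hw
  exact ⟨u, s, by rwa [pow_mul, pow_mul, hu]⟩

theorem exists_prime_pow_dvd_of_factorial_lt {Q N : ℕ} (hQ : Nat.factorial Q < N) :
    ∃ p e : ℕ, p.Prime ∧ Q < p ^ e ∧ p ^ e ∣ N := by
  by_contra! h
  refine hQ.not_ge (Nat.le_of_dvd Q.factorial_pos ((Nat.dvd_iff_prime_pow_dvd_dvd _ _).2 ?_))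
  intro p e hp hpe
  exact Nat.dvd_factorial (pow_pos hp.pos e) (not_lt.1 fun hlt => h p e hp hlt hpe)

theorem coprime_one_add_mul_or_succ {p : ℕ} (hp : p.Prime) (x s : ℕ) :
    (1 + x * s).Coprime p ∨ (1 + x * (s + 1)).Coprime p := by
  simp only [Nat.coprime_comm (m := p), hp.coprime_iff_not_dvd]
  by_contra! h
  have hx : p ∣ x := by
    refine (Nat.dvd_add_right h.1).1 ?_
    rw [add_assoc, ← mul_add_one]
    exact h.2
  exact hp.one_lt.ne' (Nat.dvd_one.1 ((Nat.dvd_add_left (hx.mul_right s)).1 h.1))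

theorem le_mul_orderOf_pow_mul {G : Type*} [Monoid G] {a : G} {l n M : ℕ} (ha : IsOfFinOrder a)
    (hord : orderOf a = l * n) (hM : M ≠ 0) : l ≤ M * orderOf (a ^ (n * M)) := by
  have hn : n ≠ 0 := right_ne_zero_of_mul (hord ▸ ha.orderOf_pos.ne')
  have hdvd : l * n ∣ M * orderOf (a ^ (n * M)) * n := by
    rw [← hord, show M * orderOf (a ^ (n * M)) * n = n * M * orderOf (a ^ (n * M)) by ring,
      orderOf_dvd_iff_pow_eq_one, pow_mul, pow_orderOf_eq_one]
  exact Nat.le_of_dvd (Nat.mul_pos (Nat.pos_of_ne_zero hM) ha.pow.orderOf_pos)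
    (Nat.dvd_of_mul_dvd_mul_right (Nat.pos_of_ne_zero hn) hdvd)

theorem exists_coprime_pow_near_of_prime_pow {N M p e : ℕ} (hN : N ≠ 0) (hM : M ≠ 0)
    (hp : p.Prime) (hpe : p ^ e ∣ N) {a w : ℂ} (ha : IsPrimitiveRoot a N) (hw : ‖w‖ = 1) :
    ∃ k : ℕ, k.Coprime (N * M) ∧ k ≡ 1 [MOD M] ∧ ‖a ^ k - w‖ ≤ 2 * Real.pi * M / p ^ e := by
  obtain ⟨n, rfl⟩ := hpe
  have ha1 : ‖a‖ = 1 := ha.norm'_eq_one hN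
  have ha0 : a ≠ 0 := norm_ne_zero_iff.1 (ha1.symm ▸ one_ne_zero)
  set d := n * M
  set m := orderOf (a ^ d)
  have hm : m ≠ 0 := (ha.isOfFinOrder hN).pow.orderOf_pos.ne'
  have hpm : p ^ e ≤ M * m :=
    le_mul_orderOf_pow_mul (ha.isOfFinOrder hN) ha.eq_orderOf.symm hM
  have hle : 2 * Real.pi / m ≤ 2 * Real.pi * M / p ^ e := by
    have hpe : (0 : ℝ) < p ^ e := by exact_mod_cast pow_pos hp.pos e
    rw [div_le_div_iff₀ (by positivity) hpe, mul_assoc _ (M : ℝ)]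
    gcongr
    exact_mod_cast hpm
  obtain ⟨u, s, hs, hs'⟩ := exists_pow_primitiveRoot_near hm (IsPrimitiveRoot.orderOf (a ^ d))
    (show ‖w / a‖ = 1 by rw [norm_div, hw, ha1, div_one])
  have of_coprime (j : ℕ) (hj : (1 + d * u * j).Coprime p)
      (hnear : ‖(a ^ d) ^ (u * j) - w / a‖ ≤ 2 * Real.pi / m) :
      ∃ k : ℕ, k.Coprime (p ^ e * n * M) ∧ k ≡ 1 [MOD M] ∧
        ‖a ^ k - w‖ ≤ 2 * Real.pi * M / p ^ e := by
    refine ⟨1 + d * u * j, ?_, ?_, ?_⟩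
    · have hd : (1 + d * u * j).Coprime d := by simp [mul_assoc]
      rw [mul_assoc (p ^ e)]
      exact (hj.pow_right e).mul_right hd
    · have hMdvd : M ∣ d * u * j := ((Dvd.intro_left n rfl).mul_right u).mul_right j
      exact (Nat.modEq_zero_iff_dvd.2 hMdvd).add_left 1
    · have hfactor : a ^ (1 + d * u * j) - w = a * ((a ^ d) ^ (u * j) - w / a) := by
        rw [mul_sub, mul_div_cancel₀ _ ha0, ← pow_mul, ← pow_succ', mul_assoc, add_comm]
      rw [hfactor, norm_mul, ha1, one_mul]
      exact hnear.trans hle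
  exact (coprime_one_add_mul_or_succ hp (d * u) s).elim
    (of_coprime s · hs) (of_coprime (s + 1) · hs')

theorem exists_coprime_pow_near {M : ℕ} (hM : M ≠ 0) {δ : ℝ} (hδ : 0 < δ) :
    ∃ B : ℕ, ∀ a : ℂ, B < orderOf a → ∀ w : ℂ, ‖w‖ = 1 →
      ∃ k : ℕ, k.Coprime (orderOf a * M) ∧ k ≡ 1 [MOD M] ∧ ‖a ^ k - w‖ < δ := by
  obtain ⟨Q, hQ⟩ := exists_nat_gt (2 * Real.pi * M / δ)
  refine ⟨Q.factorial, fun a ha w hw => ?_⟩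
  obtain ⟨p, e, hp, hlt, hdvd⟩ := exists_prime_pow_dvd_of_factorial_lt ha
  obtain ⟨k, hk, hkM, hnear⟩ := exists_coprime_pow_near_of_prime_pow (Nat.ne_zero_of_lt ha) hM hp
    hdvd (IsPrimitiveRoot.orderOf a) hw
  refine ⟨k, hk, hkM, hnear.trans_lt ?_⟩
  have hQpe : (Q : ℝ) < p ^ e := by exact_mod_cast hlt
  rw [div_lt_iff₀ (Q.cast_nonneg.trans_lt hQpe), ← div_lt_iff₀' hδ]
  exact hQ.trans hQpe

theorem finite_norm_eq_re_eq (r x : ℝ) : {z : ℂ | ‖z‖ = r ∧ z.re = x}.Finite := by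
  obtain hempty | ⟨z₀, h₀⟩ := {z : ℂ | ‖z‖ = r ∧ z.re = x}.eq_empty_or_nonempty
  · exact hempty ▸ Set.finite_empty
  refine (Set.toFinite {z₀, conj z₀}).subset fun z hz => ?_
  have him : z.im ^ 2 = z₀.im ^ 2 := by
    rw [← Complex.sq_norm_sub_sq_re z, ← Complex.sq_norm_sub_sq_re z₀, hz.1, hz.2, h₀.1, h₀.2]
  exact (sq_eq_sq_iff_eq_or_eq_neg.1 him).imp
    (Complex.ext (hz.2.trans h₀.2.symm)) (Complex.ext (hz.2.trans h₀.2.symm))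

theorem map_re_of_isOfFinOrder (σ : ℂ →+* ℂ) {a : ℂ} (ha : IsOfFinOrder a) :
    σ (a.re : ℂ) = ((σ a).re : ℂ) := by
  have re_eq {z : ℂ} (hz : IsOfFinOrder z) : (z.re : ℂ) = (z + z⁻¹) / 2 := by
    rw [Complex.re_eq_add_conj, Complex.inv_eq_conj hz.norm_eq_one]
  have hσa : IsOfFinOrder (σ a) := σ.toMonoidHom.isOfFinOrder ha
  rw [re_eq ha, re_eq hσa, map_div₀, map_add, map_inv₀, map_ofNat]

/-- The pairs of complex roots of unity whose real parts lie on the hyperbola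
`(x - c) * (y - c) = -K`; these are the torsion points of a curve in the torus `(ℂˣ)²`. -/
def torsionPoints (c K : ℝ) : Set (ℂ × ℂ) :=
  {ab | IsOfFinOrder ab.1 ∧ IsOfFinOrder ab.2 ∧ (ab.1.re - c) * (ab.2.re - c) = -K}

theorem swap_mem_torsionPoints {c K : ℝ} {ab : ℂ × ℂ} (h : ab ∈ torsionPoints c K) :
    ab.swap ∈ torsionPoints c K :=
  ⟨h.2.1, h.1, by rw [mul_comm]; exact h.2.2⟩

theorem map_hyperbola_of_mem_torsionPoints {c K : ℝ} (σ : ℂ →+* ℂ) {ab : ℂ × ℂ}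
    (h : ab ∈ torsionPoints c K) :
    (((σ ab.1).re : ℂ) - σ c) * ((σ ab.2).re - σ c) = -σ K := by
  have := congrArg (fun x : ℝ => σ x) h.2.2
  simpa only [Complex.ofReal_mul, Complex.ofReal_sub, Complex.ofReal_neg, map_mul, map_sub,
    map_neg, map_re_of_isOfFinOrder σ h.1, map_re_of_isOfFinOrder σ h.2.1] using this

theorem finite_torsionPoints_of_re_add_re_eq {c K : ℝ} {P : ℂ × ℂ} (hP : P ∈ torsionPoints c K)
    (hsum : ∀ Q ∈ torsionPoints c K, Q.1.re + Q.2.re = P.1.re + P.2.re) :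
    (torsionPoints c K).Finite := by
  set s : Set ℂ := {z | ‖z‖ = 1 ∧ z.re = P.1.re} ∪ {z | ‖z‖ = 1 ∧ z.re = P.2.re}
  have hs : s.Finite := (finite_norm_eq_re_eq 1 _).union (finite_norm_eq_re_eq 1 _)
  have hmem (Q : ℂ × ℂ) (hQ : Q ∈ torsionPoints c K) : Q.1 ∈ s := by
    have hroot : (Q.1.re - P.1.re) * (Q.1.re - P.2.re) = 0 := by
      linear_combination hP.2.2 - hQ.2.2 + (Q.1.re - c) * hsum Q hQ
    exact (mul_eq_zero.1 hroot).imp (fun h => ⟨hQ.1.norm_eq_one, sub_eq_zero.1 h⟩)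
      (fun h => ⟨hQ.1.norm_eq_one, sub_eq_zero.1 h⟩)
  exact (hs.prod hs).subset fun Q hQ => ⟨hmem Q hQ, hmem Q.swap (swap_mem_torsionPoints hQ)⟩

theorem exists_rootsOfUnity_determining_hyperbola {c K : ℝ} {P Q : ℂ × ℂ}
    (hP : P ∈ torsionPoints c K) (hQ : Q ∈ torsionPoints c K)
    (hne : P.1.re + P.2.re ≠ Q.1.re + Q.2.re) :
    ∃ M : ℕ, M ≠ 0 ∧ ∀ σ : ℂ →+* ℂ, (∀ ζ : ℂ, ζ ^ M = 1 → σ ζ = ζ) → σ c = c ∧ σ K = K := by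
  obtain ⟨M, hM, hroots⟩ : ∃ M : ℕ, M ≠ 0 ∧ P.1 ^ M = 1 ∧ P.2 ^ M = 1 ∧ Q.1 ^ M = 1 ∧
      Q.2 ^ M = 1 := by
    refine ⟨orderOf P.1 * orderOf P.2 * (orderOf Q.1 * orderOf Q.2), ?_, ?_⟩
    · exact mul_ne_zero (mul_ne_zero hP.1.orderOf_pos.ne' hP.2.1.orderOf_pos.ne')
        (mul_ne_zero hQ.1.orderOf_pos.ne' hQ.2.1.orderOf_pos.ne')
    · simp only [← orderOf_dvd_iff_pow_eq_one]
      exact ⟨(Dvd.intro _ rfl).mul_right _, (Dvd.intro_left _ rfl).mul_right _,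
        (Dvd.intro _ rfl).mul_left _, (Dvd.intro_left _ rfl).mul_left _⟩
  refine ⟨M, hM, fun σ hσ => ?_⟩
  have hP' := map_hyperbola_of_mem_torsionPoints σ hP
  have hQ' := map_hyperbola_of_mem_torsionPoints σ hQ
  have hP₀ := map_hyperbola_of_mem_torsionPoints (RingHom.id ℂ) hP
  have hQ₀ := map_hyperbola_of_mem_torsionPoints (RingHom.id ℂ) hQ
  rw [hσ _ hroots.1, hσ _ hroots.2.1] at hP'
  rw [hσ _ hroots.2.2.1, hσ _ hroots.2.2.2] at hQ'
  simp only [RingHom.id_apply] at hP₀ hQ₀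
  have hne' : (P.1.re + P.2.re - (Q.1.re + Q.2.re) : ℂ) ≠ 0 := by
    exact_mod_cast sub_ne_zero.2 hne
  have hc : σ c = c :=
    mul_left_cancel₀ hne' (by linear_combination hQ' - hP' + hP₀ - hQ₀)
  rw [hc] at hP'
  exact ⟨hc, by linear_combination hP' - hP₀⟩

theorem exists_forall_orderOf_fst_le {c K : ℝ} (hc : c ∈ Set.Icc (-1) 1) (hK : K ≠ 0)
    {M : ℕ} (hM : M ≠ 0)
    (hfix : ∀ σ : ℂ →+* ℂ, (∀ ζ : ℂ, ζ ^ M = 1 → σ ζ = ζ) → σ c = c ∧ σ K = K) :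
    ∃ B : ℕ, ∀ ab ∈ torsionPoints c K, orderOf ab.1 ≤ B := by
  obtain ⟨B, hB⟩ := exists_coprime_pow_near hM (show 0 < |K| / 2 by positivity)
  refine ⟨B, fun ab hab => not_lt.1 fun hlt => ?_⟩
  obtain ⟨w, hw, hwre⟩ : ∃ w : ℂ, ‖w‖ = 1 ∧ w.re = c :=
    ⟨Complex.exp (Real.arccos c * Complex.I), Complex.norm_exp_ofReal_mul_I _, by
      rw [Complex.exp_ofReal_mul_I_re, Real.cos_arccos hc.1 hc.2]⟩
  obtain ⟨k, hk, hkM, hnear⟩ := hB ab.1 hlt w hw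
  obtain ⟨σ, hσ⟩ := exists_ringHom_pow_of_coprime ℂ
    (mul_ne_zero hab.1.orderOf_pos.ne' hM) hk
  have hσM (ζ : ℂ) (hζ : ζ ^ M = 1) : σ ζ = ζ := by
    rw [hσ ζ (by rw [mul_comm, pow_mul, hζ, one_pow]), pow_eq_pow_of_modEq hkM hζ, pow_one]
  have hσa : σ ab.1 = ab.1 ^ k := hσ _ (by rw [pow_mul, pow_orderOf_eq_one, one_pow])
  have heq : ((ab.1 ^ k).re - c) * ((σ ab.2).re - c) = -K := by
    have := map_hyperbola_of_mem_torsionPoints σ hab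
    rw [(hfix σ hσM).1, (hfix σ hσM).2, hσa] at this
    exact_mod_cast this
  have hfar : |(σ ab.2).re - c| ≤ 2 := by
    have hre : |(σ ab.2).re| ≤ 1 := (Complex.abs_re_le_norm (σ ab.2)).trans_eq
      (σ.toMonoidHom.isOfFinOrder hab.2.1).norm_eq_one
    exact (abs_sub _ _).trans (by linarith [abs_le.2 hc])
  have hclose : |(ab.1 ^ k).re - c| < |K| / 2 := by
    rw [← hwre, ← Complex.sub_re]
    exact (Complex.abs_re_le_norm _).trans_lt hnear
  have hsmall : |K| < |K| := calc
    |K| = |(ab.1 ^ k).re - c| * |(σ ab.2).re - c| := by rw [← abs_mul, heq, abs_neg]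
    _ ≤ |(ab.1 ^ k).re - c| * 2 := by gcongr
    _ < |K| := by linarith
  exact hsmall.false

theorem finite_isOfFinOrder_orderOf_le {R : Type*} [CommRing R] [IsDomain R] (B : ℕ) :
    {a : R | IsOfFinOrder a ∧ orderOf a ≤ B}.Finite := by
  refine (Polynomial.nthRootsFinset B.factorial (1 : R)).finite_toSet.subset fun a ha => ?_
  exact (Polynomial.mem_nthRootsFinset B.factorial_pos 1).2
    (orderOf_dvd_iff_pow_eq_one.1 (Nat.dvd_factorial ha.1.orderOf_pos ha.2))

theorem finite_torsionPoints {c K : ℝ} (hc : c ∈ Set.Icc (-1) 1) (hK : K ≠ 0) :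
    (torsionPoints c K).Finite := by
  obtain hempty | ⟨P, hP⟩ := (torsionPoints c K).eq_empty_or_nonempty
  · exact hempty ▸ Set.finite_empty
  by_cases hsum : ∀ Q ∈ torsionPoints c K, Q.1.re + Q.2.re = P.1.re + P.2.re
  · exact finite_torsionPoints_of_re_add_re_eq hP hsum
  push Not at hsum
  obtain ⟨Q, hQ, hne⟩ := hsum
  obtain ⟨M, hM, hfix⟩ := exists_rootsOfUnity_determining_hyperbola hQ hP hne
  obtain ⟨B, hB⟩ := exists_forall_orderOf_fst_le hc hK hM hfix
  have hfin := finite_isOfFinOrder_orderOf_le (R := ℂ) B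
  exact (hfin.prod hfin).subset fun ab hab =>
    ⟨⟨hab.1, hB ab hab⟩, hab.2.1, hB ab.swap (swap_mem_torsionPoints hab)⟩

theorem mul_mem_torsionPoints {c R : ℝ} {z z' : ℂ} (hz : IsOfFinOrder z) (hz' : IsOfFinOrder z')
    (hell : z.re ^ 2 + z'.re ^ 2 - 2 * c * z.re * z'.re = R * (1 - c ^ 2)) :
    (z * z', z * conj z') ∈ torsionPoints c ((1 - R) * (1 - c ^ 2)) := by
  have him := Complex.sq_norm_sub_sq_re z
  have him' := Complex.sq_norm_sub_sq_re z'
  rw [hz.norm_eq_one] at him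
  rw [hz'.norm_eq_one] at him'
  refine ⟨hz.mul hz', hz.mul ((starRingEnd ℂ).toMonoidHom.isOfFinOrder hz'), ?_⟩
  simp only [Complex.mul_re, Complex.conj_re, Complex.conj_im]
  linear_combination hell + z'.im ^ 2 * him + (1 - z.re ^ 2) * him'

theorem finite_isOfFinOrder_re_ellipse {c R : ℝ} (hc : c ∈ Set.Icc (-1) 1)
    (hR : (1 - R) * (1 - c ^ 2) ≠ 0) :
    {zz : ℂ × ℂ | IsOfFinOrder zz.1 ∧ IsOfFinOrder zz.2 ∧
      zz.1.re ^ 2 + zz.2.re ^ 2 - 2 * c * zz.1.re * zz.2.re = R * (1 - c ^ 2)}.Finite := by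
  refine .of_finite_fibers (fun zz : ℂ × ℂ => (zz.1 * zz.2, zz.1 * conj zz.2))
    ((finite_torsionPoints hc hR).subset ?_) fun ab _ => ?_
  · rintro _ ⟨zz, ⟨hz, hz', hell⟩, rfl⟩
    exact mul_mem_torsionPoints hz hz' hell
  · refine ((Polynomial.nthRootsFinset 2 (ab.1 * ab.2)).finite_toSet.prod
      (Polynomial.nthRootsFinset 2 (ab.1 * conj ab.2)).finite_toSet).subset ?_
    rintro ⟨z, z'⟩ ⟨⟨hz, hz', -⟩, rfl⟩
    have hunit {w : ℂ} (hw : IsOfFinOrder w) : conj w * w = 1 := by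
      rw [Complex.conj_mul', hw.norm_eq_one, Complex.ofReal_one, one_pow]
    refine ⟨(Polynomial.mem_nthRootsFinset two_pos _).2 ?_,
      (Polynomial.mem_nthRootsFinset two_pos _).2 ?_⟩
    · linear_combination (-z ^ 2) * hunit hz'
    · simp only [map_mul, Complex.conj_conj]
      linear_combination (-z' ^ 2) * hunit hz

/-- The identification of the plane `ℝ × ℝ` with `ℂ`, so that reflections can be written as
conjugations followed by multiplications. -/
def toComplex : (ℝ × ℝ) ≃ₗ[ℝ] ℂ := Complex.equivRealProdLm.symm

theorem toComplex_re (v : ℝ × ℝ) : (toComplex v).re = v.1 := rfl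

theorem toComplex_im (v : ℝ × ℝ) : (toComplex v).im = v.2 := rfl

theorem norm_toComplex (v : ℝ × ℝ) : ‖toComplex v‖ = nrm v := by
  rw [Complex.norm_def, Complex.normSq_apply, nrm, ip, toComplex_re, toComplex_im]

/-- The signed distance from the center of the disc to the line through `p` with unit direction `v`;
the sign is that of the determinant of `(p, v)`. -/
def impactParameter (p v : ℝ × ℝ) : ℝ := p.1 * v.2 - p.2 * v.1

theorem re_I_mul_conj_mul (p v : ℝ × ℝ) :
    (Complex.I * (conj (toComplex v) * toComplex p)).re = impactParameter p v := by
  simp only [Complex.I_mul_re, Complex.mul_im, Complex.conj_re, Complex.conj_im, toComplex_re,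
    toComplex_im, impactParameter]
  ring

theorem gram_impactParameter {v v' : ℝ × ℝ} (hv : nrm v = 1) (hv' : nrm v' = 1) (p : ℝ × ℝ) :
    impactParameter p v ^ 2 + impactParameter p v' ^ 2 -
      2 * ip v v' * impactParameter p v * impactParameter p v' = nrm p ^ 2 * (1 - ip v v' ^ 2) := by
  have ip_self (w : ℝ × ℝ) : ip w w = nrm w ^ 2 :=
    (Real.sq_sqrt (add_nonneg (mul_self_nonneg _) (mul_self_nonneg _))).symm
  have h := ip_self v
  have h' := ip_self v'
  rw [hv, one_pow] at h
  rw [hv', one_pow] at h'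
  rw [← ip_self p]
  simp only [impactParameter, ip] at h h' ⊢
  linear_combination (-(p.1 * v.2 - p.2 * v.1) ^ 2) * h' - (p.1 * v'.2 - p.2 * v'.1) ^ 2 * h +
    (p.1 * p.1 + p.2 * p.2) * ((v'.1 * v'.1 + v'.2 * v'.2) * h + h')

theorem finite_impactParameter_fiber {p : ℝ × ℝ} (hp : p ≠ 0) (x : ℝ) :
    {v : ℝ × ℝ | nrm v = 1 ∧ impactParameter p v = x}.Finite := by
  have hinj : Function.Injective fun v : ℝ × ℝ =>
      Complex.I * (conj (toComplex v) * toComplex p) := fun v w h => by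
    have hp' : toComplex p ≠ 0 := by simpa using hp
    exact toComplex.injective ((starRingEnd ℂ).injective
      (mul_right_cancel₀ hp' (mul_left_cancel₀ Complex.I_ne_zero h)))
  refine ((finite_norm_eq_re_eq (nrm p) x).preimage hinj.injOn).subset fun v hv => ⟨?_, ?_⟩
  · rw [norm_mul, norm_mul, Complex.norm_I, RCLike.norm_conj, norm_toComplex, norm_toComplex, hv.1,
      one_mul, one_mul]
  · exact (re_I_mul_conj_mul p v).trans hv.2

theorem toComplex_reflection {n : ℝ × ℝ} (hn : nrm n = 1) (u : ℝ × ℝ) :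
    toComplex (u - (2 * ip u n) • n) = -(conj (toComplex u) * toComplex n ^ 2) := by
  have hip : ((2 * ip u n : ℝ) : ℂ) = conj (toComplex u) * toComplex n +
      toComplex u * conj (toComplex n) := by
    have hre := Complex.add_conj (conj (toComplex u) * toComplex n)
    rw [map_mul, Complex.conj_conj] at hre
    rw [hre, Complex.mul_re, Complex.conj_re, Complex.conj_im, ip]
    simp only [toComplex_re, toComplex_im]
    ring_nf
  have hunit := Complex.mul_conj' (toComplex n)
  rw [norm_toComplex, hn, Complex.ofReal_one, one_pow] at hunit
  rw [map_sub, map_smul, Complex.real_smul, hip]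
  linear_combination -toComplex u * hunit

/-- The unit complex number `i · conj u_k · q_{k+1}`, which encodes the angle between the direction
before the bounce at `q (k + 1)` and the normal there. The factor `i` makes its real part the signed
distance from the center to the line of flight. -/
def incidencePhase (q : ℕ → ℝ × ℝ) (v : ℝ × ℝ) (k : ℕ) : ℂ :=
  Complex.I * (conj (toComplex (dirs q v k)) * toComplex (q (k + 1)))

theorem conj_smul_sub_mul {x y : ℂ} (h : ‖x‖ = ‖y‖) (r : ℝ) :
    conj (r • (y - x)) * y = -(r • (y - x) * conj x) := by
  have hxy : x * conj x = y * conj y := by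
    rw [Complex.mul_conj', Complex.mul_conj', h]
  rw [Complex.real_smul, map_mul, map_sub, Complex.conj_ofReal]
  linear_combination -r * hxy

section Trajectory

variable {p v : ℝ × ℝ} {q : ℕ → ℝ × ℝ}

theorem conj_toComplex_dirs_mul (h : IsCircTrajectory p v q) (k : ℕ) :
    conj (toComplex (dirs q v (k + 1))) * toComplex (q (k + 2)) =
      -(toComplex (dirs q v (k + 1)) * conj (toComplex (q (k + 1)))) := by
  rw [dirs, map_smul, map_sub]
  refine conj_smul_sub_mul ?_ _
  rw [norm_toComplex, norm_toComplex, (h.2.1 _ k.succ_pos).1, (h.2.1 _ (k + 1).succ_pos).1]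

theorem conj_toComplex_mul_self (h : IsCircTrajectory p v q) (k : ℕ) :
    conj (toComplex (q (k + 1))) * toComplex (q (k + 1)) = 1 := by
  rw [Complex.conj_mul', norm_toComplex, (h.2.1 _ k.succ_pos).1, Complex.ofReal_one, one_pow]

theorem incidencePhase_eq (h : IsCircTrajectory p v q) (k : ℕ) :
    incidencePhase q v k = incidencePhase q v 0 := by
  induction k with
  | zero => rfl
  | succ k ih =>
    rw [← ih, incidencePhase, conj_toComplex_dirs_mul h, h.2.2.2 k,
      toComplex_reflection (h.2.1 _ k.succ_pos).1, incidencePhase]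
    linear_combination Complex.I * conj (toComplex (dirs q v k)) *
      toComplex (q (k + 1)) * conj_toComplex_mul_self h k

theorem norm_incidencePhase (h : IsCircTrajectory p v q) (k : ℕ) :
    ‖incidencePhase q v k‖ = nrm (dirs q v k) := by
  rw [incidencePhase, norm_mul, norm_mul, Complex.norm_I, RCLike.norm_conj, norm_toComplex,
    norm_toComplex, (h.2.1 _ k.succ_pos).1, one_mul, mul_one]

theorem toComplex_succ_succ (h : IsCircTrajectory p v q) (hv : nrm v = 1) (k : ℕ) :
    toComplex (q (k + 2)) = incidencePhase q v 0 ^ 2 * toComplex (q (k + 1)) := by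
  have hunit : conj (toComplex (dirs q v (k + 1))) * toComplex (dirs q v (k + 1)) = 1 := by
    rw [Complex.conj_mul', norm_toComplex, ← norm_incidencePhase h, incidencePhase_eq h,
      norm_incidencePhase h, dirs, hv, Complex.ofReal_one, one_pow]
  rw [← incidencePhase_eq h (k + 1), incidencePhase, mul_pow, Complex.I_sq]
  linear_combination
    conj (toComplex (dirs q v (k + 1))) * toComplex (q (k + 2)) *
        toComplex (q (k + 1)) * conj_toComplex_dirs_mul h k
      - toComplex (q (k + 2)) * conj (toComplex (q (k + 1))) *
        toComplex (q (k + 1)) * hunit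
      - toComplex (q (k + 2)) * conj_toComplex_mul_self h k

theorem toComplex_eq_pow_mul (h : IsCircTrajectory p v q) (hv : nrm v = 1) (k : ℕ) :
    toComplex (q (k + 1)) = (incidencePhase q v 0 ^ 2) ^ k * toComplex (q 1) := by
  induction k with
  | zero => rw [pow_zero, one_mul]
  | succ k ih => rw [toComplex_succ_succ h hv, ih, pow_succ' _ k, mul_assoc]

theorem isOfFinOrder_incidencePhase (h : IsCircTrajectory p v q) (hv : nrm v = 1)
    (hper : IsPeriodicTraj q) : IsOfFinOrder (incidencePhase q v 0) := by
  obtain ⟨n, hn, hper⟩ := hper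
  refine (isOfFinOrder_iff_pow_eq_one.2 ⟨n, hn, ?_⟩ : IsOfFinOrder (_ ^ 2)).of_pow two_ne_zero
  have hq : toComplex (q 1) ≠ 0 := right_ne_zero_of_mul_eq_one (conj_toComplex_mul_self h 0)
  refine mul_right_cancel₀ hq ?_
  rw [← toComplex_eq_pow_mul h hv, add_comm, hper 1 le_rfl, one_mul]

theorem re_incidencePhase_zero (h : IsCircTrajectory p v q) :
    (incidencePhase q v 0).re = impactParameter p v := by
  obtain ⟨t, -, ht⟩ := h.2.2.1
  rw [incidencePhase, re_I_mul_conj_mul, dirs, zero_add, ht]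
  simp only [impactParameter, Prod.fst_add, Prod.snd_add, Prod.smul_fst, Prod.smul_snd, smul_eq_mul]
  ring

end Trajectory

theorem exists_isOfFinOrder_re_eq_impactParameter {p v : ℝ × ℝ} (hv : nrm v = 1)
    (h : ∃ q, IsCircTrajectory p v q ∧ IsPeriodicTraj q) :
    ∃ z : ℂ, IsOfFinOrder z ∧ z.re = impactParameter p v :=
  h.imp' (incidencePhase · v 0) fun _ hq =>
    ⟨isOfFinOrder_incidencePhase hq.1 hv hq.2, re_incidencePhase_zero hq.1⟩

theorem finiteness_angle_circle_general (p₀ : ℝ × ℝ) (hp₀ : 0 < nrm p₀) (hp₀' : nrm p₀ ≠ 1)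
    (α : ℝ) (hα : α ∈ Set.Ioo 0 Real.pi) :
    {vv : (ℝ × ℝ) × (ℝ × ℝ) |
      nrm vv.1 = 1 ∧ nrm vv.2 = 1 ∧ ip vv.1 vv.2 = Real.cos α ∧
      (∃ q, IsCircTrajectory p₀ vv.1 q ∧ IsPeriodicTraj q) ∧
      (∃ q, IsCircTrajectory p₀ vv.2 q ∧ IsPeriodicTraj q)}.Finite := by
  have hp : p₀ ≠ 0 := by rintro rfl; simp [nrm, ip] at hp₀
  have hR : (1 - nrm p₀ ^ 2) * (1 - Real.cos α ^ 2) ≠ 0 := by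
    refine mul_ne_zero ?_ ?_
    · rw [sub_ne_zero, ne_comm, Ne, pow_eq_one_iff_of_nonneg hp₀.le two_ne_zero]
      exact hp₀'
    · rw [← Real.sin_sq]
      exact pow_ne_zero 2 (Real.sin_pos_of_mem_Ioo hα).ne'
  have hell := (finite_isOfFinOrder_re_ellipse (Real.cos_mem_Icc α) hR).image
    (Prod.map Complex.re Complex.re)
  refine .of_finite_fibers (Prod.map (impactParameter p₀) (impactParameter p₀))
    (hell.subset ?_) fun x _ => ?_
  · rintro _ ⟨⟨v, v'⟩, ⟨hv, hv', hvv', hper, hper'⟩, rfl⟩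
    obtain ⟨z, hz, hzre⟩ := exists_isOfFinOrder_re_eq_impactParameter hv hper
    obtain ⟨z', hz', hzre'⟩ := exists_isOfFinOrder_re_eq_impactParameter hv' hper'
    refine ⟨(z, z'), ⟨hz, hz', ?_⟩, Prod.ext hzre hzre'⟩
    rw [hzre, hzre', ← hvv', gram_impactParameter hv hv']
  · refine ((finite_impactParameter_fiber hp x.1).prod
      (finite_impactParameter_fiber hp x.2)).subset ?_
    rintro vv ⟨⟨hv, hv', -⟩, rfl⟩
    exact ⟨⟨hv, rfl⟩, hv', rfl⟩

/-- In the circular billiard, for an interior point `p₀` other than the center and an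
angle `α ∈ (0, π)`, only finitely many pairs of directions forming angle `α` give two
periodic trajectories. -/
theorem finiteness_angle_circle (p₀ : ℝ × ℝ) (hp₀ : 0 < nrm p₀) (hp₀' : nrm p₀ < 1)
    (α : ℝ) (hα : α ∈ Set.Ioo 0 Real.pi) :
    {vv : (ℝ × ℝ) × (ℝ × ℝ) |
      nrm vv.1 = 1 ∧ nrm vv.2 = 1 ∧ ip vv.1 vv.2 = Real.cos α ∧
      (∃ q, IsCircTrajectory p₀ vv.1 q ∧ IsPeriodicTraj q) ∧
      (∃ q, IsCircTrajectory p₀ vv.2 q ∧ IsPeriodicTraj q)}.Finite :=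
  finiteness_angle_circle_general p₀ hp₀ hp₀'.ne α hα
end
end

section
/- Let λ₁, λ₂ ∈ ℂ* be multiplicatively independent (i.e. if λ₁^a·λ₂^b = 1 with a, b ∈ ℤ then a = b = 0), and let β be the automorphism of ℙ²(ℂ) induced by the diagonal matrix diag(λ₁, λ₂, 1). Let L₁, L₂, L₃ be lines in ℙ²(ℂ) lying in pairwise distinct β-orbits (β^k(L_i) ≠ L_j for all k ∈ ℤ and all i ≠ j). Then there are only finitely many β-orbits of points of ℙ²(ℂ) which intersect all three lines L₁, L₂, L₃: there exists a finite set F ⊂ ℙ²(ℂ) such that every point P ∈ ℙ²(ℂ) for which there exist integers m₁, m₂, m₃ with β^{m₁}(P) ∈ L₁, β^{m₂}(P) ∈ L₂ and β^{m₃}(P) ∈ L₃ lies in the β-orbit of some element of F. -/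
noncomputable section

open Projectivization

/-- The projective plane `ℙ²(ℂ)`. -/
abbrev ProjPlane := Projectivization ℂ (Fin 3 → ℂ)

/-- The automorphism of `ℙ²(ℂ)` induced by a linear automorphism `g` of `ℂ³`. -/
def projAct (g : (Fin 3 → ℂ) ≃ₗ[ℂ] (Fin 3 → ℂ)) (x : ProjPlane) : ProjPlane :=
  Projectivization.map g.toLinearMap g.injective x

/-- The point `P ∈ ℙ²(ℂ)` lies on the line which is the projectivization of the
2-dimensional subspace `W ⊂ ℂ³`. -/
def OnLine (P : ProjPlane) (W : Submodule ℂ (Fin 3 → ℂ)) : Prop :=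
  P.submodule ≤ W

/-!
Write `l` for the diagonal entries of `β` and `b i` for a covector defining `W i`. If `P = [v]` lies
off the coordinate lines and `β ^ m i` moves it onto `W i` for each `i`, then `v` is a kernel vector
of the matrix `(b i j * l j ^ m i)`, so the determinant of this matrix vanishes. The crux is that
there is a bound, independent of `m`, on the smallest gap `|m i - m j|`, `i ≠ j`; hence some
translate of `P` is one of the finitely many points of the intersections `W i ∩ β ^ d (W j)`.

When two entries in a row or in a column of `b`, or all but two terms of the determinant, vanish,
this is elementary. Otherwise the rows and columns can be arranged so that all off-diagonal entries
of `b` are nonzero, and `b` and `l` can be specialized to a number field while the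
`l i ^ 2 / (l j * l k)` remain of infinite order. By Kronecker's theorem some place there tells
apart the absolute values of the `l i`. If the gaps in `m` were large, the vanishing of the
determinant would make a power `x ^ k` of some `x` of infinite order exponentially close, at a
suitable place, to a number whose height is a small multiple of `k`.

A gap principle in the style of Thue forbids this for large `k`: two such approximations
`x ^ k₁ ≈ g₁` and `x ^ k₂ ≈ g₂` with `k₂` much larger than `k₁` exclude each other. Indeed, for
`k₁ * q = k₂ + r`, the numbers `ξ = x ^ k₁ / g₁` and `y = g₂ / x ^ k₂` are close to one, so
`ξ ^ s * y ^ j` is nearly a polynomial in `s` along the nodes `s = q * j + t`. An integral linear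
relation satisfied by the values of all polynomials of low degree at these nodes, evaluated at
`ξ ^ s * y ^ j`, then yields a nonzero number too small for its height, which stays low because
`x ^ (k₁ * q * j)` and `x ^ (-k₂ * j)` nearly cancel.
-/

universe u

open Polynomial Height AdmissibleAbsValues Filter
open scoped Matrix LinearAlgebra.Projectivization

/-! ### Integral interpolation on a grid -/

theorem lcmUpto_dvd_lcmUpto {m N : ℕ} (h : m ≤ N) : m.lcmUpto ∣ N.lcmUpto :=
  Finset.lcm_dvd fun _ hb ↦ Finset.dvd_lcm (f := id) (Finset.Icc_subset_Icc_right h hb)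

theorem dvd_lcmUpto {m N : ℕ} (hm : m ≠ 0) (h : m ≤ N) : m ∣ N.lcmUpto :=
  Finset.dvd_lcm (f := id) (Finset.mem_Icc.2 ⟨Nat.one_le_iff_ne_zero.2 hm, h⟩)

theorem prod_range_sub_eq_factorial_mul_choose (x : ℤ) (n : ℕ) :
    ∏ i ∈ Finset.range n, (x - i) = n.factorial * Ring.choose x n := by
  rw [← descPochhammer_eval_eq_prod_range, ← nsmul_eq_mul,
    ← Ring.descPochhammer_eq_factorial_smul_choose, eval_eq_smeval]

theorem exists_natAbs_choose_eq {n N : ℕ} {x : ℤ} (hx : x ≤ N) (hxn : n - x ≤ N + 1) :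
    ∃ m ≤ N, (Ring.choose x n).natAbs = m.choose n ∧ (x ∉ Set.Ico (0 : ℤ) n → n ≤ m) := by
  rcases le_or_gt 0 x with h0 | h0
  · lift x to ℕ using h0
    refine ⟨x, by exact_mod_cast hx, by rw [Ring.choose_natCast, Int.natAbs_natCast], fun h ↦ ?_⟩
    simpa using h
  · obtain ⟨m, hm⟩ : ∃ m : ℕ, (m : ℤ) = -x + n - 1 := ⟨(-x + n - 1).toNat, by omega⟩
    refine ⟨m, by omega, ?_, fun _ ↦ by omega⟩
    have h : Ring.choose x n = Int.negOnePow n • (m.choose n : ℤ) := by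
      rw [← Ring.choose_natCast, hm, ← Ring.choose_neg, neg_neg]
    rw [h, Units.smul_def, smul_eq_mul, Int.natAbs_mul, Int.units_natAbs, one_mul,
      Int.natAbs_natCast]

theorem abs_choose_le_two_pow {n N : ℕ} {x : ℤ} (hx : x ≤ N) (hxn : n - x ≤ N + 1) :
    |Ring.choose x n| ≤ 2 ^ N := by
  obtain ⟨m, hm, h, -⟩ := exists_natAbs_choose_eq hx hxn
  rw [Int.abs_eq_natAbs, h]
  exact_mod_cast (Nat.choose_le_two_pow m n).trans (Nat.pow_le_pow_right two_pos hm)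

theorem choose_dvd_lcmUpto {n N : ℕ} {x : ℤ} (hx : x ≤ N) (hxn : n - x ≤ N + 1)
    (hx0 : x ∉ Set.Ico (0 : ℤ) n) : Ring.choose x n ∣ (N.lcmUpto : ℤ) := by
  obtain ⟨m, hm, h, hnm⟩ := exists_natAbs_choose_eq hx hxn
  rw [← Int.natAbs_dvd, h, Int.natCast_dvd_natCast]
  exact (Chebyshev.choose_dvd_lcmUpto (hnm hx0)).trans (lcmUpto_dvd_lcmUpto hm)

theorem exists_lcmUpto_eq_mul {N : ℕ} {d : ℤ} (h : d ∣ (N.lcmUpto : ℤ)) :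
    ∃ g : ℤ, (N.lcmUpto : ℤ) = d * g ∧ |g| ≤ N.lcmUpto := by
  obtain ⟨g, hg⟩ := h
  refine ⟨g, hg, Int.le_of_dvd (mod_cast N.lcmUpto_pos) ?_⟩
  exact (abs_dvd _ _).2 ⟨d, by rw [hg, mul_comm]⟩

theorem prod_erase_self_sub (i m : ℕ) :
    ∏ k ∈ (Finset.range (i + 1 + m)).erase i, ((i : ℤ) - k) =
      (-1) ^ m * (i.factorial * m.factorial) := by
  have hlow : ∏ k ∈ Finset.range i, ((i : ℤ) - k) = i.factorial := by
    rw [prod_range_sub_eq_factorial_mul_choose, Ring.choose_natCast, Nat.choose_self]; simp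
  have hhigh : ∏ k ∈ Finset.range m, ((i : ℤ) - (i + 1 + k : ℕ)) = (-1) ^ m * m.factorial := by
    rw [← Finset.prod_range_add_one_eq_factorial, Nat.cast_prod]
    nth_rewrite 2 [← Finset.card_range m]
    rw [← Finset.prod_const, ← Finset.prod_mul_distrib]
    exact Finset.prod_congr rfl fun k _ ↦ by push_cast; ring
  rw [← Finset.filter_ne', Finset.prod_filter, Finset.prod_range_add, Finset.prod_range_succ,
    if_neg (not_not.2 rfl), mul_one,
    Finset.prod_congr rfl fun k hk ↦ if_pos (Finset.mem_range.1 hk).ne,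
    Finset.prod_congr rfl fun k _ ↦ if_pos (by omega : i + 1 + k ≠ i), hlow, hhigh]
  ring

theorem exists_mul_prod_range_sub_eq {n N : ℕ} {x y : ℤ} (hx : x ≤ N) (hxn : n - x ≤ N + 1)
    (hx0 : x ∉ Set.Ico (0 : ℤ) n) (hy : y ≤ N) (hyn : n - y ≤ N + 1) :
    ∃ f : ℤ, f * ∏ i ∈ Finset.range n, (x - i) = N.lcmUpto * ∏ i ∈ Finset.range n, (y - i) ∧
      |f| ≤ N.lcmUpto * 8 ^ N := by
  obtain ⟨g, hg, hgL⟩ := exists_lcmUpto_eq_mul (choose_dvd_lcmUpto hx hxn hx0)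
  refine ⟨g * Ring.choose y n, ?_, ?_⟩
  · rw [prod_range_sub_eq_factorial_mul_choose, prod_range_sub_eq_factorial_mul_choose, hg]
    ring
  · rw [abs_mul]
    gcongr
    exact (abs_choose_le_two_pow hy hyn).trans (by gcongr; norm_num)

theorem exists_mul_prod_erase_sub_eq {n N i : ℕ} {y : ℤ} (hi : i < n) (hnN : n ≤ N) (hy : y ≤ N)
    (hyn : n - y ≤ N + 1) (hy0 : y ∉ Set.Ico (0 : ℤ) n) :
    ∃ f : ℤ, f * ∏ k ∈ (Finset.range n).erase i, ((i : ℤ) - k) =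
        N.lcmUpto * ∏ k ∈ (Finset.range n).erase i, (y - k) ∧
      |f| ≤ N.lcmUpto * 8 ^ N := by
  obtain ⟨m, rfl⟩ : ∃ m, n = i + 1 + m := ⟨n - (i + 1), by omega⟩
  rw [Set.mem_Ico] at hy0
  have hdvd : y - i ∣ (N.lcmUpto : ℤ) := by
    rw [← Int.natAbs_dvd, Int.natCast_dvd_natCast]
    exact dvd_lcmUpto (by omega) (by omega)
  obtain ⟨g, hg, hgL⟩ := exists_lcmUpto_eq_mul hdvd
  have hprod := prod_range_sub_eq_factorial_mul_choose y (i + 1 + m)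
  rw [← Finset.mul_prod_erase _ _ (Finset.mem_range.2 hi)] at hprod
  have hfact : ((i + 1 + m).factorial : ℤ) =
      (i + 1 + m : ℕ) * ((i + m).choose m * i.factorial * m.factorial) := by
    rw [add_right_comm, Nat.factorial_succ, ← Nat.add_choose_mul_factorial_mul_factorial]
    push_cast; ring
  have hsign : (-1 : ℤ) ^ m * (-1) ^ m = 1 := by rw [← mul_pow]; simp
  refine ⟨g * (i + 1 + m : ℕ) * ((-1) ^ m * (i + m).choose m) * Ring.choose y (i + 1 + m), ?_, ?_⟩
  · rw [prod_erase_self_sub, hg]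
    rw [hfact] at hprod
    linear_combination -g * hprod + g * (i + 1 + m : ℕ) * (i + m).choose m *
      Ring.choose y (i + 1 + m) * i.factorial * m.factorial * hsign
  · have hn : ((i + 1 + m : ℕ) : ℤ) ≤ 2 ^ N := mod_cast hnN.trans Nat.lt_two_pow_self.le
    have hchoose : ((i + m).choose m : ℤ) ≤ 2 ^ N := by
      exact_mod_cast (Nat.choose_le_two_pow _ _).trans (Nat.pow_le_pow_right two_pos (by omega))
    calc |g * (i + 1 + m : ℕ) * ((-1) ^ m * (i + m).choose m) * Ring.choose y (i + 1 + m)|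
        = |g| * (i + 1 + m : ℕ) * (i + m).choose m * |Ring.choose y (i + 1 + m)| := by
          simp only [abs_mul, abs_neg_one_pow, Nat.abs_cast, one_mul]
      _ ≤ N.lcmUpto * 2 ^ N * 2 ^ N * 2 ^ N := by
          gcongr; exact abs_choose_le_two_pow hy hyn
      _ = N.lcmUpto * 8 ^ N := by rw [show (8 : ℤ) = 2 * 2 * 2 by norm_num, mul_pow, mul_pow]; ring

theorem exists_mul_prod_filter_sub_eq {n N : ℕ} {x y : ℤ} (hnN : n ≤ N) (hx : x ≤ N)
    (hxn : n - x ≤ N + 1) (hy : y ≤ N) (hyn : n - y ≤ N + 1) (hy0 : y ∉ Set.Ico (0 : ℤ) n) :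
    ∃ f : ℤ, f * ∏ i ∈ (Finset.range n).filter (fun i : ℕ ↦ (i : ℤ) ≠ x), (x - i) =
        N.lcmUpto * ∏ i ∈ (Finset.range n).filter (fun i : ℕ ↦ (i : ℤ) ≠ x), (y - i) ∧
      |f| ≤ N.lcmUpto * 8 ^ N := by
  by_cases hx0 : x ∈ Set.Ico (0 : ℤ) n
  · lift x to ℕ using hx0.1
    simp only [Ne, Nat.cast_inj, Finset.filter_ne']
    exact exists_mul_prod_erase_sub_eq (by exact_mod_cast hx0.2) hnN hy hyn hy0
  · have hne : ∀ i ∈ Finset.range n, (i : ℤ) ≠ x := by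
      rintro i hi rfl
      exact hx0 (by simpa using hi)
    rw [Finset.filter_true_of_mem hne]
    exact exists_mul_prod_range_sub_eq hx hxn hx0 hy hyn

/-- The interpolation node attached to a point of the grid `ℕ × ℕ`: column `e.2` is the block of
consecutive integers starting at `q * e.2`. -/
def gridNode (q : ℕ) (e : ℕ × ℕ) : ℕ := e.1 + q * e.2

theorem gridNode_injOn {q n : ℕ} (hnq : n ≤ q) (J : ℕ) :
    Set.InjOn (gridNode q) (Finset.range n ×ˢ Finset.range J : Finset (ℕ × ℕ)) := by
  rintro ⟨i, j⟩ he ⟨i', j'⟩ he' h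
  simp only [Finset.coe_product, Set.mem_prod, Finset.mem_coe, Finset.mem_range] at he he'
  have hmod := congrArg (· % q) h
  simp only [gridNode, Nat.add_mul_mod_self_left, Nat.mod_eq_of_lt (he.1.trans_le hnq),
    Nat.mod_eq_of_lt (he'.1.trans_le hnq)] at hmod
  subst hmod
  have hq : 0 < q := by omega
  simpa [gridNode, hq.ne'] using h

theorem gridNode_le {q n J : ℕ} (hnq : n < q) {e : ℕ × ℕ}
    (he : e ∈ Finset.range (n + 1) ×ˢ Finset.range J) : gridNode q e ≤ q * J := by
  simp only [Finset.mem_product, Finset.mem_range] at he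
  have := Nat.mul_le_mul_left q he.2
  rw [Nat.mul_succ] at this
  simp only [gridNode]
  omega

theorem prod_grid_erase {M : Type*} [CommMonoid M] {q n J : ℕ} (hnq : n ≤ q) {e : ℕ × ℕ}
    (he : e ∈ Finset.range n ×ˢ Finset.range J) (f : ℕ × ℕ → M) :
    ∏ a ∈ (Finset.range n ×ˢ Finset.range J).erase e, f a =
      ∏ j ∈ Finset.range J,
        ∏ i ∈ (Finset.range n).filter (fun i : ℕ ↦ (i : ℤ) ≠ gridNode q e - q * j), f (i, j) := by
  simp only [← Finset.filter_ne', Finset.prod_filter, Finset.prod_product_right]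
  refine Finset.prod_congr rfl fun j hj ↦ Finset.prod_congr rfl fun i hi ↦ ?_
  refine if_congr (not_congr ?_) rfl rfl
  rw [← (gridNode_injOn hnq J).eq_iff (Finset.mem_product.2 ⟨hi, hj⟩) he, eq_sub_iff_add_eq]
  norm_cast

theorem exists_mul_prod_grid_erase_eq {n q J j₀ : ℕ} (hnq : n < q) (hj₀ : j₀ < J) {e : ℕ × ℕ}
    (he : e ∈ Finset.range n ×ˢ Finset.range J) :
    ∃ c : ℤ, c * ∏ a ∈ (Finset.range n ×ˢ Finset.range J).erase e,
        ((gridNode q e : ℤ) - gridNode q a) =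
      (q * J).lcmUpto ^ J * ∏ a ∈ (Finset.range n ×ˢ Finset.range J).erase e,
        ((gridNode q (n, j₀) : ℤ) - gridNode q a) ∧
      |c| ≤ ((q * J).lcmUpto * 8 ^ (q * J)) ^ J := by
  have hblock : ∀ j ∈ Finset.range J, ∃ f : ℤ,
      f * ∏ i ∈ (Finset.range n).filter (fun i : ℕ ↦ (i : ℤ) ≠ gridNode q e - q * j),
        ((gridNode q e : ℤ) - gridNode q (i, j)) =
      (q * J).lcmUpto * ∏ i ∈ (Finset.range n).filter (fun i : ℕ ↦ (i : ℤ) ≠ gridNode q e - q * j),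
        ((gridNode q (n, j₀) : ℤ) - gridNode q (i, j)) ∧
      |f| ≤ (q * J).lcmUpto * 8 ^ (q * J) := by
    intro j hj
    have hjJ : q * j + q ≤ q * J := Nat.mul_le_mul_left q (Finset.mem_range.1 hj)
    have hnode : ∀ {i k : ℕ}, i ≤ n → k < J → gridNode q (i, k) ≤ q * J := fun hi hk ↦
      gridNode_le hnq (Finset.mem_product.2 ⟨Finset.mem_range.2 (by omega), Finset.mem_range.2 hk⟩)
    have hnot : (gridNode q (n, j₀) : ℤ) - q * j ∉ Set.Ico (0 : ℤ) n := by
      simp only [gridNode, Set.mem_Ico, not_and, not_lt]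
      intro h0
      rcases le_or_gt j j₀ with h | h
      · have := Nat.mul_le_mul_left q h
        push_cast; lia
      · have := Nat.mul_le_mul_left q h
        rw [Nat.mul_succ] at this
        push_cast at h0; lia
    have hn₀ := hnode le_rfl hj₀
    have he' := hnode (Finset.mem_range.1 (Finset.mem_product.1 he).1).le
      (Finset.mem_range.1 (Finset.mem_product.1 he).2)
    have hsub : ∀ (x : ℤ) (i : ℕ), x - gridNode q (i, j) = x - q * j - i := fun x i ↦ by
      simp only [gridNode]; push_cast; ring
    simp only [hsub]
    exact exists_mul_prod_filter_sub_eq (by lia) (by push_cast; lia) (by push_cast; lia)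
      (by push_cast; lia) (by push_cast; lia) hnot
  choose! f hf hfle using hblock
  refine ⟨∏ j ∈ Finset.range J, f j, ?_, ?_⟩
  · rw [prod_grid_erase hnq.le he, prod_grid_erase hnq.le he, ← Finset.prod_mul_distrib,
      Finset.prod_congr rfl hf, Finset.prod_mul_distrib]
    simp
  · rw [Finset.abs_prod]
    exact (Finset.prod_le_prod (fun _ _ ↦ abs_nonneg _) hfle).trans_eq (by simp)

theorem mul_eval_eq_sum_of_mul_prod_eq {F ι : Type*} [Field F] [DecidableEq ι] {s : Finset ι}
    {v : ι → F} (hv : Set.InjOn v s) {x M : F} {c : ι → F}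
    (hc : ∀ i ∈ s, c i * ∏ j ∈ s.erase i, (v i - v j) = M * ∏ j ∈ s.erase i, (x - v j))
    {p : F[X]} (hp : p.degree < s.card) :
    M * p.eval x = ∑ i ∈ s, c i * p.eval (v i) := by
  conv_lhs => rw [Lagrange.eq_interpolate hv hp]
  rw [Lagrange.interpolate_apply, eval_finsetSum, Finset.mul_sum]
  refine Finset.sum_congr rfl fun i hi ↦ ?_
  have hne : ∏ j ∈ s.erase i, (v i - v j) ≠ 0 := Finset.prod_ne_zero_iff.2 fun j hj ↦
    sub_ne_zero.2 fun h ↦ (Finset.mem_erase.1 hj).1 (hv (Finset.mem_erase.1 hj).2 hi h.symm)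
  rw [eval_mul, eval_C, Lagrange.basis, eval_prod]
  simp only [Lagrange.basisDivisor, eval_mul, eval_C, eval_sub, eval_X]
  rw [Finset.prod_mul_distrib, Finset.prod_inv_distrib, ← mul_right_inj' hne]
  field_simp
  linear_combination -(p.eval (v i)) * hc i hi

/-! ### Places and heights -/

theorem le_finprod_of_one_le {α : Type*} {f : α → ℝ} (hf : f.HasFiniteMulSupport)
    (h1 : ∀ a, 1 ≤ f a) (a : α) : f a ≤ ∏ᶠ b, f b := by
  rw [← mul_finprod_cond_ne a hf]
  exact le_mul_of_one_le_right (zero_le_one.trans (h1 a))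
    (one_le_finprod fun b ↦ one_le_finprod fun _ ↦ h1 b)

theorem le_multiset_prod_map_of_one_le {α : Type*} {s : Multiset α} {f : α → ℝ}
    (h1 : ∀ a, 1 ≤ f a) {a : α} (ha : a ∈ s) : f a ≤ (s.map f).prod := by
  obtain ⟨t, rfl⟩ := Multiset.exists_cons_of_mem ha
  rw [Multiset.map_cons, Multiset.prod_cons]
  exact le_mul_of_one_le_right (zero_le_one.trans (h1 a))
    (Multiset.one_le_prod_map fun b _ ↦ h1 b)

section Place
variable {K : Type*} [Field K] [AdmissibleAbsValues K]

/-- `IsPlace v` says that `v` is one of the absolute values, archimedean or not, out of which the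
heights on `K` are built. -/
def IsPlace (v : AbsoluteValue K ℝ) : Prop :=
  v ∈ archAbsVal (K := K) ∨ v ∈ nonarchAbsVal (K := K)

theorem IsPlace.apply_le_mulHeight₁ {v : AbsoluteValue K ℝ} (hv : IsPlace v) (x : K) :
    v x ≤ mulHeight₁ x := by
  have harch : 1 ≤ (archAbsVal.map fun w : AbsoluteValue K ℝ ↦ max (w x) 1).prod :=
    Multiset.one_le_prod_map fun _ _ ↦ le_max_right ..
  have hnonarch : 1 ≤ ∏ᶠ w : nonarchAbsVal (K := K), max (w.val x) 1 :=
    one_le_finprod fun _ ↦ le_max_right ..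
  rw [mulHeight₁_eq]
  refine (le_max_left (v x) 1).trans ?_
  rcases hv with hv | hv
  · exact (le_multiset_prod_map_of_one_le (f := fun w : AbsoluteValue K ℝ ↦ max (w x) 1)
      (fun _ ↦ le_max_right ..) hv).trans
      (le_mul_of_one_le_right (zero_le_one.trans harch) hnonarch)
  · exact (le_finprod_of_one_le (f := fun w : nonarchAbsVal (K := K) ↦ max (w.val x) 1)
      (by fun_prop) (fun _ ↦ le_max_right ..) ⟨v, hv⟩).trans
      (le_mul_of_one_le_left (zero_le_one.trans hnonarch) harch)

theorem IsPlace.neg_logHeight₁_le_log {v : AbsoluteValue K ℝ} (hv : IsPlace v) {x : K}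
    (hx : x ≠ 0) : -logHeight₁ x ≤ Real.log (v x) := by
  have h := hv.apply_le_mulHeight₁ x⁻¹
  rw [mulHeight₁_inv, map_inv₀] at h
  have h0 : 0 < v x := v.pos hx
  rw [logHeight₁_eq_log_mulHeight₁, neg_le, ← Real.log_inv]
  exact Real.log_le_log (inv_pos.2 h0) h

theorem mulHeight₁_le_of_forall_apply_le {ι : Type*} [Fintype ι] {x : K} {u : ι → K} {a : ι → ℕ}
    {C : ℝ} (hC : 1 ≤ C)
    (harch : ∀ v ∈ archAbsVal (K := K), v x ≤ C * ∏ i, max (v (u i)) 1 ^ a i)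
    (hnonarch : ∀ v ∈ nonarchAbsVal (K := K), v x ≤ ∏ i, max (v (u i)) 1 ^ a i) :
    mulHeight₁ x ≤ C ^ totalWeight K * ∏ i, mulHeight₁ (u i) ^ a i := by
  have hone (v : AbsoluteValue K ℝ) : 1 ≤ ∏ i, max (v (u i)) 1 ^ a i :=
    Finset.one_le_prod fun i _ ↦ one_le_pow₀ (le_max_right ..)
  have hsplit : C ^ totalWeight K * ∏ i, mulHeight₁ (u i) ^ a i =
      (archAbsVal.map fun v : AbsoluteValue K ℝ ↦ C * ∏ i, max (v (u i)) 1 ^ a i).prod *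
        ∏ᶠ v : nonarchAbsVal (K := K), ∏ i, max (v.val (u i)) 1 ^ a i := by
    rw [finprod_prod_comm _ _ (by fun_prop), Multiset.prod_map_mul, Multiset.map_const',
      Multiset.prod_replicate, Multiset.prod_map_prod]
    simp only [mulHeight₁_eq, totalWeight, mul_pow, Finset.prod_mul_distrib, mul_assoc,
      Multiset.prod_map_pow]
    simp only [finprod_pow (f := fun v : nonarchAbsVal (K := K) ↦ max (v.val (u _)) 1)
      (by fun_prop)]
  rw [hsplit, mulHeight₁_eq]
  gcongr
  · exact finprod_nonneg fun _ ↦ by positivity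
  · exact Multiset.prod_map_nonneg fun v _ ↦ zero_le_one.trans
      (one_le_mul_of_one_le_of_one_le hC (hone v))
  · exact Multiset.prod_map_le_prod_map₀ _ _ (fun _ _ ↦ by positivity) fun v hv ↦
      max_le (harch v hv) (one_le_mul_of_one_le_of_one_le hC (hone v))
  · exact finprod_le_finprod (by fun_prop) (fun _ ↦ by positivity) (by fun_prop)
      fun v ↦ max_le (hnonarch v v.2) (hone v)

end Place

section IntegerCombination
variable {K κ : Type*} [Field K] {s : Finset κ} {c : κ → ℤ} {b : κ → K}

theorem apply_intCast_le_abs (v : AbsoluteValue K ℝ) (m : ℤ) :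
    v (m : K) ≤ |(m : ℝ)| := by
  obtain ⟨a, rfl | rfl⟩ := Int.eq_nat_or_neg m <;> simpa using v.apply_nat_le_self a

theorem apply_sum_intCast_mul_le {v : AbsoluteValue K ℝ} {B Y : ℝ} (hB : 0 ≤ B)
    (hc : ∀ e ∈ s, |(c e : ℝ)| ≤ B) (hb : ∀ e ∈ s, v (b e) ≤ Y) :
    v (∑ e ∈ s, c e * b e) ≤ s.card * B * Y := by
  rw [mul_assoc, ← nsmul_eq_mul]
  refine (v.sum_le s _).trans (Finset.sum_le_card_nsmul _ _ _ fun e he ↦ ?_)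
  rw [map_mul]
  exact mul_le_mul ((apply_intCast_le_abs v _).trans (hc e he)) (hb e he)
    (v.nonneg _) hB

theorem apply_sum_intCast_mul_le_of_isNonarchimedean {v : AbsoluteValue K ℝ}
    (hv : IsNonarchimedean v) {Y : ℝ} (hY : 0 ≤ Y) (hb : ∀ e ∈ s, v (b e) ≤ Y) :
    v (∑ e ∈ s, c e * b e) ≤ Y := by
  rcases s.eq_empty_or_nonempty with rfl | hs
  · simpa using hY
  refine (hv.apply_sum_le_sup hs).trans (Finset.sup'_le _ _ fun e he ↦ ?_)
  rw [map_mul]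
  exact (mul_le_of_le_one_left (v.nonneg _) hv.apply_intCast_le_one).trans (hb e he)

theorem mulHeight₁_sum_intCast_mul_prod_pow_le [AdmissibleAbsValues K] {ι : Type*} [Fintype ι]
    {u : ι → K} {a : ι → ℕ} {α : κ → ι → ℕ} {B : ℝ} (hB : 1 ≤ s.card * B)
    (hc : ∀ e ∈ s, |(c e : ℝ)| ≤ B) (hα : ∀ e ∈ s, α e ≤ a) :
    mulHeight₁ (∑ e ∈ s, c e * ∏ i, u i ^ α e i) ≤
      (s.card * B) ^ totalWeight K * ∏ i, mulHeight₁ (u i) ^ a i := by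
  have hB0 : 0 ≤ B := by
    by_contra! h
    exact absurd hB (not_le.2 ((mul_nonpos_of_nonneg_of_nonpos (by positivity) h.le).trans_lt
      one_pos))
  have hterm (v : AbsoluteValue K ℝ) :
      ∀ e ∈ s, v (∏ i, u i ^ α e i) ≤ ∏ i, max (v (u i)) 1 ^ a i := fun e he ↦ by
    simp only [map_prod, map_pow]
    refine Finset.prod_le_prod (fun _ _ ↦ by positivity) fun i _ ↦ ?_
    calc v (u i) ^ α e i ≤ max (v (u i)) 1 ^ α e i := by gcongr; exact le_max_left ..
      _ ≤ max (v (u i)) 1 ^ a i := pow_le_pow_right₀ (le_max_right ..) (hα e he i)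
  exact mulHeight₁_le_of_forall_apply_le hB
    (fun v _ ↦ apply_sum_intCast_mul_le hB0 hc (hterm v))
    fun v hv ↦ apply_sum_intCast_mul_le_of_isNonarchimedean (isNonarchimedean v hv)
      (by positivity) (hterm v)

end IntegerCombination

/-! ### Interpolation relations on the grid -/

section GridRelation
variable {K : Type*} [Field K]

theorem eq_zero_of_taylor_one_eq_smul {p : K[X]} {ξ : K} (hξ : ξ ≠ 1)
    (h : taylor 1 p = ξ • p) : p = 0 := by
  have hlc := congrArg leadingCoeff h
  rw [leadingCoeff_taylor, smul_eq_C_mul, leadingCoeff_mul, leadingCoeff_C] at hlc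
  have hmul : (1 - ξ) * p.leadingCoeff = 0 := by linear_combination hlc
  rw [← leadingCoeff_eq_zero]
  exact (mul_eq_zero.1 hmul).resolve_left (sub_ne_zero.2 hξ.symm)

variable [CharZero K] {n q J : ℕ}

theorem gridNode_cast_injOn (hnq : n ≤ q) (J : ℕ) :
    Set.InjOn (fun e ↦ (gridNode q e : K)) (Finset.range n ×ˢ Finset.range J : Finset (ℕ × ℕ)) :=
  fun _ ha _ hb h ↦ gridNode_injOn hnq J ha hb (Nat.cast_injective h)

/-- An interpolant `p` agreeing with `ξ ^ x * y ^ j` on the `(n + 1) × J` grid would satisfy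
`p (x + 1) = ξ * p x` on the `n × J` grid, hence identically. -/
theorem exists_eval_gridNode_ne (hnq : n ≤ q) (hJ : 0 < J) {ξ : K} (hξ : ξ ≠ 1) (y : K) {p : K[X]}
    (hp : p.degree < (n * J : ℕ)) :
    ∃ e ∈ Finset.range (n + 1) ×ˢ Finset.range J,
      p.eval (gridNode q e : K) ≠ ξ ^ gridNode q e * y ^ e.2 := by
  by_contra! hall
  have hshift : taylor 1 p = ξ • p := by
    refine eq_of_degree_sub_lt_of_eval_index_eq _ (gridNode_cast_injOn hnq J) ?_ fun e he ↦ ?_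
    · rw [Finset.card_product, Finset.card_range, Finset.card_range]
      refine (degree_sub_le _ _).trans_lt (max_lt (by rwa [degree_taylor]) ?_)
      exact (degree_smul_le ξ p).trans_lt hp
    · simp only [Finset.mem_product, Finset.mem_range] at he
      have h0 := hall e (by simpa using ⟨he.1.le, he.2⟩)
      have h1 := hall (e.1 + 1, e.2) (by simpa using he)
      have hnode : gridNode q (e.1 + 1, e.2) = gridNode q e + 1 := by simp only [gridNode]; ring
      rw [hnode, Nat.cast_succ] at h1
      rw [taylor_eval, h1, eval_smul, h0, smul_eq_mul]
      ring
  have h0 := hall (0, 0) (by simpa using hJ)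
  simp [eq_zero_of_taylor_one_eq_smul hξ hshift, gridNode] at h0

variable (K n q J) in
/-- `IsGridRelation K n q J c` says that `c` is an integral linear relation, with controlled
coefficients, between the values on the `(n + 1) × J` grid of all polynomials over `K` of degree
less than `n * J`. -/
structure IsGridRelation (c : ℕ × ℕ → ℤ) : Prop where
  abs_le : ∀ e ∈ Finset.range (n + 1) ×ˢ Finset.range J,
    |c e| ≤ ((q * J).lcmUpto * 8 ^ (q * J)) ^ J
  sum_eval_eq_zero : ∀ p : K[X], p.degree < (n * J : ℕ) →
    ∑ e ∈ Finset.range (n + 1) ×ˢ Finset.range J, c e * p.eval (gridNode q e : K) = 0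

theorem sum_range_succ_product {M : Type*} [AddCommMonoid M] (n J : ℕ) (f : ℕ × ℕ → M) :
    ∑ e ∈ Finset.range (n + 1) ×ˢ Finset.range J, f e =
      ∑ e ∈ Finset.range n ×ˢ Finset.range J, f e + ∑ j ∈ Finset.range J, f (n, j) := by
  simp only [Finset.sum_product_right, Finset.sum_range_succ, Finset.sum_add_distrib]

theorem exists_isGridRelation (hnq : n < q) {j₀ : ℕ} (hj₀ : j₀ < J) :
    ∃ c, IsGridRelation K n q J c ∧ c (n, j₀) ≠ 0 ∧ ∀ j ≠ j₀, c (n, j) = 0 := by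
  set L : ℤ := ((q * J).lcmUpto : ℤ)
  have hL1 : 1 ≤ L := Nat.one_le_cast.2 (q * J).lcmUpto_pos
  choose! f hf hfle using fun e ↦ exists_mul_prod_grid_erase_eq (e := e) hnq hj₀
  refine ⟨fun e ↦ if e.1 < n then f e else if e.2 = j₀ then -L ^ J else 0, ⟨fun e he ↦ ?_,
    fun p hp ↦ ?_⟩, by simpa using (by positivity : L ^ J ≠ 0), fun j hj ↦ by simp [hj]⟩
  · have hLpow : L ^ J ≤ (L * 8 ^ (q * J)) ^ J := by
      gcongr; exact le_mul_of_one_le_right (by positivity) (one_le_pow₀ (by norm_num))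
    simp only [Finset.mem_product, Finset.mem_range] at he
    split_ifs with h1 h2
    · exact hfle e (by simpa using ⟨h1, he.2⟩)
    · rwa [abs_neg, abs_of_nonneg (by positivity)]
    · rw [abs_zero]; positivity
  · have hinterp := mul_eval_eq_sum_of_mul_prod_eq (gridNode_cast_injOn (K := K) hnq.le J)
      (x := (gridNode q (n, j₀) : K)) (M := L ^ J) (c := fun e ↦ (f e : K))
      (fun e he ↦ by exact_mod_cast congrArg (Int.cast : ℤ → K) (hf e he))
      (p := p) (by simpa using hp)
    rw [sum_range_succ_product]
    simp only [lt_irrefl, if_false]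
    rw [Finset.sum_congr rfl fun e he ↦ by
        rw [if_pos (Finset.mem_range.1 (Finset.mem_product.1 he).1)], ← hinterp,
      Finset.sum_eq_single_of_mem j₀ (Finset.mem_range.2 hj₀) fun j _ hj ↦ by simp [hj]]
    simp

theorem exists_isGridRelation_sum_ne_zero (hnq : n < q) (hJ : 0 < J) {ξ : K} (hξ : ξ ≠ 1) (y : K) :
    ∃ c, IsGridRelation K n q J c ∧ ∑ e ∈ Finset.range (n + 1) ×ˢ Finset.range J,
      c e * (ξ ^ gridNode q e * y ^ e.2) ≠ 0 := by
  by_contra! h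
  have hinj := gridNode_cast_injOn (K := K) hnq.le J
  obtain ⟨p, hp, hgrid⟩ : ∃ p : K[X], p.degree < (n * J : ℕ) ∧
      ∀ e ∈ Finset.range n ×ˢ Finset.range J,
        p.eval (gridNode q e : K) = ξ ^ gridNode q e * y ^ e.2 :=
    ⟨Lagrange.interpolate _ _ _, (Lagrange.degree_interpolate_lt _ hinj).trans_eq (by simp),
      fun e he ↦ Lagrange.eval_interpolate_at_node (fun e ↦ ξ ^ gridNode q e * y ^ e.2) hinj he⟩
  obtain ⟨⟨i, j⟩, he, hne⟩ := exists_eval_gridNode_ne hnq.le hJ hξ y hp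
  simp only [Finset.mem_product, Finset.mem_range, Nat.lt_succ_iff] at he
  obtain hi | rfl := he.1.lt_or_eq
  · exact hne (hgrid _ (by simpa using ⟨hi, he.2⟩))
  obtain ⟨c, hc, hc0, hcj⟩ := exists_isGridRelation (K := K) hnq he.2
  have hrow : ∀ g : ℕ × ℕ → K, ∑ k ∈ Finset.range J, c (i, k) * g (i, k) = c (i, j) * g (i, j) :=
    fun g ↦ Finset.sum_eq_single_of_mem j (Finset.mem_range.2 he.2) fun k _ hk ↦ by simp [hcj k hk]
  have hp0 := hc.sum_eval_eq_zero p hp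
  have h0 := h c hc
  rw [sum_range_succ_product, hrow fun e ↦ p.eval (gridNode q e : K),
    Finset.sum_congr rfl fun e he ↦ by rw [hgrid e he]] at hp0
  rw [sum_range_succ_product, hrow fun e ↦ ξ ^ gridNode q e * y ^ e.2] at h0
  exact hne (mul_left_cancel₀ (Int.cast_ne_zero.2 hc0) (add_left_cancel (hp0.trans h0.symm)))

end GridRelation

/-! ### A Thue-type gap principle -/

section TruncatedBinomial
variable {K : Type*} [Field K]

theorem one_add_pow_eq_sum_range {R : Type*} [CommSemiring R] (z : R) {x m : ℕ} (h : x < m) :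
    (1 + z) ^ x = ∑ a ∈ Finset.range m, z ^ a * x.choose a := by
  rw [add_comm, add_pow]
  simp only [one_pow, mul_one]
  refine Finset.sum_subset (Finset.range_subset_range.2 h) fun a _ ha ↦ ?_
  rw [Nat.choose_eq_zero_of_lt (by simpa [Nat.lt_succ_iff] using ha), Nat.cast_zero, mul_zero]

theorem apply_le_two_of_apply_sub_one_le {v : AbsoluteValue K ℝ} {z : K} {ε : ℝ} (hε : ε ≤ 1)
    (hz : v (z - 1) ≤ ε) : v z ≤ 2 := by
  have := v.add_le (z - 1) 1
  rw [sub_add_cancel, map_one] at this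
  linarith

theorem apply_pow_sub_one_le {v : AbsoluteValue K ℝ} {z : K} {ε : ℝ} (hε : ε ≤ 1)
    (hz : v (z - 1) ≤ ε) (j : ℕ) : v (z ^ j - 1) ≤ (2 ^ j - 1) * ε := by
  induction j with
  | zero => simp
  | succ j ih =>
    calc v (z ^ (j + 1) - 1) = v (z * (z ^ j - 1) + (z - 1)) := by ring_nf
      _ ≤ v z * v (z ^ j - 1) + v (z - 1) := (v.add_le _ _).trans_eq (by rw [map_mul])
      _ ≤ 2 * ((2 ^ j - 1) * ε) + ε := by
        gcongr; exact apply_le_two_of_apply_sub_one_le hε hz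
      _ = (2 ^ (j + 1) - 1) * ε := by ring

theorem apply_pow_sub_sum_range_le {v : AbsoluteValue K ℝ} {z : K} {ε : ℝ} (hε : ε ≤ 1)
    (hz : v (z - 1) ≤ ε) (x D : ℕ) :
    v (z ^ x - ∑ a ∈ Finset.range D, (z - 1) ^ a * x.choose a) ≤ 2 ^ x * ε ^ D := by
  have hε0 : 0 ≤ ε := (v.nonneg _).trans hz
  have htwo := one_add_pow_eq_sum_range (1 : ℝ) (by omega : x < D + (x + 1))
  have hexp := one_add_pow_eq_sum_range (z - 1) (by omega : x < D + (x + 1))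
  rw [Finset.sum_range_add] at htwo hexp
  rw [add_sub_cancel] at hexp
  simp only [one_pow, one_mul] at htwo
  rw [hexp, add_sub_cancel_left]
  calc v (∑ a ∈ Finset.range (x + 1), (z - 1) ^ (D + a) * x.choose (D + a))
      ≤ ∑ a ∈ Finset.range (x + 1), ε ^ D * x.choose (D + a) := by
        refine (v.sum_le _ _).trans (Finset.sum_le_sum fun a _ ↦ ?_)
        rw [map_mul, map_pow]
        gcongr
        · calc v (z - 1) ^ (D + a) ≤ ε ^ (D + a) := by gcongr
            _ ≤ ε ^ D := pow_le_pow_of_le_one hε0 hε (by omega)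
        · exact v.apply_nat_le_self _
    _ = (∑ a ∈ Finset.range (x + 1), (x.choose (D + a) : ℝ)) * ε ^ D := by
        rw [← Finset.mul_sum, mul_comm]
    _ ≤ 2 ^ x * ε ^ D := by
        gcongr
        rw [← one_add_one_eq_two, htwo]
        exact le_add_of_nonneg_left (Finset.sum_nonneg fun _ _ ↦ by positivity)

theorem exists_degree_lt_eval_natCast_eq [CharZero K] (z : K) (D : ℕ) :
    ∃ p : K[X], p.degree < (D : ℕ) ∧
      ∀ x : ℕ, p.eval (x : K) = ∑ a ∈ Finset.range D, z ^ a * x.choose a := by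
  refine ⟨∑ a ∈ Finset.range D, C (z ^ a / a.factorial) * descPochhammer K a, ?_, fun x ↦ ?_⟩
  · refine (degree_sum_le _ _).trans_lt ((Finset.sup_lt_iff (WithBot.bot_lt_coe _)).2 fun a ha ↦ ?_)
    refine (degree_le_of_natDegree_le ((natDegree_C_mul_le _ _).trans
      (descPochhammer_natDegree K a).le)).trans_lt ?_
    exact_mod_cast Finset.mem_range.1 ha
  · rw [eval_finsetSum]
    refine Finset.sum_congr rfl fun a _ ↦ ?_
    rw [eval_mul, eval_C, Nat.cast_choose_eq_descPochhammer_div]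
    ring

theorem exists_degree_lt_apply_sub_eval_le [CharZero K] {v : AbsoluteValue K ℝ} {ξ y : K}
    {ε₁ ε₂ : ℝ} (hε₁ : ε₁ ≤ 1) (hε₂ : ε₂ ≤ 1) (hξ : v (ξ - 1) ≤ ε₁) (hy : v (y - 1) ≤ ε₂)
    (D N J : ℕ) :
    ∃ p : K[X], p.degree < (D : ℕ) ∧ ∀ x ≤ N, ∀ j ≤ J,
      v (ξ ^ x * y ^ j - p.eval (x : K)) ≤ 2 ^ (N + J) * (ε₁ ^ D + ε₂) := by
  have hε₁0 : 0 ≤ ε₁ := (v.nonneg _).trans hξ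
  have hε₂0 : 0 ≤ ε₂ := (v.nonneg _).trans hy
  obtain ⟨p, hp, hpx⟩ := exists_degree_lt_eval_natCast_eq (ξ - 1) D
  refine ⟨p, hp, fun x hx j hj ↦ ?_⟩
  have htrunc : v (ξ ^ x - p.eval (x : K)) ≤ 2 ^ x * ε₁ ^ D := by
    rw [hpx]; exact apply_pow_sub_sum_range_le hε₁ hξ x D
  have hxN : (2 : ℝ) ^ x ≤ 2 ^ N := by gcongr; norm_num
  have hjJ : (2 : ℝ) ^ j ≤ 2 ^ J := by gcongr; norm_num
  calc v (ξ ^ x * y ^ j - p.eval (x : K))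
      = v ((ξ ^ x - p.eval (x : K)) + ξ ^ x * (y ^ j - 1)) := by ring_nf
    _ ≤ v (ξ ^ x - p.eval (x : K)) + v ξ ^ x * v (y ^ j - 1) :=
        (v.add_le _ _).trans_eq (by rw [map_mul, map_pow])
    _ ≤ 2 ^ x * ε₁ ^ D + 2 ^ x * ((2 ^ j - 1) * ε₂) := by
        gcongr
        · exact apply_le_two_of_apply_sub_one_le hε₁ hξ
        · exact apply_pow_sub_one_le hε₂ hy j
    _ ≤ 2 ^ N * 2 ^ J * ε₁ ^ D + 2 ^ N * (2 ^ J * ε₂) := by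
        have hxNJ : (2 : ℝ) ^ x ≤ 2 ^ N * 2 ^ J :=
          hxN.trans (le_mul_of_one_le_right (by positivity) (one_le_pow₀ one_le_two))
        have hj₁ : 0 ≤ (2 : ℝ) ^ j - 1 := sub_nonneg.2 (one_le_pow₀ one_le_two)
        have hj₂ : (2 : ℝ) ^ j - 1 ≤ 2 ^ J := by linarith
        gcongr
    _ = 2 ^ (N + J) * (ε₁ ^ D + ε₂) := by rw [pow_add]; ring

end TruncatedBinomial

theorem lcmUpto_mul_eight_pow_pow_le_exp (q J : ℕ) :
    (((q * J).lcmUpto : ℝ) * 8 ^ (q * J)) ^ J ≤ Real.exp (8 * (q * J ^ 2)) := by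
  have hψ := Chebyshev.psi_le_const_mul_self (x := ((q * J : ℕ) : ℝ)) (by positivity)
  rw [Chebyshev.psi_eq_log_lcmUpto, show (4 : ℝ) = 2 ^ 2 by norm_num, Real.log_pow] at hψ
  have hpos : (0 : ℝ) < (q * J).lcmUpto := by exact_mod_cast (q * J).lcmUpto_pos
  have hlog8 : Real.log 8 = 3 * Real.log 2 := by
    rw [show (8 : ℝ) = 2 ^ 3 by norm_num, Real.log_pow]; norm_num
  have hbase : Real.log ((q * J).lcmUpto * 8 ^ (q * J)) ≤ 8 * (q * J) := by
    rw [Real.log_mul hpos.ne' (by positivity), Real.log_pow, hlog8]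
    push_cast at hψ ⊢
    nlinarith [Real.log_two_lt_d9, (by positivity : (0 : ℝ) ≤ q * J)]
  rw [← Real.log_le_iff_le_exp (by positivity), Real.log_pow]
  calc (J : ℝ) * Real.log ((q * J).lcmUpto * 8 ^ (q * J)) ≤ J * (8 * (q * J)) := by gcongr
    _ = 8 * (q * J ^ 2) := by ring

section GridRelationBounds
variable {K : Type*} [Field K] {n q J : ℕ}

theorem card_grid_mul_exp_le (hnq : n < q) :
    ((Finset.range (n + 1) ×ˢ Finset.range J).card : ℝ) * Real.exp (8 * (q * J ^ 2)) ≤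
      Real.exp (9 * (q * J ^ 2)) := by
  have hcard : (n + 1) * J ≤ q * J ^ 2 := Nat.mul_le_mul hnq (Nat.le_self_pow two_ne_zero J)
  calc ((Finset.range (n + 1) ×ˢ Finset.range J).card : ℝ) * Real.exp (8 * (q * J ^ 2))
      ≤ Real.exp (q * J ^ 2) * Real.exp (8 * (q * J ^ 2)) := by
        gcongr
        rw [Finset.card_product, Finset.card_range, Finset.card_range]
        exact (by exact_mod_cast hcard : (((n + 1) * J : ℕ) : ℝ) ≤ q * J ^ 2).trans
          ((le_add_of_nonneg_right zero_le_one).trans (Real.add_one_le_exp _))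
    _ = Real.exp (9 * (q * J ^ 2)) := by rw [← Real.exp_add]; ring_nf

theorem two_pow_le_exp_two_mul (hq : 0 < q) :
    (2 : ℝ) ^ (q * J + J) ≤ Real.exp (2 * (q * J ^ 2)) := by
  have hle : q * J + J ≤ 2 * (q * J ^ 2) := by
    have h1 : q * J ≤ q * J ^ 2 := Nat.mul_le_mul_left _ (Nat.le_self_pow two_ne_zero J)
    have h2 : J ≤ q * J := Nat.le_mul_of_pos_left _ hq
    omega
  calc (2 : ℝ) ^ (q * J + J) ≤ Real.exp 1 ^ (q * J + J) := by
        gcongr; linarith [Real.add_one_le_exp (1 : ℝ)]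
    _ = Real.exp ((q * J + J : ℕ) : ℝ) := by rw [← Real.exp_nat_mul, mul_one]
    _ ≤ Real.exp (2 * (q * J ^ 2)) := Real.exp_le_exp.2 (by exact_mod_cast hle)

variable {c : ℕ × ℕ → ℤ}

theorem IsGridRelation.abs_cast_le_exp (hc : IsGridRelation K n q J c) {e : ℕ × ℕ}
    (he : e ∈ Finset.range (n + 1) ×ˢ Finset.range J) :
    |(c e : ℝ)| ≤ Real.exp (8 * (q * J ^ 2)) :=
  le_trans (by exact_mod_cast hc.abs_le e he) (lcmUpto_mul_eight_pow_pow_le_exp q J)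

theorem IsGridRelation.apply_sum_le [CharZero K] (hc : IsGridRelation K n q J c) (hnq : n < q)
    {v : AbsoluteValue K ℝ} {ξ y : K} {ε₁ ε₂ : ℝ} (hε₁ : ε₁ ≤ 1) (hε₂ : ε₂ ≤ 1)
    (hξ : v (ξ - 1) ≤ ε₁) (hy : v (y - 1) ≤ ε₂) :
    v (∑ e ∈ Finset.range (n + 1) ×ˢ Finset.range J, c e * (ξ ^ gridNode q e * y ^ e.2)) ≤
      Real.exp (11 * (q * J ^ 2)) * (ε₁ ^ (n * J) + ε₂) := by
  have hε₁0 : 0 ≤ ε₁ := (v.nonneg _).trans hξ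
  have hε₂0 : 0 ≤ ε₂ := (v.nonneg _).trans hy
  obtain ⟨p, hp, hpx⟩ := exists_degree_lt_apply_sub_eval_le hε₁ hε₂ hξ hy (n * J) (q * J) J
  calc v (∑ e ∈ Finset.range (n + 1) ×ˢ Finset.range J, c e * (ξ ^ gridNode q e * y ^ e.2))
      = v (∑ e ∈ Finset.range (n + 1) ×ˢ Finset.range J,
          c e * (ξ ^ gridNode q e * y ^ e.2 - p.eval (gridNode q e : K))) := by
        simp only [mul_sub, Finset.sum_sub_distrib, hc.sum_eval_eq_zero p hp, sub_zero]
    _ ≤ (Finset.range (n + 1) ×ˢ Finset.range J).card * Real.exp (8 * (q * J ^ 2)) *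
          (2 ^ (q * J + J) * (ε₁ ^ (n * J) + ε₂)) :=
        apply_sum_intCast_mul_le (by positivity) (fun e he ↦ hc.abs_cast_le_exp he) fun e he ↦
          hpx _ (gridNode_le hnq he) _ (Finset.mem_range.1 (Finset.mem_product.1 he).2).le
    _ ≤ Real.exp (9 * (q * J ^ 2)) * (Real.exp (2 * (q * J ^ 2)) * (ε₁ ^ (n * J) + ε₂)) := by
        gcongr
        · exact card_grid_mul_exp_le hnq
        · exact two_pow_le_exp_two_mul (by omega)
    _ = Real.exp (11 * (q * J ^ 2)) * (ε₁ ^ (n * J) + ε₂) := by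
        rw [← mul_assoc, ← Real.exp_add]; ring_nf

theorem pow_gridNode_mul_pow_eq {lam g₁ g₂ : K} (hlam : lam ≠ 0) {k₁ k₂ r : ℕ}
    (hk : k₁ * q = k₂ + r) (e : ℕ × ℕ) :
    (lam ^ k₁ / g₁) ^ gridNode q e * (g₂ / lam ^ k₂) ^ e.2 =
      ∏ i, ![lam, g₁⁻¹, g₂] i ^ ![k₁ * e.1 + r * e.2, gridNode q e, e.2] i := by
  have hexp : k₁ * gridNode q e = k₁ * e.1 + r * e.2 + k₂ * e.2 := by
    rw [gridNode, mul_add, ← mul_assoc, hk]; ring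
  simp only [Fin.prod_univ_three, Matrix.cons_val]
  rw [div_pow, div_pow, ← pow_mul, ← pow_mul, inv_pow, hexp, pow_add _ _ (k₂ * e.2)]
  field_simp

theorem IsGridRelation.logHeight₁_sum_le [AdmissibleAbsValues K] (hc : IsGridRelation K n q J c)
    (hnq : n < q) (hJ : 0 < J) {lam : K} (hlam : lam ≠ 0) (g₁ g₂ : K) {k₁ k₂ r : ℕ}
    (hk : k₁ * q = k₂ + r) (hr : r ≤ k₁) :
    logHeight₁ (∑ e ∈ Finset.range (n + 1) ×ˢ Finset.range J,
        c e * ((lam ^ k₁ / g₁) ^ gridNode q e * (g₂ / lam ^ k₂) ^ e.2)) ≤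
      totalWeight K * (9 * (q * J ^ 2)) + k₁ * (n + J) * logHeight₁ lam +
        q * J * logHeight₁ g₁ + J * logHeight₁ g₂ := by
  have hexponent : ∀ e ∈ Finset.range (n + 1) ×ˢ Finset.range J,
      ![k₁ * e.1 + r * e.2, gridNode q e, e.2] ≤ ![k₁ * (n + J), q * J, J] := fun e he ↦ by
    have hnode := gridNode_le hnq he
    simp only [Finset.mem_product, Finset.mem_range, Nat.lt_succ_iff] at he
    have hlam_exp : k₁ * e.1 + r * e.2 ≤ k₁ * (n + J) := by
      rw [mul_add]; exact add_le_add (by gcongr; exact he.1) (Nat.mul_le_mul hr he.2.le)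
    intro i
    fin_cases i
    exacts [hlam_exp, hnode, he.2.le]
  have hcard : (1 : ℝ) ≤ (Finset.range (n + 1) ×ˢ Finset.range J).card *
      Real.exp (8 * (q * J ^ 2)) := by
    refine one_le_mul_of_one_le_of_one_le ?_ (Real.one_le_exp (by positivity))
    rw [Finset.card_product, Finset.card_range, Finset.card_range]
    exact_mod_cast Nat.mul_pos n.succ_pos hJ
  have hH := (mulHeight₁_sum_intCast_mul_prod_pow_le (u := ![lam, g₁⁻¹, g₂]) hcard
    (fun e he ↦ hc.abs_cast_le_exp he) hexponent).trans (mul_le_mul_of_nonneg_right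
      (pow_le_pow_left₀ (zero_le_one.trans hcard) (card_grid_mul_exp_le hnq) _) (by positivity))
  simp only [← pow_gridNode_mul_pow_eq hlam hk] at hH
  simp only [Fin.prod_univ_three, Matrix.cons_val, mulHeight₁_inv] at hH
  have hlog := Real.log_le_log (mulHeight₁_pos _) hH
  rw [Real.log_mul (by positivity) (by positivity), Real.log_mul (by positivity) (by positivity),
    Real.log_mul (by positivity) (by positivity), Real.log_pow, Real.log_pow, Real.log_pow,
    Real.log_pow, Real.log_exp] at hlog
  simp only [logHeight₁_eq_log_mulHeight₁]
  push_cast at hlog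
  linarith

end GridRelationBounds

section GapPrinciple
variable {K : Type*} [Field K]

theorem apply_inv_sub_one_le {v : AbsoluteValue K ℝ} {u : K} {ε : ℝ} (hε : ε ≤ 1 / 2)
    (h : v (u - 1) ≤ ε) : v (u⁻¹ - 1) ≤ 2 * ε := by
  have hhalf : 1 / 2 ≤ v u := by
    have := v.add_le u (1 - u)
    rw [add_sub_cancel, map_one, v.map_sub] at this
    linarith
  have hu : u ≠ 0 := by
    rintro rfl
    norm_num [map_zero] at hhalf
  calc v (u⁻¹ - 1) = v (u - 1) * (v u)⁻¹ := by
        rw [← map_inv₀, ← map_mul, sub_mul, mul_inv_cancel₀ hu, one_mul, v.map_sub]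
    _ ≤ ε * 2 := by
        have hinv : (v u)⁻¹ ≤ 2 := by
          rw [inv_le_comm₀ (by linarith) two_pos]; linarith
        have := (v.nonneg _).trans h
        gcongr
    _ = 2 * ε := mul_comm _ _

variable [CharZero K] [AdmissibleAbsValues K]

theorem IsPlace.zero_le_logHeight₁_add_log {v : AbsoluteValue K ℝ} (hv : IsPlace v)
    {lam g₁ g₂ : K} (hlam : lam ≠ 0) (hg₁ : g₁ ≠ 0) {k₁ k₂ q r n J : ℕ} (hnq : n < q) (hJ : 0 < J)
    (hk : k₁ * q = k₂ + r) (hr : r ≤ k₁) (hne : lam ^ k₁ ≠ g₁) {ε₁ ε₂ : ℝ} (hε₁ : ε₁ ≤ 1)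
    (hε₂ : ε₂ ≤ 1) (h₁ : v (lam ^ k₁ / g₁ - 1) ≤ ε₁) (h₂ : v (g₂ / lam ^ k₂ - 1) ≤ ε₂) :
    0 ≤ (9 * totalWeight K + 11) * (q * J ^ 2) + k₁ * (n + J) * logHeight₁ lam +
      q * J * logHeight₁ g₁ + J * logHeight₁ g₂ + Real.log (ε₁ ^ (n * J) + ε₂) := by
  obtain ⟨c, hc, hΦ⟩ := exists_isGridRelation_sum_ne_zero hnq hJ
    (by rwa [Ne, div_eq_one_iff_eq hg₁]) (g₂ / lam ^ k₂)
  have hlower := hv.neg_logHeight₁_le_log hΦ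
  have hheight := hc.logHeight₁_sum_le hnq hJ hlam g₁ g₂ hk hr
  have happly := hc.apply_sum_le hnq hε₁ hε₂ h₁ h₂
  have hε : 0 < ε₁ ^ (n * J) + ε₂ :=
    pos_of_mul_pos_right ((v.pos hΦ).trans_le happly) (Real.exp_pos _).le
  have hupper := Real.log_le_log (v.pos hΦ) happly
  rw [Real.log_mul (Real.exp_ne_zero _) hε.ne', Real.log_exp] at hupper
  linarith

end GapPrinciple

section GapPrinciple

theorem exp_neg_le_half {t : ℝ} (ht : 1 ≤ t) : Real.exp (-t) ≤ 1 / 2 := by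
  rw [Real.exp_neg, inv_le_comm₀ (Real.exp_pos t) (by norm_num)]
  linarith [Real.add_one_le_exp t]

theorem log_exp_neg_pow_add_two_mul_exp_neg_le {X a b : ℝ} {m : ℕ} (hm : X ≤ m * a) (hb : X ≤ b) :
    Real.log (Real.exp (-a) ^ m + 2 * Real.exp (-b)) ≤ 2 - X := by
  rw [Real.log_le_iff_le_exp (by positivity), ← Real.exp_nat_mul]
  calc Real.exp (m * -a) + 2 * Real.exp (-b) ≤ Real.exp (-X) + 2 * Real.exp (-X) := by
        gcongr; linarith
    _ = 3 * Real.exp (-X) := by ring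
    _ ≤ Real.exp 2 * Real.exp (-X) := by
        gcongr; linarith [Real.add_one_le_exp (2 : ℝ)]
    _ = Real.exp (2 - X) := by rw [← Real.exp_add, sub_eq_add_neg]

theorem exists_nat_lt_and_mul_le {η h : ℝ} (hη : 0 < η) (hηh : η ≤ h) {q J : ℕ}
    (hq : 8 * h ≤ η * q) (hJ : 8 * h ≤ η * J) :
    ∃ n : ℕ, n < q ∧ 4 * h * n ≤ η * q ∧ q ≤ n * J := by
  have hh : 0 < h := hη.trans_le hηh
  have hfloor_le : (⌊η * q / (4 * h)⌋₊ : ℝ) * (4 * h) ≤ η * q :=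
    (le_div_iff₀ (by positivity)).1 (Nat.floor_le (by positivity))
  have hlt_floor : η * q < (⌊η * q / (4 * h)⌋₊ + 1) * (4 * h) :=
    (div_lt_iff₀ (by positivity)).1 (Nat.lt_floor_add_one _)
  generalize ⌊η * q / (4 * h)⌋₊ = n at hfloor_le hlt_floor
  refine ⟨n, ?_, by linarith, ?_⟩
  · by_contra! hqn
    have hhq : η * q ≤ h * n := mul_le_mul hηh (by exact_mod_cast hqn) (by positivity) hh.le
    linarith
  · have : η * q ≤ η * (n * J) := by
      calc η * q ≤ (8 * h) * n := by linarith
        _ ≤ (η * J) * n := by gcongr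
        _ = η * (n * J) := by ring
    exact_mod_cast le_of_mul_le_mul_left this hη

theorem exists_mul_eq_add_le {k₁ : ℕ} (hk₁ : 0 < k₁) (k₂ : ℕ) :
    ∃ q r, k₁ * q = k₂ + r ∧ r ≤ k₁ := by
  refine ⟨k₂ / k₁ + 1, k₁ - k₂ % k₁, ?_, Nat.sub_le _ _⟩
  have := Nat.div_add_mod k₂ k₁
  have := Nat.mod_lt k₂ hk₁
  rw [mul_add_one]
  omega

variable {K : Type*} [Field K] [AdmissibleAbsValues K]

/-- `γ` is a multiplicative approximation of `lam ^ k` at the place `v`, of quality `exp (-η k)` and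
of logarithmic height at most `c k`, the measure in which the gap principle is stated. -/
structure IsGoodApprox (v : AbsoluteValue K ℝ) (lam : K) (η c : ℝ) (k : ℕ) (γ : K) : Prop where
  ne_zero : γ ≠ 0
  ne : lam ^ k ≠ γ
  logHeight₁_le : logHeight₁ γ ≤ c * k
  apply_le : v (lam ^ k / γ - 1) ≤ Real.exp (-(η * k))

variable [CharZero K] {v : AbsoluteValue K ℝ}

theorem IsGoodApprox.mul_sub_one_le (hv : IsPlace v) {lam : K} (hlam : lam ≠ 0) {η c : ℝ}
    (hη : 0 < η) {k₁ k₂ q r n J : ℕ} (hηk₁ : 1 ≤ η * k₁) (hqr : k₁ * q = k₂ + r) (hr : r ≤ k₁)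
    (hq : 2 ≤ q) (hnq : n < q) (hqnJ : q ≤ n * J) {g₁ g₂ : K} (hg₁ : IsGoodApprox v lam η c k₁ g₁)
    (hg₂ : IsGoodApprox v lam η c k₂ g₂) :
    η * k₁ * (q - 1) ≤ 2 + (9 * totalWeight K + 11) * (q * J ^ 2) +
      k₁ * (n + J) * logHeight₁ lam + c * k₁ * (q * J) + c * (k₁ * q - r) * J := by
  have hJ : 0 < J := Nat.pos_of_ne_zero fun h0 ↦ by simp only [h0, mul_zero] at hqnJ; omega
  have hqrR : (k₁ : ℝ) * q = k₂ + r := by exact_mod_cast hqr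
  have hrR : (r : ℝ) ≤ k₁ := by exact_mod_cast hr
  have hqR : (2 : ℝ) ≤ q := by exact_mod_cast hq
  have hqnJR : (q : ℝ) ≤ n * J := by exact_mod_cast hqnJ
  have hXk₂ : η * k₁ * (q - 1) ≤ η * k₂ := by
    rw [mul_assoc]; gcongr; linarith
  have hXn : η * k₁ * (q - 1) ≤ (n * J : ℕ) * (η * k₁) := by
    push_cast; rw [mul_comm (n * J : ℝ)]; gcongr; linarith
  have hηk₂ : Real.exp (-(η * k₂)) ≤ 1 / 2 := exp_neg_le_half (hXk₂.trans' (by nlinarith))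
  have hinv := apply_inv_sub_one_le hηk₂ hg₂.apply_le
  rw [inv_div] at hinv
  have hcore := hv.zero_le_logHeight₁_add_log hlam hg₁.ne_zero hnq
    hJ hqr hr hg₁.ne
    ((exp_neg_le_half hηk₁).trans (by norm_num)) (by linarith) hg₁.apply_le hinv
  have hlog := log_exp_neg_pow_add_two_mul_exp_neg_le hXn hXk₂
  have hheight₁ : q * J * logHeight₁ g₁ ≤ c * k₁ * (q * J) := by
    rw [mul_comm (c * k₁)]; gcongr; exact hg₁.logHeight₁_le
  have hheight₂ : J * logHeight₁ g₂ ≤ c * (k₁ * q - r) * J := by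
    rw [mul_comm, hqrR, add_sub_cancel_right]; gcongr; exact hg₂.logHeight₁_le
  linarith

theorem IsGoodApprox.lt_mul (hv : IsPlace v) {lam : K} (hlam : lam ≠ 0) {η h : ℝ}
    (hη : 0 < η) (hηh : η ≤ h) (hh : logHeight₁ lam ≤ h) {J k₁ k₂ q₀ : ℕ} (hJ : 8 * h ≤ η * J)
    (hk₁ : 8 * (13 * (totalWeight K + 1)) * J ^ 2 ≤ η * k₁) (hq₀ : 2 * (η + h * J) < η * q₀)
    {g₁ g₂ : K} (hg₁ : IsGoodApprox v lam η (η / (16 * J)) k₁ g₁)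
    (hg₂ : IsGoodApprox v lam η (η / (16 * J)) k₂ g₂) : k₂ < q₀ * k₁ := by
  by_contra! hk₂
  have hJ8 : (8 : ℝ) ≤ J := le_of_mul_le_mul_left (by linarith) hη
  have hJ64 : (64 : ℝ) ≤ J ^ 2 := by nlinarith
  have hηk₁ : 1 ≤ η * k₁ := by nlinarith [(Nat.cast_nonneg (totalWeight K) : (0 : ℝ) ≤ _)]
  have hk₁pos : 0 < k₁ := Nat.pos_of_ne_zero fun h0 ↦ by norm_num [h0] at hηk₁
  obtain ⟨q, r, hqr, hr⟩ := exists_mul_eq_add_le hk₁pos k₂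
  have hq : 2 * (η + h * J) < η * q :=
    hq₀.trans_le (by gcongr; exact Nat.le_of_mul_le_mul_left (by linarith) hk₁pos)
  have hhJ : h * 8 ≤ h * J := by have := hη.trans_le hηh; gcongr
  have hq2 : (2 : ℝ) ≤ q := le_of_mul_le_mul_left (by linarith) hη
  obtain ⟨n, hnq, hnh, hqnJ⟩ := exists_nat_lt_and_mul_le hη hηh (q := q) (by linarith) hJ
  have hkey := hg₁.mul_sub_one_le hv hlam hη hηk₁ hqr hr (by exact_mod_cast hq2) hnq hqnJ hg₂
  have hconst : 2 + (9 * totalWeight K + 11) * (q * J ^ 2) ≤ k₁ * (η * q) / 8 := by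
    have hone : 1 ≤ (q : ℝ) * J ^ 2 := by nlinarith
    calc (2 : ℝ) + (9 * totalWeight K + 11) * (q * J ^ 2)
        ≤ 8 * (13 * (totalWeight K + 1)) * J ^ 2 * q / 8 := by
          nlinarith [mul_nonneg (Nat.cast_nonneg (totalWeight K) : (0 : ℝ) ≤ _)
            (zero_le_one.trans hone)]
      _ ≤ η * k₁ * q / 8 := by gcongr
      _ = k₁ * (η * q) / 8 := by ring
  have hlam_height : k₁ * (n + J) * logHeight₁ lam ≤ k₁ * (η * q / 4 + h * J) := by
    rw [mul_assoc]
    gcongr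
    calc (n + J : ℝ) * logHeight₁ lam ≤ (n + J) * h := by gcongr
      _ ≤ η * q / 4 + h * J := by linarith
  have hheight₁ : η / (16 * J) * k₁ * (q * J) = k₁ * (η * q) / 16 := by field_simp
  have hheight₂ : η / (16 * J) * (k₁ * q - r) * J ≤ k₁ * (η * q) / 16 := by
    have hr0 : 0 ≤ η * r := by positivity
    calc η / (16 * J) * (k₁ * q - r) * J = (k₁ * (η * q) - η * r) / 16 := by field_simp
      _ ≤ k₁ * (η * q) / 16 := by linarith
  have hcontra : k₁ * (2 * (η + h * J)) < k₁ * (η * q) := by gcongr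
  linarith

/-- Two good approximations whose exponents are far apart cannot coexist, so a single one bounds the
exponents of all the others. -/
theorem IsPlace.exists_exp_neg_lt_apply_pow_div_sub_one (hv : IsPlace v) {lam : K} (hlam : lam ≠ 0)
    {η : ℝ} (hη : 0 < η) :
    ∃ c : ℝ, 0 < c ∧ ∃ k₀ : ℕ, ∀ k ≥ k₀, ∀ γ : K, γ ≠ 0 → logHeight₁ γ ≤ c * k → lam ^ k ≠ γ →
      Real.exp (-(η * k)) < v (lam ^ k / γ - 1) := by
  set h := max η (logHeight₁ lam)
  have hηh : η ≤ h := le_max_left _ _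
  obtain ⟨J, hJ⟩ := exists_nat_ge (8 * h / η)
  rw [div_le_iff₀' hη] at hJ
  have hJ0 : 0 < (J : ℝ) := pos_of_mul_pos_right (by linarith) hη.le
  obtain ⟨k₀, hk₀⟩ := exists_nat_ge (8 * (13 * (totalWeight K + 1)) * J ^ 2 / η)
  rw [div_le_iff₀' hη] at hk₀
  obtain ⟨q₀, hq₀⟩ := exists_nat_gt (2 * (η + h * J) / η)
  rw [div_lt_iff₀' hη] at hq₀
  suffices ∃ k₃, ∀ k ≥ k₃, ∀ γ, ¬ IsGoodApprox v lam η (η / (16 * J)) k γ by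
    obtain ⟨k₃, hk₃⟩ := this
    refine ⟨η / (16 * J), by positivity, k₃, fun k hk γ hγ hheight hne ↦ ?_⟩
    by_contra! hle
    exact hk₃ k hk γ ⟨hγ, hne, hheight, hle⟩
  by_cases hgood : ∃ k ≥ k₀, ∃ γ, IsGoodApprox v lam η (η / (16 * J)) k γ
  · obtain ⟨k₁, hk₁, g₁, hg₁⟩ := hgood
    refine ⟨q₀ * k₁, fun k hk γ hγ ↦ hk.not_gt ?_⟩
    exact hg₁.lt_mul hv hlam hη hηh (le_max_right _ _) hJ (hk₀.trans (by gcongr)) hq₀ hγ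
  · exact ⟨k₀, fun k hk γ hγ ↦ hgood ⟨k, hk, γ, hγ⟩⟩

end GapPrinciple

/-! ### Elements of infinite order -/

section InfiniteOrder
variable {K : Type*} [Field K] {z : K}

theorem zpow_right_injective_of_not_isOfFinOrder (hz : z ≠ 0) (hfin : ¬ IsOfFinOrder z) :
    Function.Injective fun n : ℤ ↦ z ^ n := by
  have h := (injective_zpow_iff_not_isOfFinOrder (x := Units.mk0 z hz)).2 (by
    rwa [← Units.isOfFinOrder_val])
  exact fun a b hab ↦ h (Units.ext (by simpa using hab))

theorem not_isOfFinOrder_inv (hfin : ¬ IsOfFinOrder z) : ¬ IsOfFinOrder z⁻¹ := by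
  rw [isOfFinOrder_iff_pow_eq_one] at hfin ⊢
  simpa only [inv_pow, inv_eq_one] using hfin

theorem eventually_pow_ne (hz : z ≠ 0) (hfin : ¬ IsOfFinOrder z) (c : K) :
    ∀ᶠ n : ℕ in atTop, z ^ n ≠ c := by
  have hinj : Function.Injective fun n : ℕ ↦ z ^ n := fun m n hmn ↦ by
    exact_mod_cast zpow_right_injective_of_not_isOfFinOrder hz hfin (a₁ := (m : ℤ)) (a₂ := n)
      (by simpa only [zpow_natCast] using hmn)
  rw [← Nat.cofinite_eq_atTop]
  exact hinj.tendsto_cofinite.eventually (Set.finite_singleton c).compl_mem_cofinite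

theorem eventually_mul_pow_add_mul_pow_ne_zero {ζ ξ p s : K} (hζ : ζ ≠ 0) (hp : p ≠ 0)
    (hs : s ≠ 0) (hps : ¬ IsOfFinOrder (p / s)) :
    ∀ᶠ n : ℕ in atTop, ζ * p ^ n + ξ * s ^ n ≠ 0 := by
  filter_upwards [eventually_pow_ne (div_ne_zero hp hs) hps (-ξ / ζ)] with n hn h
  refine hn ?_
  have hsn := pow_ne_zero n hs
  rw [div_pow]
  field_simp
  linear_combination h

variable [NumberField K]

/-- Kronecker's theorem: otherwise all powers of `z` have height one, against Northcott. -/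
theorem exists_isPlace_apply_lt_one (hz : z ≠ 0) (hfin : ¬ IsOfFinOrder z) :
    ∃ v : AbsoluteValue K ℝ, IsPlace v ∧ v z < 1 := by
  by_contra! hge
  have hheight : mulHeight₁ z = 1 := by
    rw [mulHeight₁_eq]
    refine Eq.trans (congrArg₂ _ (congrArg _ ?_) ?_) (product_formula hz)
    · exact Multiset.map_congr rfl fun v hv ↦ max_eq_left (hge v (Or.inl hv))
    · exact finprod_congr fun v ↦ max_eq_left (hge v.1 (Or.inr v.2))
  have hinj : Function.Injective fun n : ℕ ↦ z ^ n := fun m n hmn ↦ by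
    exact_mod_cast zpow_right_injective_of_not_isOfFinOrder hz hfin (a₁ := (m : ℤ)) (a₂ := n)
      (by simpa only [zpow_natCast] using hmn)
  refine Set.infinite_range_of_injective hinj
    ((NumberField.finite_setOfPred_mulHeight₁_le (K := K) 1).subset ?_)
  rintro _ ⟨n, rfl⟩
  simp [mulHeight₁_pow, hheight]

theorem exists_isPlace_one_lt_apply (hz : z ≠ 0) (hfin : ¬ IsOfFinOrder z) :
    ∃ v : AbsoluteValue K ℝ, IsPlace v ∧ 1 < v z := by
  obtain ⟨v, hv, h⟩ := exists_isPlace_apply_lt_one (inv_ne_zero hz) (not_isOfFinOrder_inv hfin)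
  rw [map_inv₀, inv_lt_one₀ (v.pos hz)] at h
  exact ⟨v, hv, h⟩

end InfiniteOrder

theorem eventually_mul_pow_lt {r : ℝ} (hr0 : 0 ≤ r) (hr : r < 1) (C : ℝ) {ε : ℝ} (hε : 0 < ε) :
    ∀ᶠ n : ℕ in atTop, C * r ^ n < ε :=
  ((tendsto_pow_atTop_nhds_zero_of_lt_one hr0 hr).const_mul C).eventually_lt_const
    (by rwa [mul_zero])

/-! ### Exponential sums at a single place -/

section ExponentialEquation
variable {K : Type*} [Field K] {v : AbsoluteValue K ℝ}

theorem eventually_half_apply_le_apply_add_mul_pow {A B y : K} (hA : A ≠ 0) (hy : v y < 1) :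
    ∀ᶠ n : ℕ in atTop, v A / 2 ≤ v (A + B * y ^ n) := by
  filter_upwards [eventually_mul_pow_lt (v.nonneg y) hy (v B) (half_pos (v.pos hA))] with n hn
  have h := v.le_add A (B * y ^ n)
  rw [map_mul, map_pow] at h
  linarith

variable [AdmissibleAbsValues K]

theorem exists_logHeight₁_add_mul_pow_le (A B y : K) : ∃ h₀ h₁ : ℝ, 0 ≤ h₁ ∧
    ∀ n : ℕ, logHeight₁ (A + B * y ^ n) ≤ h₀ + h₁ * n := by
  refine ⟨totalWeight K * Real.log 2 + logHeight₁ A + logHeight₁ B, logHeight₁ y,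
    zero_le_logHeight₁ y, fun n ↦ ?_⟩
  have hadd := logHeight₁_add_le A (B * y ^ n)
  have hmul := logHeight₁_mul_le B (y ^ n)
  rw [logHeight₁_pow] at hmul
  linarith

theorem eventually_logHeight₁_div_le {u w : ℕ → K} {a₀ a₁ b₀ b₁ c : ℝ} (ha₁ : 0 ≤ a₁) (hb₁ : 0 ≤ b₁)
    (hc : 0 < c) (hu : ∀ n : ℕ, logHeight₁ (u n) ≤ a₀ + a₁ * n)
    (hw : ∀ n : ℕ, logHeight₁ (w n) ≤ b₀ + b₁ * n) :
    ∃ θ : ℝ, 0 < θ ∧ ∀ᶠ k : ℕ in atTop, ∀ n : ℕ, n < θ * k → logHeight₁ (u n / w n) ≤ c * k := by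
  refine ⟨c / (2 * (a₁ + b₁ + 1)), by positivity, ?_⟩
  filter_upwards [(tendsto_natCast_atTop_atTop.const_mul_atTop (half_pos hc)).eventually_ge_atTop
    (a₀ + b₀)] with k hk n hn
  have hdiv := logHeight₁_mul_le (u n) (w n)⁻¹
  rw [logHeight₁_inv, ← div_eq_mul_inv] at hdiv
  have hlin : (a₁ + b₁ + 1) * n ≤ c / 2 * k := by
    calc (a₁ + b₁ + 1) * n ≤ (a₁ + b₁ + 1) * (c / (2 * (a₁ + b₁ + 1)) * k) := by gcongr
      _ = c / 2 * k := by field_simp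
  linarith [hu n, hw n, Nat.cast_nonneg (α := ℝ) n]

variable [CharZero K]

theorem IsPlace.exists_eventually_mul_pow_lt (hv : IsPlace v) {x : K} (hx : x ≠ 0) (C : ℝ) {r : ℝ}
    (hr0 : 0 ≤ r) (hr : r < 1) :
    ∃ c : ℝ, 0 < c ∧ ∀ᶠ k : ℕ in atTop, ∀ γ : K, γ ≠ 0 → logHeight₁ γ ≤ c * k → x ^ k ≠ γ →
      C * r ^ k < v (x ^ k / γ - 1) := by
  obtain ⟨r', hrr', hr'⟩ := exists_between hr
  have hr'0 : 0 < r' := hr0.trans_lt hrr'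
  obtain ⟨c, hc, k₀, hk₀⟩ := hv.exists_exp_neg_lt_apply_pow_div_sub_one hx
    (neg_pos.2 (Real.log_neg hr'0 hr'))
  refine ⟨c, hc, ?_⟩
  filter_upwards [eventually_ge_atTop k₀, eventually_mul_pow_lt (div_nonneg hr0 hr'0.le)
    ((div_lt_one hr'0).2 hrr') C one_pos] with k hk hsmall γ hγ hheight hne
  calc C * r ^ k = C * (r / r') ^ k * r' ^ k := by rw [div_pow]; field_simp
    _ ≤ 1 * r' ^ k := by gcongr
    _ = Real.exp (-(-Real.log r' * k)) := by
        rw [one_mul, neg_mul, neg_neg, mul_comm (Real.log r'), Real.exp_nat_mul, Real.exp_log hr'0]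
    _ < v (x ^ k / γ - 1) := hk₀ k hk γ hγ hheight hne

theorem IsPlace.eventually_forall_mul_pow_lt (hv : IsPlace v) {x : K} (hx : x ≠ 0)
    (hfin : ¬ IsOfFinOrder x) {γ : K} (hγ : γ ≠ 0) {C r θ : ℝ} (hC : 0 ≤ C) (hr0 : 0 < r)
    (hr : r < 1) (hθ : 0 < θ) :
    ∀ᶠ k : ℕ in atTop, ∀ n : ℕ, θ * k ≤ n → C * r ^ n < v (x ^ k / γ - 1) := by
  obtain ⟨c, hc, hlt⟩ := hv.exists_eventually_mul_pow_lt hx C (Real.rpow_nonneg hr0.le θ)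
    (Real.rpow_lt_one hr0.le hr hθ)
  filter_upwards [hlt, eventually_pow_ne hx hfin γ,
    (tendsto_natCast_atTop_atTop.const_mul_atTop hc).eventually_ge_atTop (logHeight₁ γ)]
    with k hk hne hheight n hn
  refine lt_of_le_of_lt ?_ (hk γ hγ hheight hne)
  gcongr
  rw [← Real.rpow_natCast, ← Real.rpow_natCast, ← Real.rpow_mul hr0.le]
  exact Real.rpow_le_rpow_of_exponent_ge hr0 hr.le hn

/-- If `a → α` and `b → γ` exponentially fast in `n`, then `x ^ k * b = a` makes `x ^ k` very close
to the constant `α / γ`, which the gap principle forbids unless `n` is small compared to `k`. -/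
theorem IsPlace.eventually_lt_mul_of_pow_mul_eq (hv : IsPlace v) {x : K} (hx : x ≠ 0)
    (hfin : ¬ IsOfFinOrder x) {α γ : K} (hα : α ≠ 0) (hγ : γ ≠ 0) {A B ρ θ : ℝ} (hA : 0 ≤ A)
    (hB : 0 ≤ B) (hρ0 : 0 < ρ) (hρ : ρ < 1) (hθ : 0 < θ) :
    ∀ᶠ g : ℕ × ℕ in atTop ×ˢ atTop, ∀ a b : K, v (a - α) ≤ A * ρ ^ g.1 →
      v (b - γ) ≤ B * ρ ^ g.1 → x ^ g.2 * b = a → (g.1 : ℝ) < θ * g.2 := by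
  have hvα := v.pos hα
  have hvγ := v.pos hγ
  set Q := (v α + A) / (v γ / 2)
  filter_upwards [(hv.eventually_forall_mul_pow_lt hx hfin (div_ne_zero hα hγ)
      (C := (A + Q * B) / v α) (by positivity) hρ0 hρ hθ).prod_inr _,
    (eventually_mul_pow_lt hρ0.le hρ B (half_pos hvγ)).prod_inl _]
    with ⟨n, k⟩ hlt hsmall a b ha hb hab
  dsimp only at *
  by_contra! hle
  have hvb : v γ / 2 ≤ v b := by linarith [v.le_sub γ b, v.map_sub γ b]
  have hva : v a ≤ v α + A := by
    have hρn := mul_le_of_le_one_right hA (pow_le_one₀ (n := n) hρ0.le hρ.le)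
    linarith [v.le_sub a α]
  have hvx : v (x ^ k) ≤ Q := by
    rw [le_div_iff₀ (by positivity)]
    refine le_trans ?_ hva
    rw [← hab, map_mul]
    gcongr
  have hquot : x ^ k / (α / γ) - 1 = (a - α - x ^ k * (b - γ)) / α := by
    rw [← hab]
    field_simp
    ring
  refine (hlt n hle).not_ge ?_
  rw [hquot, map_div₀, div_mul_eq_mul_div, div_le_div_iff_of_pos_right hvα, add_mul, mul_assoc]
  refine (v.sub_le_add _ _).trans ?_
  rw [map_mul]
  gcongr

theorem IsPlace.exists_eventually_pow_mul_ne (hv : IsPlace v) {x s : K} (hx : x ≠ 0) (hs0 : s ≠ 0)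
    (hs : v s < 1) {U : ℝ} (hU : 0 < U) (Z : ℝ) :
    ∃ c : ℝ, 0 < c ∧ ∀ᶠ k : ℕ in atTop, ∀ u w z : K, U ≤ v u → w ≠ 0 → z ≠ 0 → v z ≤ Z →
      logHeight₁ (u / w) ≤ c * k → x ^ k * w ≠ u + s ^ k * z := by
  obtain ⟨c, hc, hlt⟩ := hv.exists_eventually_mul_pow_lt hx (Z / U) (v.nonneg s) hs
  refine ⟨c, hc, ?_⟩
  filter_upwards [hlt] with k hk u w z hu hw hz hvz hheight heq
  have hu0 : u ≠ 0 := v.pos_iff.1 (hU.trans_le hu)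
  have hquot : x ^ k / (u / w) - 1 = s ^ k * z / u := by
    field_simp
    linear_combination heq
  have hne : x ^ k ≠ u / w := fun h ↦ by
    rw [h, div_self (div_ne_zero hu0 hw), sub_self, eq_comm] at hquot
    exact div_ne_zero (mul_ne_zero (pow_ne_zero k hs0) hz) hu0 hquot
  refine (hk _ (div_ne_zero hu0 hw) hheight hne).not_ge ?_
  rw [hquot, map_div₀, map_mul, map_pow, div_mul_eq_mul_div, mul_comm Z]
  have hZ : 0 ≤ Z := (v.nonneg z).trans hvz
  have := v.nonneg s
  gcongr

/-- The gap principle is used twice: a first time with a constant target to bound `g.1` by a small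
multiple of `g.2`, a second time with a target of height linear in `g.1`. -/
theorem IsPlace.eventually_add_mul_pow_ne (hv : IsPlace v) {p s x : K} (hp : v p < 1)
    (hs : v s < 1) (hs0 : s ≠ 0) (hx0 : x ≠ 0) (hfin : ¬ IsOfFinOrder x) {α β γ δ ζ ξ : K}
    (hα : α ≠ 0) (hγ : γ ≠ 0) (hz : ∀ᶠ n : ℕ in atTop, ζ * p ^ n + ξ * s ^ n ≠ 0) :
    ∀ᶠ g : ℕ × ℕ in atTop ×ˢ atTop,
      x ^ g.2 * (γ + δ * s ^ g.1) ≠ α + β * p ^ g.1 + s ^ g.2 * (ζ * p ^ g.1 + ξ * s ^ g.1) := by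
  obtain ⟨ρ, hpρ, hsρ, hρ⟩ : ∃ ρ, v p ≤ ρ ∧ v s ≤ ρ ∧ ρ < 1 :=
    ⟨_, le_max_left .., le_max_right .., max_lt hp hs⟩
  have hρ0 : 0 < ρ := (v.pos hs0).trans_le hsρ
  have hmono (A y : K) (hy : v y ≤ ρ) (n : ℕ) : v (A * y ^ n) ≤ v A * ρ ^ n := by
    rw [map_mul, map_pow]
    gcongr
  have hvz (n : ℕ) : v (ζ * p ^ n + ξ * s ^ n) ≤ (v ζ + v ξ) * ρ ^ n := by
    linarith [v.add_le (ζ * p ^ n) (ξ * s ^ n), hmono ζ p hpρ n, hmono ξ s hsρ n]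
  obtain ⟨a₀, a₁, ha₁, hu⟩ := exists_logHeight₁_add_mul_pow_le α β p
  obtain ⟨b₀, b₁, hb₁, hw⟩ := exists_logHeight₁_add_mul_pow_le γ δ s
  obtain ⟨c, hc, hfar⟩ :=
    hv.exists_eventually_pow_mul_ne hx0 hs0 hs (half_pos (v.pos hα)) (v ζ + v ξ)
  obtain ⟨θ, hθ, hheight⟩ := eventually_logHeight₁_div_le ha₁ hb₁ hc hu hw
  filter_upwards [hz.prod_inl _, (eventually_half_apply_le_apply_add_mul_pow hα hp).prod_inl _,
    (eventually_half_apply_le_apply_add_mul_pow hγ hs).prod_inl _, hfar.prod_inr _,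
    hheight.prod_inr _, hv.eventually_lt_mul_of_pow_mul_eq hx0 hfin hα hγ (A := v β + (v ζ + v ξ))
      (by positivity) (v.nonneg δ) hρ0 hρ hθ]
    with ⟨n, k⟩ hz hu hw hfar hheight hlt heq
  have hw0 : γ + δ * s ^ n ≠ 0 := v.pos_iff.1 ((half_pos (v.pos hγ)).trans_le hw)
  have hsk : v (s ^ k) ≤ 1 := by
    rw [map_pow]
    exact pow_le_one₀ (v.nonneg s) hs.le
  have hnk : (n : ℝ) < θ * k := by
    refine hlt _ _ ?_ ?_ heq
    · rw [add_assoc, add_sub_cancel_left, add_mul]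
      refine (v.add_le _ _).trans (add_le_add (hmono β p hpρ n) ?_)
      rw [map_mul]
      exact (mul_le_of_le_one_left (v.nonneg _) hsk).trans (hvz n)
    · rw [add_sub_cancel_left]
      exact hmono δ s hsρ n
  exact hfar _ _ _ hu hw0 hz ((hvz n).trans (mul_le_of_le_one_right (by positivity)
    (pow_le_one₀ hρ0.le hρ.le))) (hheight n hnk) heq

end ExponentialEquation

/-! ### Exponential equations over number fields -/

section NumberFieldEquations
variable {K : Type*} [Field K] [NumberField K]

theorem eventually_pow_mul_add_ne {A B C D x y : K} (hA : A ≠ 0) (hC : C ≠ 0) (hD : D ≠ 0)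
    (hx : x ≠ 0) (hy : y ≠ 0) (hxfin : ¬ IsOfFinOrder x) (hyfin : ¬ IsOfFinOrder y) :
    ∀ᶠ g : ℕ × ℕ in atTop ×ˢ atTop,
      x ^ g.2 * (A + B * y ^ g.1) ≠ C + D * y ^ (g.1 + g.2) := by
  obtain ⟨v, hv, hvy⟩ := exists_isPlace_apply_lt_one hy hyfin
  filter_upwards [hv.eventually_add_mul_pow_ne hvy hvy hy hx hxfin hC hA (β := 0) (δ := B)
    (ζ := 0) (ξ := D) (.of_forall fun n ↦ by simp [hD, hy])] with g hg h
  refine hg ?_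
  rw [h, pow_add]
  ring

theorem eventually_forall_ge_add_mul_pow_ne_zero {P Q R x y : K} (hP : P ≠ 0) (hR : R ≠ 0)
    (hx : x ≠ 0) (hy : y ≠ 0) (hxfin : ¬ IsOfFinOrder x) (hyfin : ¬ IsOfFinOrder y) :
    ∀ᶠ n : ℕ in atTop, ∀ k : ℕ, n ≤ k → P + Q * x ^ k + R * y ^ n ≠ 0 := by
  obtain ⟨v, hv, hvx⟩ := exists_isPlace_apply_lt_one hx hxfin
  have hvP := v.pos hP
  filter_upwards [hv.eventually_forall_mul_pow_lt hy hyfin (div_ne_zero (neg_ne_zero.2 hP) hR)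
    (C := v Q / v P) (by positivity) (v.pos hx) hvx one_pos] with n hlt k hnk h
  refine (hlt k (by rw [one_mul]; exact_mod_cast hnk)).ne' ?_
  have hquot : y ^ n / (-P / R) - 1 = Q * x ^ k / P := by
    field_simp
    linear_combination -h
  rw [hquot, map_div₀, map_mul, map_pow, div_mul_eq_mul_div]

theorem eventually_add_mul_pow_add_mul_pow_ne_zero {P Q R x y : K} (hP : P ≠ 0) (hQ : Q ≠ 0)
    (hR : R ≠ 0) (hx : x ≠ 0) (hy : y ≠ 0) (hxfin : ¬ IsOfFinOrder x) (hyfin : ¬ IsOfFinOrder y) :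
    ∀ᶠ g : ℕ × ℕ in atTop ×ˢ atTop, P + Q * x ^ g.1 + R * y ^ g.2 ≠ 0 := by
  filter_upwards [
    (eventually_forall_ge_add_mul_pow_ne_zero (Q := Q) hP hR hx hy hxfin hyfin).prod_inr _,
    (eventually_forall_ge_add_mul_pow_ne_zero (Q := R) hP hQ hy hx hyfin hxfin).prod_inl _]
    with ⟨k, n⟩ hyn hxk
  rcases le_total n k with h | h
  · exact hyn k h
  · rw [add_right_comm]
    exact hxk n h

theorem IsPlace.eventually_abs_log_add_mul_pow_le {v : AbsoluteValue K ℝ} (hv : IsPlace v)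
    {C D y : K} (hC : C ≠ 0) (hD : D ≠ 0) (hy : y ≠ 0) (hfin : ¬ IsOfFinOrder y) (hvy : v y ≤ 1)
    {η : ℝ} (hη : 0 < η) :
    ∀ᶠ n : ℕ in atTop, C + D * y ^ n ≠ 0 ∧ |Real.log (v (C + D * y ^ n))| ≤ η * n := by
  have hvC := v.pos hC
  filter_upwards [hv.eventually_forall_mul_pow_lt hy hfin (div_ne_zero (neg_ne_zero.2 hC) hD)
      (C := 1 / v C) (by positivity) (Real.exp_pos (-η)) (by simpa using hη) one_pos,
    (tendsto_natCast_atTop_atTop.const_mul_atTop hη).eventually_ge_atTop (Real.log (v C + v D))]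
    with n hlt hlog
  have hquot : y ^ n / (-C / D) - 1 = -(C + D * y ^ n) / C := by
    field_simp
    ring
  have hlower := hlt n (one_mul _).le
  rw [hquot, map_div₀, v.map_neg, div_mul_eq_mul_div, div_lt_div_iff_of_pos_right hvC, one_mul,
    ← Real.exp_nat_mul] at hlower
  have hpos := (Real.exp_pos _).trans hlower
  have hupper : v (C + D * y ^ n) ≤ v C + v D := by
    refine (v.add_le _ _).trans (add_le_add_right ?_ _)
    rw [map_mul, map_pow]
    exact mul_le_of_le_one_right (v.nonneg D) (pow_le_one₀ (v.nonneg y) hvy)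
  refine ⟨v.pos_iff.1 hpos, abs_le.2 ⟨?_, (Real.log_le_log hpos hupper).trans hlog⟩⟩
  linarith [(Real.lt_log_iff_exp_lt hpos).2 hlower]

theorem IsPlace.eventually_abs_log_add_mul_pow_sub_le {v : AbsoluteValue K ℝ} (hv : IsPlace v)
    {C D y : K} (hC : C ≠ 0) (hD : D ≠ 0) (hy : y ≠ 0) (hfin : ¬ IsOfFinOrder y)
    {η : ℝ} (hη : 0 < η) :
    ∀ᶠ n : ℕ in atTop, C + D * y ^ n ≠ 0 ∧
      |Real.log (v (C + D * y ^ n)) - n * Real.posLog (v y)| ≤ η * n := by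
  have hvy := v.pos hy
  rcases le_or_gt (v y) 1 with h | h
  · have hposLog : Real.posLog (v y) = 0 := by
      rwa [Real.posLog_eq_zero_iff, abs_of_pos hvy]
    simpa only [hposLog, mul_zero, sub_zero] using
      hv.eventually_abs_log_add_mul_pow_le hC hD hy hfin h hη
  · have hposLog : Real.posLog (v y) = Real.log (v y) :=
      Real.posLog_eq_log (by rw [abs_of_pos hvy]; exact h.le)
    filter_upwards [hv.eventually_abs_log_add_mul_pow_le hD hC (inv_ne_zero hy)
      (not_isOfFinOrder_inv hfin) (by rw [map_inv₀]; exact inv_le_one_of_one_le₀ h.le) hη]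
      with n ⟨hne, hle⟩
    have hyn := pow_ne_zero n hy
    have hfactor : C + D * y ^ n = y ^ n * (D + C * y⁻¹ ^ n) := by
      rw [inv_pow]
      field_simp
      ring
    refine ⟨hfactor ▸ mul_ne_zero hyn hne, ?_⟩
    rwa [hposLog, hfactor, map_mul, map_pow, Real.log_mul (pow_pos hvy n).ne' (v.pos hne).ne',
      Real.log_pow, add_sub_cancel_left]

theorem IsPlace.eventually_abs_log_le_of_pow_mul_eq {v : AbsoluteValue K ℝ} (hv : IsPlace v)
    {A B C D x y : K} (hA : A ≠ 0) (hB : B ≠ 0) (hC : C ≠ 0) (hD : D ≠ 0) (hx : x ≠ 0) (hy : y ≠ 0)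
    (hfin : ¬ IsOfFinOrder y) {η : ℝ} (hη : 0 < η) :
    ∀ᶠ g : ℕ × ℕ in atTop ×ˢ atTop,
      x ^ (g.1 + g.2) * (A + B * y⁻¹ ^ g.2) = C + D * y ^ g.1 →
      |Real.log (v (x ^ 2 / y)) * (g.1 + g.2) -
        (Real.posLog (v y) + Real.posLog (v y)⁻¹) * (g.1 - g.2)| ≤ 2 * η * (g.1 + g.2) := by
  filter_upwards [(hv.eventually_abs_log_add_mul_pow_sub_le hC hD hy hfin hη).prod_inl _,
    (hv.eventually_abs_log_add_mul_pow_sub_le hA hB (inv_ne_zero hy)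
      (not_isOfFinOrder_inv hfin) hη).prod_inr _]
    with ⟨n, p⟩ ⟨_, hCD⟩ ⟨hAB0, hAB⟩ h
  have hvx := v.pos hx
  have hlog := congrArg (fun t ↦ Real.log (v t)) h
  simp only [map_mul, map_pow] at hlog
  rw [Real.log_mul (pow_pos hvx _).ne' (v.pos hAB0).ne', Real.log_pow] at hlog
  have hlogdiv : Real.log (v (x ^ 2 / y)) = 2 * Real.log (v x) - Real.log (v y) := by
    rw [map_div₀, map_pow, Real.log_div (pow_pos hvx 2).ne' (v.pos hy).ne', Real.log_pow,
      Nat.cast_two]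
  rw [map_inv₀] at hAB
  rw [hlogdiv, ← Real.posLog_sub_posLog_inv (x := v y)]
  push_cast at hlog
  rw [abs_le] at *
  constructor <;> linarith

/-- Comparing sizes at a place where `x ^ 2 / y` is small and at one where it is large bounds the
exponents in opposite directions. -/
theorem eventually_pow_add_mul_ne {A B C D x y : K} (hA : A ≠ 0) (hB : B ≠ 0) (hC : C ≠ 0)
    (hD : D ≠ 0) (hx : x ≠ 0) (hy : y ≠ 0) (hyfin : ¬ IsOfFinOrder y)
    (hxyfin : ¬ IsOfFinOrder (x ^ 2 / y)) :
    ∀ᶠ g : ℕ × ℕ in atTop ×ˢ atTop,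
      x ^ (g.1 + g.2) * (A + B * y⁻¹ ^ g.2) ≠ C + D * y ^ g.1 := by
  have hxy := div_ne_zero (pow_ne_zero 2 hx) hy
  obtain ⟨v, hv, hlt⟩ := exists_isPlace_apply_lt_one hxy hxyfin
  obtain ⟨w, hw, hgt⟩ := exists_isPlace_one_lt_apply hxy hxyfin
  have hneg := Real.log_neg (v.pos hxy) hlt
  have hpos := Real.log_pos hgt
  filter_upwards [
    hv.eventually_abs_log_le_of_pow_mul_eq hA hB hC hD hx hy hyfin (half_pos (half_pos
      (neg_pos.2 hneg))),
    hw.eventually_abs_log_le_of_pow_mul_eq hA hB hC hD hx hy hyfin (half_pos (half_pos hpos)),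
    (eventually_gt_atTop 0).prod_inl _] with ⟨n, p⟩ hvle hwle hn h
  have hsum : (0 : ℝ) < n + p := by exact_mod_cast Nat.add_pos_left hn p
  have hnonneg (u : AbsoluteValue K ℝ) : 0 ≤ Real.posLog (u y) + Real.posLog (u y)⁻¹ :=
    add_nonneg Real.posLog_nonneg Real.posLog_nonneg
  rcases le_total (n : ℝ) p with hnp | hpn
  · linarith [le_of_abs_le (hwle h), mul_pos hpos hsum,
      mul_nonneg (hnonneg w) (sub_nonneg.2 hnp)]
  · linarith [neg_le_of_abs_le (hvle h), mul_neg_of_neg_of_pos hneg hsum,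
      mul_nonneg (hnonneg v) (sub_nonneg.2 hpn)]

end NumberFieldEquations

theorem exists_forall_ge_of_eventually_prod {P : ℕ × ℕ → Prop}
    (h : ∀ᶠ g in atTop ×ˢ atTop, P g) :
    ∃ N : ℤ, ∀ m n : ℤ, N ≤ m → N ≤ n → P (m.toNat, n.toNat) := by
  rw [prod_atTop_atTop_eq] at h
  obtain ⟨N, hN⟩ := eventually_atTop_prod_self.1 h
  exact ⟨N, fun m n hm hn ↦ hN _ _ (by omega) (by omega)⟩

section IntegerExponents
variable {K : Type*} [Field K] [NumberField K] {A B C D x y : K}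

theorem exists_forall_le_sub_zpow_mul_add_ne (hA : A ≠ 0) (hC : C ≠ 0) (hD : D ≠ 0) (hx : x ≠ 0)
    (hy : y ≠ 0) (hxfin : ¬ IsOfFinOrder x) (hyfin : ¬ IsOfFinOrder y) :
    ∃ N : ℤ, ∀ m n : ℤ, N ≤ n → N ≤ m - n →
      x ^ m * (A + B * y ^ n) ≠ x ^ n * (C + D * y ^ m) := by
  obtain ⟨N, hN⟩ := exists_forall_ge_of_eventually_prod
    (eventually_pow_mul_add_ne (B := B) hA hC hD hx hy hxfin hyfin)
  refine ⟨max N 0, fun m n hn hmn h ↦ hN n (m - n) (by omega) (by omega) ?_⟩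
  rw [← zpow_natCast, ← zpow_natCast, ← zpow_natCast]
  push_cast
  rw [Int.toNat_of_nonneg (by omega), Int.toNat_of_nonneg (by omega), add_sub_cancel]
  refine mul_left_cancel₀ (zpow_ne_zero n hx) ?_
  rw [← h, ← mul_assoc, ← zpow_add₀ hx, add_sub_cancel]

theorem exists_forall_le_neg_zpow_mul_add_ne (hA : A ≠ 0) (hB : B ≠ 0) (hC : C ≠ 0) (hD : D ≠ 0)
    (hx : x ≠ 0) (hy : y ≠ 0) (hyfin : ¬ IsOfFinOrder y) (hxyfin : ¬ IsOfFinOrder (x ^ 2 / y)) :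
    ∃ N : ℤ, ∀ m n : ℤ, N ≤ m → N ≤ -n →
      x ^ m * (A + B * y ^ n) ≠ x ^ n * (C + D * y ^ m) := by
  obtain ⟨N, hN⟩ := exists_forall_ge_of_eventually_prod
    (eventually_pow_add_mul_ne hA hB hC hD hx hy hyfin hxyfin)
  refine ⟨max N 0, fun m n hm hn h ↦ hN m (-n) (by omega) (by omega) ?_⟩
  rw [← zpow_natCast, ← zpow_natCast, ← zpow_natCast]
  push_cast
  rw [Int.toNat_of_nonneg (by omega), Int.toNat_of_nonneg (by omega), inv_zpow, zpow_neg, inv_inv]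
  refine mul_left_cancel₀ (zpow_ne_zero n hx) ?_
  rw [← h, ← mul_assoc, ← zpow_add₀ hx, add_neg_cancel_comm_assoc]

theorem exists_forall_le_zpow_mul_add_eq (hA : A ≠ 0) (hB : B ≠ 0) (hC : C ≠ 0) (hD : D ≠ 0)
    (hx : x ≠ 0) (hy : y ≠ 0) (hxfin : ¬ IsOfFinOrder x) (hyfin : ¬ IsOfFinOrder y)
    (hyxfin : ¬ IsOfFinOrder (y / x)) (hxyfin : ¬ IsOfFinOrder (x ^ 2 / y)) :
    ∃ N : ℤ, ∀ m n : ℤ, n ≤ m → x ^ m * (A + B * y ^ n) = x ^ n * (C + D * y ^ m) →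
      |m| < N ∨ |n| < N ∨ |m - n| < N := by
  obtain ⟨N₁, h₁⟩ := exists_forall_le_sub_zpow_mul_add_ne (B := B) hA hC hD hx hy hxfin hyfin
  obtain ⟨N₂, h₂⟩ := exists_forall_le_neg_zpow_mul_add_ne hA hB hC hD hx hy hyfin hxyfin
  obtain ⟨N₃, h₃⟩ := exists_forall_le_sub_zpow_mul_add_ne (B := C) hD hB hA
    (div_ne_zero hy hx) hy hyxfin hyfin
  refine ⟨max N₁ (max N₂ N₃), fun m n hnm h ↦ ?_⟩
  by_contra! hN
  rw [abs_of_nonneg (sub_nonneg.2 hnm), le_abs, le_abs] at hN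
  have hn : n < N₁ := by
    by_contra! hn
    exact h₁ m n hn (by omega) h
  have hmn : m < N₂ ∨ -n < N₂ := by
    by_contra! hmn
    exact h₂ m n hmn.1 hmn.2 h
  -- Inverting `y` exchanges the roles of `x` and `y / x`, and those of `m` and `-n`.
  have hinv : (y / x) ^ (-n) * (D + C * y ^ (-m)) = (y / x) ^ (-m) * (B + A * y ^ (-n)) := by
    simp only [div_zpow, zpow_neg]
    have hym := zpow_ne_zero m hy
    have hyn := zpow_ne_zero n hy
    field_simp
    linear_combination -h
  have hm : -m < N₃ := by
    by_contra! hm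
    exact h₃ (-n) (-m) hm (by omega) hinv
  omega

theorem exists_forall_zpow_mul_add_eq (hA : A ≠ 0) (hB : B ≠ 0) (hC : C ≠ 0) (hD : D ≠ 0)
    (hx : x ≠ 0) (hy : y ≠ 0) (hxfin : ¬ IsOfFinOrder x) (hyfin : ¬ IsOfFinOrder y)
    (hyxfin : ¬ IsOfFinOrder (y / x)) (hxyfin : ¬ IsOfFinOrder (x ^ 2 / y)) :
    ∃ N : ℤ, ∀ m n : ℤ, x ^ m * (A + B * y ^ n) = x ^ n * (C + D * y ^ m) →
      |m| < N ∨ |n| < N ∨ |m - n| < N := by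
  obtain ⟨N₁, h₁⟩ := exists_forall_le_zpow_mul_add_eq hA hB hC hD hx hy hxfin hyfin hyxfin hxyfin
  obtain ⟨N₂, h₂⟩ := exists_forall_le_zpow_mul_add_eq hC hD hA hB hx hy hxfin hyfin hyxfin hxyfin
  refine ⟨max N₁ N₂, fun m n h ↦ ?_⟩
  rcases le_total n m with hnm | hmn
  · have := h₁ m n hnm h
    omega
  · have := h₂ n m hmn h.symm
    rw [abs_sub_comm] at this
    omega

theorem exists_forall_add_mul_zpow_add_mul_zpow_eq_zero (hA : A ≠ 0) (hB : B ≠ 0) (hC : C ≠ 0)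
    (hx : x ≠ 0) (hy : y ≠ 0) (hxfin : ¬ IsOfFinOrder x) (hyfin : ¬ IsOfFinOrder y) :
    ∃ N : ℤ, ∀ m n : ℤ, A + B * x ^ m + C * y ^ n = 0 → |m| < N ∨ |n| < N := by
  have hnat {x y : K} (hx : x ≠ 0) (hy : y ≠ 0) (hxfin : ¬ IsOfFinOrder x)
      (hyfin : ¬ IsOfFinOrder y) := exists_forall_ge_of_eventually_prod
    (eventually_add_mul_pow_add_mul_pow_ne_zero hA hB hC hx hy hxfin hyfin)
  have hx' := not_isOfFinOrder_inv hxfin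
  have hy' := not_isOfFinOrder_inv hyfin
  obtain ⟨N₁, h₁⟩ := hnat hx hy hxfin hyfin
  obtain ⟨N₂, h₂⟩ := hnat (inv_ne_zero hx) hy hx' hyfin
  obtain ⟨N₃, h₃⟩ := hnat hx (inv_ne_zero hy) hxfin hy'
  obtain ⟨N₄, h₄⟩ := hnat (inv_ne_zero hx) (inv_ne_zero hy) hx' hy'
  refine ⟨max (max N₁ N₂) (max N₃ N₄), fun m n h ↦ ?_⟩
  by_contra! hN
  obtain ⟨m, rfl | rfl⟩ := m.eq_nat_or_neg <;> obtain ⟨n, rfl | rfl⟩ := n.eq_nat_or_neg <;>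
    simp only [abs_neg, Nat.abs_cast, max_le_iff, zpow_neg, zpow_natCast, ← inv_pow] at hN h
  · exact h₁ m n hN.1.1.1 hN.2.1.1 h
  · exact h₃ m n hN.1.2.1 hN.2.2.1 h
  · exact h₂ m n hN.1.1.2 hN.2.1.2 h
  · exact h₄ m n hN.1.2.2 hN.2.2.2 h

end IntegerExponents

/-! ### Determinants along orbits -/

section OrbitDet
variable {ι K : Type*} [Fintype ι] [DecidableEq ι] [Field K]

/-- The determinant whose vanishing expresses that the lines with covectors `a i`, translated
back by the `m i`-th powers of the diagonal automorphism with entries `l`, are concurrent. -/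
def orbitDet (a : Matrix ι ι K) (l : ι → K) (m : ι → ℤ) : K :=
  (Matrix.of fun i j ↦ a i j * l j ^ m i).det

/-- The zeros `m` of `orbitDet a l` all have two entries at bounded distance from each other. -/
def BoundedGap (a : Matrix ι ι K) (l : ι → K) : Prop :=
  ∃ N : ℤ, ∀ m : ι → ℤ, orbitDet a l m = 0 → ∃ i j, i ≠ j ∧ |m i - m j| < N

variable {a : Matrix ι ι K} {l : ι → K} {m : ι → ℤ}

theorem orbitDet_submatrix_eq_zero_iff (σ τ : Equiv.Perm ι) :
    orbitDet (a.submatrix σ τ) (l ∘ τ) (m ∘ σ) = 0 ↔ orbitDet a l m = 0 := by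
  have hne (ρ : Equiv.Perm ι) : ((Equiv.Perm.sign ρ : ℤ) : K) ≠ 0 := by
    rcases Int.units_eq_one_or (Equiv.Perm.sign ρ) with h | h <;> simp [h]
  have h : orbitDet (a.submatrix σ τ) (l ∘ τ) (m ∘ σ) =
      Equiv.Perm.sign σ * (Equiv.Perm.sign τ * orbitDet a l m) := by
    rw [orbitDet, orbitDet, ← Matrix.det_permute' τ, ← Matrix.det_permute σ]
    rfl
  rw [h, mul_eq_zero_iff_left (hne σ), mul_eq_zero_iff_left (hne τ)]

theorem orbitDet_inv : orbitDet a l⁻¹ m = orbitDet a l (-m) := by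
  simp only [orbitDet, Pi.inv_apply, Pi.neg_apply, inv_zpow, zpow_neg]

theorem orbitDet_div_sub_eq_zero_iff (hl : ∀ i, l i ≠ 0) {c : K} (hc : c ≠ 0) (k : ℤ) :
    orbitDet a (fun j ↦ l j / c) (fun i ↦ m i - k) = 0 ↔ orbitDet a l m = 0 := by
  have h : (Matrix.of fun i j ↦ a i j * (l j / c) ^ (m i - k)) = Matrix.of fun i j ↦
      c ^ (k - m i) * (Matrix.of fun i j ↦ l j ^ (-k) * (Matrix.of fun i j ↦
        a i j * l j ^ m i) i j) i j := by
    ext i j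
    simp only [Matrix.of_apply]
    rw [div_zpow, div_eq_mul_inv, ← zpow_neg, neg_sub, sub_eq_add_neg (m i), zpow_add₀ (hl j)]
    ring
  rw [orbitDet, h, Matrix.det_mul_column, Matrix.det_mul_row, mul_eq_zero_iff_left
    (Finset.prod_ne_zero_iff.2 fun i _ ↦ zpow_ne_zero _ hc), mul_eq_zero_iff_left
    (Finset.prod_ne_zero_iff.2 fun i _ ↦ zpow_ne_zero _ (hl i)), orbitDet]

theorem BoundedGap.of_submatrix (σ τ : Equiv.Perm ι)
    (h : BoundedGap (a.submatrix σ τ) (l ∘ τ)) : BoundedGap a l := by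
  obtain ⟨N, hN⟩ := h
  refine ⟨N, fun m hm ↦ ?_⟩
  obtain ⟨i, j, hij, h⟩ := hN _ ((orbitDet_submatrix_eq_zero_iff σ τ).2 hm)
  exact ⟨σ i, σ j, σ.injective.ne hij, h⟩

end OrbitDet

section NontorsionRatios
variable {ι K : Type*} [Field K] {l : ι → K}

/-- Nonzero scalars whose pairwise ratios are not roots of unity: the diagonal automorphism with
these entries has no other periodic points than the coordinate points. -/
structure NontorsionRatios (l : ι → K) : Prop where
  ne_zero (i : ι) : l i ≠ 0
  not_isOfFinOrder_div {i j : ι} (hij : i ≠ j) : ¬ IsOfFinOrder (l i / l j)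

theorem nontorsionRatios_of_sq (hl : ∀ i, l i ≠ 0)
    (hsq : ∀ i j k, i ≠ j → i ≠ k → ¬ IsOfFinOrder (l i ^ 2 / (l j * l k))) :
    NontorsionRatios l :=
  ⟨hl, fun {i j} hij h ↦ hsq i j j hij hij <| by
    simpa only [div_pow, sq (l j)] using h.pow (n := 2)⟩

theorem NontorsionRatios.comp (h : NontorsionRatios l) (σ : Equiv.Perm ι) :
    NontorsionRatios (l ∘ σ) :=
  ⟨fun i ↦ h.ne_zero (σ i), fun hij ↦ h.not_isOfFinOrder_div (σ.injective.ne hij)⟩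

theorem NontorsionRatios.inv (h : NontorsionRatios l) : NontorsionRatios l⁻¹ :=
  ⟨fun i ↦ inv_ne_zero (h.ne_zero i), fun hij ↦ by
    simpa only [Pi.inv_apply, inv_div_inv] using h.not_isOfFinOrder_div hij.symm⟩

end NontorsionRatios

/-! ### Nonvanishing of determinants along orbits over number fields -/

section NumberField
variable {K : Type*} [Field K] [NumberField K] {a : Matrix (Fin 3) (Fin 3) K} {l : Fin 3 → K}

theorem IsPlace.exists_forall_orbitDet_ne_zero {v : AbsoluteValue K ℝ} (hv : IsPlace v)
    (ha : ∀ i j, a i j ≠ 0) (hl : NontorsionRatios l) (hdom : ∀ j, j ≠ 0 → v (l j) < v (l 0)) :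
    ∃ N : ℤ, ∀ m : Fin 3 → ℤ, N ≤ m 0 - m 1 → N ≤ m 1 - m 2 → orbitDet a l m ≠ 0 := by
  have hl0 := hl.ne_zero 0
  have hl1 := hl.ne_zero 1
  have hl2 := hl.ne_zero 2
  have hlt (j : Fin 3) (hj : j ≠ 0) : v (l j / l 0) < 1 := by
    rw [map_div₀]
    exact (div_lt_one (v.pos hl0)).2 (hdom j hj)
  have hz := eventually_mul_pow_add_mul_pow_ne_zero (ζ := a 2 0 * a 0 1 * a 1 2)
    (ξ := -(a 2 0 * a 0 2 * a 1 1)) (by simp [ha]) (div_ne_zero hl1 hl0) (div_ne_zero hl2 hl0)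
    (by rw [div_div_div_cancel_right₀ hl0]; exact hl.not_isOfFinOrder_div (by decide))
  obtain ⟨N, hN⟩ := exists_forall_ge_of_eventually_prod (hv.eventually_add_mul_pow_ne
    (hlt 1 (by decide)) (hlt 2 (by decide)) (div_ne_zero hl2 hl0) (div_ne_zero hl2 hl1)
    (hl.not_isOfFinOrder_div (by decide)) (α := a 2 2 * a 0 0 * a 1 1)
    (β := -(a 2 2 * a 1 0 * a 0 1)) (γ := a 2 1 * a 0 0 * a 1 2) (δ := -(a 2 1 * a 0 2 * a 1 0))
    (by simp [ha]) (by simp [ha]) hz)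
  refine ⟨max N 0, fun m h01 h12 h ↦ hN (m 0 - m 1) (m 1 - m 2) (by omega) (by omega) ?_⟩
  rw [← orbitDet_div_sub_eq_zero_iff hl.ne_zero hl0 (m 2), orbitDet, Matrix.det_fin_three] at h
  simp only [← zpow_natCast]
  rw [Int.toNat_of_nonneg (by omega), Int.toNat_of_nonneg (by omega)]
  have hm : m 0 - m 2 = (m 0 - m 1) + (m 1 - m 2) := by ring
  simp only [Matrix.of_apply, sub_self, zpow_zero, div_self hl0, one_zpow, hm,
    zpow_add₀ (div_ne_zero hl1 hl0), zpow_add₀ (div_ne_zero hl2 hl0)] at h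
  rw [← div_div_div_cancel_right₀ hl0 (l 2) (l 1), div_zpow (l 2 / l 0)]
  have := zpow_ne_zero (m 1 - m 2) (div_ne_zero hl1 hl0)
  generalize (l 1 / l 0) ^ (m 1 - m 2) = y at *
  field_simp
  linear_combination -h

theorem IsPlace.exists_forall_orbitDet_ne_zero_of_dominant {v : AbsoluteValue K ℝ} (hv : IsPlace v)
    (ha : ∀ i j, a i j ≠ 0) (hl : NontorsionRatios l) {i : Fin 3}
    (hdom : ∀ j, j ≠ i → v (l j) < v (l i)) :
    ∃ N : ℤ, ∀ m : Fin 3 → ℤ, N ≤ m 0 - m 1 → N ≤ m 1 - m 2 → orbitDet a l m ≠ 0 := by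
  obtain ⟨N, hN⟩ := hv.exists_forall_orbitDet_ne_zero (a := a.submatrix (1 : Equiv.Perm (Fin 3))
    (Equiv.swap 0 i)) (fun _ _ ↦ ha _ _) (hl.comp (Equiv.swap 0 i)) (fun j hj ↦ by
      rw [Function.comp_apply, Function.comp_apply, Equiv.swap_apply_left]
      exact hdom _ fun h ↦ hj (Equiv.swap_apply_eq_iff.1 h |>.trans (Equiv.swap_apply_right _ _)))
  exact ⟨N, fun m h01 h12 h ↦ hN m h01 h12 ((orbitDet_submatrix_eq_zero_iff 1 _).2 h)⟩

theorem IsPlace.exists_forall_orbitDet_ne_zero_of_minimal {v : AbsoluteValue K ℝ} (hv : IsPlace v)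
    (ha : ∀ i j, a i j ≠ 0) (hl : NontorsionRatios l) {i : Fin 3}
    (hmin : ∀ j, j ≠ i → v (l i) < v (l j)) :
    ∃ N : ℤ, ∀ m : Fin 3 → ℤ, N ≤ m 0 - m 1 → N ≤ m 1 - m 2 → orbitDet a l m ≠ 0 := by
  obtain ⟨N, hN⟩ := hv.exists_forall_orbitDet_ne_zero_of_dominant
    (a := a.submatrix Fin.revPerm (1 : Equiv.Perm (Fin 3))) (fun _ _ ↦ ha _ _) hl.inv
    (fun j hj ↦ by
      simp only [Pi.inv_apply, map_inv₀]
      exact inv_strictAnti₀ (v.pos (hl.ne_zero i)) (hmin j hj))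
  refine ⟨N, fun m h01 h12 h ↦ hN (-(m ∘ Fin.revPerm)) ?_ ?_ ?_⟩
  · simpa [neg_add_eq_sub] using h12
  · simpa [neg_add_eq_sub] using h01
  · rw [orbitDet_inv, neg_neg]
    exact (orbitDet_submatrix_eq_zero_iff Fin.revPerm 1).2 h

theorem exists_forall_orbitDet_ne_zero (ha : ∀ i j, a i j ≠ 0) (hl : NontorsionRatios l) :
    ∃ N : ℤ, ∀ m : Fin 3 → ℤ, N ≤ m 0 - m 1 → N ≤ m 1 - m 2 → orbitDet a l m ≠ 0 := by
  obtain ⟨v, hv, h01⟩ := exists_isPlace_apply_lt_one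
    (div_ne_zero (hl.ne_zero 0) (hl.ne_zero 1)) (hl.not_isOfFinOrder_div (by decide))
  rw [map_div₀, div_lt_one (v.pos (hl.ne_zero 1))] at h01
  by_cases h21 : v (l 2) < v (l 1)
  · refine hv.exists_forall_orbitDet_ne_zero_of_dominant ha hl (i := 1) fun j hj ↦ ?_
    fin_cases j
    exacts [h01, absurd rfl hj, h21]
  · refine hv.exists_forall_orbitDet_ne_zero_of_minimal ha hl (i := 0) fun j hj ↦ ?_
    fin_cases j
    exacts [absurd rfl hj, h01, h01.trans_le (not_lt.1 h21)]

theorem boundedGap_of_forall_ne_zero (ha : ∀ i j, a i j ≠ 0) (hl : NontorsionRatios l) :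
    BoundedGap a l := by
  have (σ : Equiv.Perm (Fin 3)) := exists_forall_orbitDet_ne_zero (a := a.submatrix σ id)
    (fun _ _ ↦ ha _ _) hl
  choose N hN using this
  obtain ⟨M, hM⟩ := (Set.finite_range N).bddAbove
  refine ⟨M, fun m hm ↦ ?_⟩
  by_contra! hgap
  set σ := Tuple.sort (-m)
  have hmono : Monotone (-m ∘ σ) := Tuple.monotone_sort (-m)
  have hlarge {i j : Fin 3} (hij : i < j) : N σ ≤ m (σ i) - m (σ j) := by
    have hle : m (σ j) ≤ m (σ i) := neg_le_neg_iff.1 (hmono hij.le)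
    have := hgap (σ i) (σ j) (σ.injective.ne hij.ne)
    rw [abs_of_nonneg (sub_nonneg.2 hle)] at this
    exact (hM ⟨σ, rfl⟩).trans this
  exact hN σ (m ∘ σ) (hlarge (by decide)) (hlarge (by decide))
    ((orbitDet_submatrix_eq_zero_iff σ 1).2 hm)

theorem boundedGap_of_diag_zero_eq_zero (ha : ∀ i j, i ≠ j → a i j ≠ 0) (h0 : a 0 0 = 0)
    (h1 : a 1 1 ≠ 0) (h2 : a 2 2 ≠ 0) (hl : NontorsionRatios l)
    (hsq : ¬ IsOfFinOrder (l 0 ^ 2 / (l 1 * l 2))) : BoundedGap a l := by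
  have hl2 := hl.ne_zero 2
  have hx := div_ne_zero (hl.ne_zero 0) hl2
  have hy := div_ne_zero (hl.ne_zero 1) hl2
  obtain ⟨N, hN⟩ := exists_forall_zpow_mul_add_eq (A := -(a 0 1 * a 1 0 * a 2 2))
    (B := a 0 2 * a 1 0 * a 2 1) (C := -(a 0 1 * a 1 2 * a 2 0)) (D := a 0 2 * a 1 1 * a 2 0)
    (by simp [ha, h2]) (by simp [ha]) (by simp [ha]) (by simp [ha, h1]) hx hy
    (hl.not_isOfFinOrder_div (by decide)) (hl.not_isOfFinOrder_div (by decide))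
    (by rw [div_div_div_cancel_right₀ hl2]; exact hl.not_isOfFinOrder_div (by decide))
    (by convert hsq using 2; field_simp)
  refine ⟨N, fun m hm ↦ ?_⟩
  rw [← orbitDet_div_sub_eq_zero_iff hl.ne_zero hl2 (m 0), orbitDet, Matrix.det_fin_three] at hm
  simp only [Matrix.of_apply, sub_self, zpow_zero, div_self hl2, one_zpow, h0] at hm
  rcases hN (m 1 - m 0) (m 2 - m 0) (by linear_combination hm) with h | h | h
  · exact ⟨1, 0, by decide, h⟩
  · exact ⟨2, 0, by decide, h⟩
  · exact ⟨1, 2, by decide, by rwa [sub_sub_sub_cancel_right] at h⟩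

theorem boundedGap_of_diag_two_ne_zero (ha : ∀ i j, i ≠ j → a i j ≠ 0) (h0 : a 0 0 = 0)
    (h1 : a 1 1 = 0) (h2 : a 2 2 ≠ 0) (hl : NontorsionRatios l) : BoundedGap a l := by
  have hl2 := hl.ne_zero 2
  have hx := div_ne_zero (hl.ne_zero 0) hl2
  have hy := div_ne_zero (hl.ne_zero 1) hl2
  obtain ⟨N, hN⟩ := exists_forall_add_mul_zpow_add_mul_zpow_eq_zero (A := -(a 0 1 * a 1 0 * a 2 2))
    (B := a 0 1 * a 1 2 * a 2 0) (C := a 0 2 * a 1 0 * a 2 1)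
    (by simp [ha, h2]) (by simp [ha]) (by simp [ha]) hx hy
    (hl.not_isOfFinOrder_div (by decide)) (hl.not_isOfFinOrder_div (by decide))
  refine ⟨N, fun m hm ↦ ?_⟩
  rw [← orbitDet_div_sub_eq_zero_iff hl.ne_zero hl2 (m 2), orbitDet, Matrix.det_fin_three] at hm
  simp only [Matrix.of_apply, sub_self, zpow_zero, div_self hl2, one_zpow, h0, h1] at hm
  have hxm := zpow_ne_zero (m 1 - m 2) hx
  have hym := zpow_ne_zero (m 0 - m 2) hy
  have h := hN (-(m 1 - m 2)) (-(m 0 - m 2)) (by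
    rw [zpow_neg, zpow_neg]
    generalize (l 0 / l 2) ^ (m 1 - m 2) = X at *
    generalize (l 1 / l 2) ^ (m 0 - m 2) = Y at *
    field_simp
    linear_combination hm)
  rw [abs_neg, abs_neg] at h
  rcases h with h | h
  · exact ⟨1, 2, by decide, h⟩
  · exact ⟨0, 2, by decide, h⟩

theorem boundedGap_of_offDiag_ne_zero_of_numberField (ha : ∀ i j, i ≠ j → a i j ≠ 0)
    (hdiag : ∃ i, a i i ≠ 0) (hl : ∀ i, l i ≠ 0)
    (hsq : ∀ i j k, i ≠ j → i ≠ k → ¬ IsOfFinOrder (l i ^ 2 / (l j * l k))) :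
    BoundedGap a l := by
  replace hl := nontorsionRatios_of_sq hl hsq
  have hperm (σ : Equiv.Perm (Fin 3)) : ∀ i j, i ≠ j → a (σ i) (σ j) ≠ 0 :=
    fun i j hij ↦ ha _ _ (σ.injective.ne hij)
  by_cases h0 : a 0 0 = 0 <;> by_cases h1 : a 1 1 = 0 <;> by_cases h2 : a 2 2 = 0
  · obtain ⟨i, hi⟩ := hdiag
    fin_cases i <;> contradiction
  · exact boundedGap_of_diag_two_ne_zero ha h0 h1 h2 hl
  · exact .of_submatrix (Equiv.swap 1 2) (Equiv.swap 1 2)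
      (boundedGap_of_diag_two_ne_zero (hperm _) h0 h2 h1 (hl.comp _))
  · exact boundedGap_of_diag_zero_eq_zero ha h0 h1 h2 hl (hsq _ _ _ (by decide) (by decide))
  · exact .of_submatrix (Equiv.swap 0 2) (Equiv.swap 0 2)
      (boundedGap_of_diag_two_ne_zero (hperm _) h2 h1 h0 (hl.comp _))
  · exact .of_submatrix (Equiv.swap 0 1) (Equiv.swap 0 1)
      (boundedGap_of_diag_zero_eq_zero (hperm _) h1 h0 h2 (hl.comp _)
        (hsq _ _ _ (by decide) (by decide)))
  · exact .of_submatrix (Equiv.swap 0 2) (Equiv.swap 0 2)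
      (boundedGap_of_diag_zero_eq_zero (hperm _) h2 h1 h0 (hl.comp _)
        (hsq _ _ _ (by decide) (by decide)))
  · refine boundedGap_of_forall_ne_zero (fun i j ↦ ?_) hl
    rcases eq_or_ne i j with rfl | hij
    · fin_cases i <;> assumption
    · exact ha i j hij

end NumberField

/-! ### Specialization to number fields -/

section Specialization

theorem span_range_comp_eq_top_of_surjective {k A R S ι : Type*} [CommSemiring k] [CommSemiring A]
    [Semiring R] [Semiring S] [Algebra k R] [Algebra A R] [Algebra k S] {φ : R →ₐ[k] S}
    (hφ : Function.Surjective φ) (hA : ∀ a : A, φ (algebraMap A R a) ∈ (⊥ : Subalgebra k S))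
    {r : ι → R} (hr : Submodule.span A (Set.range r) = ⊤) :
    Submodule.span k (Set.range (φ ∘ r)) = ⊤ := by
  refine eq_top_iff.2 fun x _ ↦ ?_
  obtain ⟨y, rfl⟩ := hφ x
  have hy : y ∈ Submodule.span A (Set.range r) := hr ▸ Submodule.mem_top
  induction hy using Submodule.span_induction with
  | mem y hy =>
    obtain ⟨i, rfl⟩ := hy
    exact Submodule.subset_span ⟨i, rfl⟩
  | zero => exact map_zero φ ▸ Submodule.zero_mem _
  | add y z _ _ hy hz => exact map_add φ y z ▸ Submodule.add_mem _ (hy trivial) (hz trivial)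
  | smul a y _ hy =>
    obtain ⟨c, hc⟩ := Algebra.mem_bot.1 (hA a)
    rw [Algebra.smul_def, map_mul, ← hc, ← Algebra.smul_def]
    exact Submodule.smul_mem _ _ (hy trivial)

-- By Noether normalization `R` is generated as a module by `n` elements over a polynomial ring;
-- the ideals `Q` are those lying over rational points of the corresponding affine space.
theorem exists_isMaximal_notMem_finrank_quotient_le (k R : Type*) [Field k] [Infinite k]
    [CommRing R] [IsDomain R] [Algebra k R] [Algebra.FiniteType k R] :
    ∃ n : ℕ, ∀ f : R, f ≠ 0 → ∃ Q : Ideal R, Q.IsMaximal ∧ f ∉ Q ∧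
      Module.Finite k (R ⧸ Q) ∧ Module.finrank k (R ⧸ Q) ≤ n := by
  obtain ⟨s, g, hinj, hfin⟩ := exists_finite_inj_algHom_of_fg k R
  let := g.toRingHom.toAlgebra
  have : Module.Finite (MvPolynomial (Fin s) k) R := hfin
  obtain ⟨n, r, hr⟩ := Module.Finite.exists_fin (R := MvPolynomial (Fin s) k) (M := R)
  refine ⟨n, fun f hf ↦ ?_⟩
  obtain ⟨p, hpf, hp⟩ := Submodule.exists_mem_ne_zero_of_ne_bot <|
    Ideal.comap_ne_bot_of_integral_mem (R := MvPolynomial (Fin s) k) (I := Ideal.span {f})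
      hf (Ideal.mem_span_singleton_self f) (Algebra.IsIntegral.isIntegral f)
  obtain ⟨t, ht⟩ : ∃ t, MvPolynomial.eval t p ≠ 0 := by
    by_contra! h
    exact hp (MvPolynomial.funext fun x ↦ (h x).trans (map_zero _).symm)
  have hmax : (RingHom.ker (MvPolynomial.eval t)).IsMaximal :=
    RingHom.ker_isMaximal_of_surjective _ fun c ↦ ⟨MvPolynomial.C c, MvPolynomial.eval_C c⟩
  obtain ⟨Q, hQ, hQc⟩ := Ideal.exists_ideal_over_maximal_of_isIntegral (S := R)
    (RingHom.ker (MvPolynomial.eval t))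
    (((RingHom.injective_iff_ker_eq_bot (algebraMap (MvPolynomial (Fin s) k) R)).1 hinj).trans_le
      bot_le)
  have hmem (a) : algebraMap _ R a ∈ Q ↔ MvPolynomial.eval t a = 0 := by
    rw [← Ideal.mem_comap, hQc, RingHom.mem_ker]
  have hspan := span_range_comp_eq_top_of_surjective (Ideal.Quotient.mkₐ_surjective k Q)
    (fun a ↦ Algebra.mem_bot.2 ⟨MvPolynomial.eval t a, by
      have h := (hmem (a - MvPolynomial.C (MvPolynomial.eval t a))).2 (by simp)
      rw [map_sub, ← Ideal.Quotient.eq] at h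
      exact (congrArg (Ideal.Quotient.mk Q) (g.commutes _).symm).trans h.symm⟩) hr
  refine ⟨Q, hQ, fun hfQ ↦ ht ((hmem p).1 ?_), ⟨Submodule.fg_def.2
    ⟨_, Set.finite_range _, hspan⟩⟩, ?_⟩
  · exact (Ideal.span_singleton_le_iff_mem Q).2 hfQ (Ideal.mem_comap.1 hpf)
  · simpa using finrank_le_of_span_eq_top hspan

theorem dvd_factorial_pow_of_totient_le {n d : ℕ} (hd : d ≠ 0) (h : d.totient ≤ n) :
    d ∣ (n + 1).factorial ^ (n + 1) := by
  refine Nat.dvd_iff_prime_pow_dvd_dvd _ _ |>.2 fun p k hp hk ↦ ?_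
  rcases k.eq_zero_or_pos with rfl | hk0
  · exact pow_zero p ▸ one_dvd _
  have htot : p ^ (k - 1) * (p - 1) ≤ n := by
    rw [← Nat.totient_prime_pow hp hk0]
    exact (Nat.le_of_dvd (Nat.totient_pos.2 (Nat.pos_of_ne_zero hd))
      (Nat.totient_dvd_of_dvd hk)).trans h
  have hp2 := hp.two_le
  have hpn : p - 1 ≤ n := (Nat.le_mul_of_pos_left _ (Nat.pow_pos hp.pos)).trans htot
  have hkn : p ^ (k - 1) ≤ n := (Nat.le_mul_of_pos_right _ (by lia)).trans htot
  have hk1 : k - 1 < p ^ (k - 1) := Nat.lt_pow_self (by lia)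
  exact (pow_dvd_pow_of_dvd (Nat.dvd_factorial hp.pos (by lia)) k).trans (pow_dvd_pow _ (by lia))

theorem pow_factorial_pow_eq_one_of_isOfFinOrder {K : Type*} [Field K] [Algebra ℚ K]
    [FiniteDimensional ℚ K] {n : ℕ} (hn : Module.finrank ℚ K ≤ n) {z : K} (hz : IsOfFinOrder z) :
    z ^ (n + 1).factorial ^ (n + 1) = 1 := by
  have := algebraRat.charZero K
  have hz_int : IsIntegral ℤ z := (IsPrimitiveRoot.orderOf z).isIntegral hz.orderOf_pos
  have hdeg := minpoly.natDegree_le (A := ℚ) z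
  rw [minpoly.isIntegrallyClosed_eq_field_fractions' ℚ hz_int,
    (minpoly.monic hz_int).natDegree_map] at hdeg
  exact orderOf_dvd_iff_pow_eq_one.1 <| dvd_factorial_pow_of_totient_le hz.orderOf_pos.ne' <|
    (IsPrimitiveRoot.orderOf z).totient_le_degree_minpoly.trans
      (hdeg.trans hn)

-- A specialization of bounded degree in which `ζ ^ M - 1` stays nonzero, with `M` a multiple of
-- all orders of torsion elements in fields of that degree, keeps `ζ` of infinite order.
theorem exists_ringHom_numberField {L : Type u} [Field L] [CharZero L] {ι : Type*} [Finite ι]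
    (z : ι → L) :
    ∃ (K : Type u) (_ : Field K) (_ : NumberField K) (R : Subalgebra ℚ L) (φ : R →+* K)
      (ζ : ι → R), (∀ i, (ζ i : L) = z i) ∧ (∀ i, z i ≠ 0 → φ (ζ i) ≠ 0) ∧
        ∀ i, ¬ IsOfFinOrder (z i) → ¬ IsOfFinOrder (φ (ζ i)) := by
  classical
  cases nonempty_fintype ι
  let R := Algebra.adjoin ℚ (Set.range z)
  have : Algebra.FiniteType ℚ R :=
    R.fg_iff_finiteType.1 (Subalgebra.fg_def.2 ⟨_, Set.finite_range z, rfl⟩)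
  let ζ (i : ι) : R := ⟨z i, Algebra.subset_adjoin ⟨i, rfl⟩⟩
  obtain ⟨n, hn⟩ := exists_isMaximal_notMem_finrank_quotient_le ℚ R
  let M := (n + 1).factorial ^ (n + 1)
  let S := Finset.univ.image ζ ∪ Finset.univ.image fun i ↦ ζ i ^ M - 1
  obtain ⟨Q, hQ, hfQ, hfin, hrank⟩ := hn (∏ x ∈ S with x ≠ 0, x)
    (Finset.prod_ne_zero_iff.2 fun x hx ↦ (Finset.mem_filter.1 hx).2)
  have hS {x : R} (hx : x ∈ S) (hx0 : x ≠ 0) : Ideal.Quotient.mk Q x ≠ 0 := fun h ↦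
    hfQ <| Q.mem_of_dvd (Finset.dvd_prod_of_mem _ (Finset.mem_filter.2 ⟨hx, hx0⟩))
      (Ideal.Quotient.eq_zero_iff_mem.1 h)
  let := Ideal.Quotient.field Q
  refine ⟨R ⧸ Q, _, .of_module_finite ℚ _, R, Ideal.Quotient.mk Q, ζ, fun _ ↦ rfl,
    fun i hi ↦ ?_, fun i hi h ↦ ?_⟩
  · exact hS (by simp [S]) (Subtype.coe_ne_coe.1 hi)
  · refine hS (x := ζ i ^ M - 1) (by simp [S]) (fun h0 ↦ hi ?_) ?_
    · refine isOfFinOrder_iff_pow_eq_one.2 ⟨M, by positivity, ?_⟩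
      exact congrArg Subtype.val (sub_eq_zero.1 h0)
    · rw [map_sub, map_pow, pow_factorial_pow_eq_one_of_isOfFinOrder hrank h, map_one, sub_self]

end Specialization

section Transfer

theorem orbitDet_map_natCast {ι R K : Type*} [Fintype ι] [DecidableEq ι] [CommRing R] [Field K]
    (f : R →+* K) (a : Matrix ι ι R) (l : ι → R) (n : ι → ℕ) :
    orbitDet (a.map f) (f ∘ l) (fun i ↦ n i) = f (Matrix.of fun i j ↦ a i j * l j ^ n i).det := by
  rw [orbitDet, RingHom.map_det]
  congr 1
  ext i j
  simp

theorem BoundedGap.of_ringHom {ι R K L : Type*} [Fintype ι] [DecidableEq ι] [CommRing R] [Field K]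
    [Field L] {f : R →+* L} (hf : Function.Injective f) {φ : R →+* K} {a : Matrix ι ι R}
    {l : ι → R} (hl : ∀ i, φ (l i) ≠ 0) (h : BoundedGap (a.map φ) (φ ∘ l)) :
    BoundedGap (a.map f) (f ∘ l) := by
  obtain ⟨N, hN⟩ := h
  refine ⟨N, fun m hm ↦ ?_⟩
  have hfl (i : ι) : (f ∘ l) i ≠ 0 := fun h0 ↦
    hl i <| (map_eq_zero_iff f hf).1 h0 ▸ map_zero φ
  obtain ⟨k, hk⟩ := (Set.finite_range m).bddBelow
  have hshift : (fun i ↦ m i - k) = fun i ↦ ((m i - k).toNat : ℤ) :=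
    funext fun i ↦ (Int.toNat_of_nonneg (sub_nonneg.2 (hk ⟨i, rfl⟩))).symm
  refine hN m ?_
  rw [← orbitDet_div_sub_eq_zero_iff hfl one_ne_zero k] at hm
  rw [← orbitDet_div_sub_eq_zero_iff (l := φ ∘ l) hl one_ne_zero k]
  simp only [div_one, hshift, orbitDet_map_natCast] at hm ⊢
  rw [(map_eq_zero_iff f hf).1 hm, map_zero]

theorem boundedGap_of_offDiag_ne_zero {L : Type*} [Field L] [CharZero L]
    {a : Matrix (Fin 3) (Fin 3) L} {l : Fin 3 → L} (ha : ∀ i j, i ≠ j → a i j ≠ 0)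
    (hdiag : ∃ i, a i i ≠ 0) (hl : ∀ i, l i ≠ 0)
    (hsq : ∀ i j k, i ≠ j → i ≠ k → ¬ IsOfFinOrder (l i ^ 2 / (l j * l k))) :
    BoundedGap a l := by
  obtain ⟨K, _, _, R, φ, ζ, hζ, hne, htors⟩ := exists_ringHom_numberField <|
    Sum.elim a.uncurry <| Sum.elim l fun p : Fin 3 × Fin 3 × Fin 3 ↦
      l p.1 ^ 2 / (l p.2.1 * l p.2.2)
  let b : Matrix (Fin 3) (Fin 3) R := .of fun i j ↦ ζ (.inl (i, j))
  let c (i : Fin 3) : R := ζ (.inr (.inl i))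
  have hb : b.map R.val.toRingHom = a := by
    ext i j
    exact hζ (.inl (i, j))
  have hc : R.val.toRingHom ∘ c = l := funext fun i ↦ hζ (.inr (.inl i))
  have hφc (i : Fin 3) : φ (c i) ≠ 0 := hne _ (hl i)
  rw [← hb, ← hc]
  obtain ⟨i, hi⟩ := hdiag
  refine .of_ringHom Subtype.val_injective hφc (boundedGap_of_offDiag_ne_zero_of_numberField
    (fun i j hij ↦ hne _ (ha i j hij)) ⟨i, hne _ hi⟩ hφc fun i j k hij hik ↦ ?_)
  have hratio : ζ (.inr (.inr (i, j, k))) * (c j * c k) = c i ^ 2 := by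
    refine Subtype.ext ?_
    simp only [MulMemClass.coe_mul, SubmonoidClass.coe_pow, c, hζ, Sum.elim_inr, Sum.elim_inl]
    exact div_mul_cancel₀ _ (mul_ne_zero (hl j) (hl k))
  simp only [Function.comp_apply]
  rw [← map_pow, ← hratio, map_mul, map_mul, mul_div_cancel_right₀ _ (mul_ne_zero (hφc j) (hφc k))]
  exact htors (.inr (.inr (i, j, k))) (hsq i j k hij hik)

end Transfer

/-! ### Bounded gaps under multiplicative independence -/

section RatioIndependent
variable {ι K : Type*} [Fintype ι] [Field K] {l : ι → K}

/-- The monomials of total degree zero in the nonzero scalars `l i` are multiplicatively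
independent; for `l = (λ₁, λ₂, 1)` this is the multiplicative independence of `λ₁` and `λ₂`,
in a form which does not single out a coordinate. -/
structure RatioIndependent (l : ι → K) : Prop where
  ne_zero (i : ι) : l i ≠ 0
  eq_zero (e : ι → ℤ) (he : ∑ i, e i = 0) (hprod : ∏ i, l i ^ e i = 1) : e = 0

theorem RatioIndependent.comp (h : RatioIndependent l) (σ : Equiv.Perm ι) :
    RatioIndependent (l ∘ σ) := by
  refine ⟨fun i ↦ h.ne_zero (σ i), fun e he hprod ↦ ?_⟩
  have := h.eq_zero (e ∘ σ.symm) ((Equiv.sum_comp σ.symm e).trans he) <| by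
    rw [← hprod, ← Equiv.prod_comp σ]
    simp
  exact funext fun i ↦ by simpa using congrFun this (σ i)

theorem RatioIndependent.exists_forall_eq (h : RatioIndependent l) (c : K) :
    ∃ e₀ : ι → ℤ, ∀ e : ι → ℤ, ∑ i, e i = 0 → ∏ i, l i ^ e i = c → e = e₀ := by
  by_cases hc : ∃ e : ι → ℤ, ∑ i, e i = 0 ∧ ∏ i, l i ^ e i = c
  · obtain ⟨e₀, he₀, hprod₀⟩ := hc
    refine ⟨e₀, fun e he hprod ↦ sub_eq_zero.1 (h.eq_zero _ ?_ ?_)⟩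
    · simp [he, he₀]
    · have hne : ∏ i, l i ^ e₀ i ≠ 0 :=
        Finset.prod_ne_zero_iff.2 fun i _ ↦ zpow_ne_zero _ (h.ne_zero i)
      simp only [Pi.sub_apply, zpow_sub₀ (h.ne_zero _), Finset.prod_div_distrib, hprod, ← hprod₀,
        div_self hne]
  · exact ⟨0, fun e he hprod ↦ (hc ⟨e, he, hprod⟩).elim⟩

theorem RatioIndependent.not_isOfFinOrder_sq_div_mul (h : RatioIndependent l) {i j k : ι}
    (hij : i ≠ j) (hik : i ≠ k) : ¬ IsOfFinOrder (l i ^ 2 / (l j * l k)) := by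
  classical
  intro hfin
  obtain ⟨n, hn, hpow⟩ := isOfFinOrder_iff_pow_eq_one.1 hfin
  let δ (x : ι) : ι → ℤ := Pi.single x 1
  have hprod (x : ι) : ∏ y, l y ^ δ x y = l x := by
    rw [Fintype.prod_eq_single x fun y hy ↦ by simp only [δ, Pi.single_eq_of_ne hy, zpow_zero]]
    simp only [δ, Pi.single_eq_same, zpow_one]
  have := congrFun (h.eq_zero (fun x ↦ (δ i x * 2 - (δ j x + δ k x)) * n)
    (by simp [δ, ← Finset.sum_mul, Finset.sum_add_distrib]) (by
      simp only [zpow_mul, zpow_sub₀ (h.ne_zero _), zpow_add₀ (h.ne_zero _), zpow_natCast,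
        Finset.prod_pow, Finset.prod_div_distrib, Finset.prod_mul_distrib, zpow_ofNat, hprod]
      exact hpow)) i
  simp [δ, hij, hik, hn.ne'] at this

theorem RatioIndependent.nontorsionRatios (h : RatioIndependent l) : NontorsionRatios l :=
  nontorsionRatios_of_sq h.ne_zero fun _ _ _ ↦ h.not_isOfFinOrder_sq_div_mul

end RatioIndependent

section BoundedGap
variable {K : Type*} [Field K] {b : Matrix (Fin 3) (Fin 3) K} {l : Fin 3 → K}

-- Only two monomials survive in the determinant, so their quotient takes a single value.
theorem boundedGap_of_diag_eq_zero (ha : ∀ i j, i ≠ j → b i j ≠ 0) (hdiag : ∀ i, b i i = 0)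
    (hl : RatioIndependent l) : BoundedGap b l := by
  obtain ⟨e, he⟩ := hl.exists_forall_eq (-(b 0 2 * b 1 0 * b 2 1) / (b 0 1 * b 1 2 * b 2 0))
  refine ⟨|e 0| + 1, fun m hm ↦ ⟨2, 1, by decide, ?_⟩⟩
  rw [orbitDet, Matrix.det_fin_three] at hm
  simp only [Matrix.of_apply, hdiag] at hm
  have h := congrFun (he ![m 2 - m 1, m 0 - m 2, m 1 - m 0] (by simp [Fin.sum_univ_three]) ?_) 0
  · simp only [Matrix.cons_val_zero] at h
    rw [h]
    exact lt_add_one _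
  · have hne (i j : Fin 3) := zpow_ne_zero (m j) (hl.ne_zero i)
    simp only [Fin.prod_univ_three, Matrix.cons_val_zero, Matrix.cons_val_one, Matrix.cons_val,
      zpow_sub₀ (hl.ne_zero _)]
    rw [div_mul_div_comm, div_mul_div_comm, div_eq_div_iff (by simp [hne]) (by simp [ha])]
    linear_combination hm

theorem sum_eq_add_add_of_ne {M : Type*} [AddCommMonoid M] {c d e : Fin 3} (hcd : c ≠ d)
    (hce : c ≠ e) (hde : d ≠ e) (f : Fin 3 → M) : ∑ j, f j = f c + f d + f e := by
  have huniv : (Finset.univ : Finset (Fin 3)) = {c, d, e} := by decide +revert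
  rw [huniv, Finset.sum_insert (by simp [hcd, hce]), Finset.sum_pair hde, add_assoc]

theorem exists_forall_eq_of_zpow_eq {z : K} (hz : z ≠ 0) (hfin : ¬ IsOfFinOrder z) (c : K) :
    ∃ n₀ : ℤ, ∀ n : ℤ, z ^ n = c → n = n₀ := by
  by_cases hc : ∃ n : ℤ, z ^ n = c
  · obtain ⟨n₀, rfl⟩ := hc
    exact ⟨n₀, fun n hn ↦ zpow_right_injective_of_not_isOfFinOrder hz hfin hn⟩
  · exact ⟨0, fun n hn ↦ (hc ⟨n, hn⟩).elim⟩

theorem RatioIndependent.exists_forall_sub_eq (hl : RatioIndependent l) {i i' c : Fin 3}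
    (hb : ∀ j, j ≠ c → b i j ≠ 0) (hb' : ∀ j, j ≠ c → b i' j ≠ 0) (hc : b i c = 0)
    (hc' : b i' c = 0) :
    ∃ n₀ : ℤ, ∀ (m : Fin 3 → ℤ) (v : Fin 3 → K), (∀ j, v j ≠ 0) →
      (Matrix.of fun i j ↦ b i j * l j ^ m i) *ᵥ v = 0 → m i - m i' = n₀ := by
  obtain ⟨d, e, hcd, hce, hde⟩ : ∃ d e, c ≠ d ∧ c ≠ e ∧ d ≠ e :=
    (by decide : ∀ c : Fin 3, ∃ d e, c ≠ d ∧ c ≠ e ∧ d ≠ e) c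
  have hz := div_ne_zero (hl.ne_zero d) (hl.ne_zero e)
  obtain ⟨n₀, hn₀⟩ := exists_forall_eq_of_zpow_eq hz
    (hl.nontorsionRatios.not_isOfFinOrder_div hde) (b i e * b i' d / (b i d * b i' e))
  refine ⟨n₀, fun m v hv hm ↦ hn₀ _ ?_⟩
  have hratio {k : Fin 3} (hk : b k c = 0) (hkd : b k d ≠ 0) :
      (l d / l e) ^ m k = -(b k e * v e) / (b k d * v d) := by
    have h := congrFun hm k
    simp only [Matrix.mulVec, dotProduct, Matrix.of_apply, Pi.zero_apply,
      sum_eq_add_add_of_ne hcd hce hde, hk] at h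
    rw [div_zpow, div_eq_div_iff (zpow_ne_zero _ (hl.ne_zero e)) (mul_ne_zero hkd (hv d))]
    linear_combination h
  have hbd := hb d hcd.symm
  have hbe := hb e hce.symm
  have hbd' := hb' d hcd.symm
  have hbe' := hb' e hce.symm
  have hvd := hv d
  have hve := hv e
  rw [zpow_sub₀ hz, hratio hc hbd, hratio hc' hbd']
  field_simp

theorem exists_perm_of_biUnique {α : Type*} [Finite α] {r : α → α → Prop}
    (hr : Relator.BiUnique r) : ∃ π : Equiv.Perm α, ∀ i j, r i j → π i = j := by
  classical
  cases nonempty_fintype α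
  choose! f hf using fun (i : α) (h : ∃ j, r i j) ↦ h
  obtain ⟨g, hg⟩ := Finset.exists_equiv_extend_of_card_eq (t := Finset.univ)
    (s := {i | ∃ j, r i j}) (f := f) Finset.card_univ.symm (Finset.subset_univ _) (by
      intro i hi i' hi' h
      have hi := hf i (by simpa using hi)
      have hi' := hf i' (by simpa using hi')
      exact hr.1 hi (h ▸ hi'))
  refine ⟨g.trans (Equiv.subtypeUnivEquiv Finset.mem_univ), fun i j hij ↦ ?_⟩
  exact (hg i (by simpa using ⟨j, hij⟩)).trans (hr.2 (hf i ⟨j, hij⟩) hij)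

theorem boundedGap_of_biUnique [CharZero K] (hl : RatioIndependent l)
    (hb : Relator.BiUnique fun i j ↦ b i j = 0) : BoundedGap b l := by
  obtain ⟨π, hπ⟩ := exists_perm_of_biUnique hb
  refine .of_submatrix 1 π ?_
  have hoff (i j : Fin 3) (hij : i ≠ j) : b.submatrix (1 : Equiv.Perm (Fin 3)) π i j ≠ 0 :=
    fun h ↦ hij (π.injective (hπ i _ h))
  by_cases hdiag : ∃ i, b.submatrix (1 : Equiv.Perm (Fin 3)) π i i ≠ 0
  · exact boundedGap_of_offDiag_ne_zero hoff hdiag (hl.comp π).ne_zero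
      fun _ _ _ ↦ (hl.comp π).not_isOfFinOrder_sq_div_mul
  · exact boundedGap_of_diag_eq_zero hoff (not_exists_not.1 hdiag) (hl.comp π)

theorem eq_of_apply_eq_zero_of_mulVec_eq_zero {m : Fin 3 → ℤ} {v : Fin 3 → K}
    (hl : ∀ i, l i ≠ 0) (hv : ∀ j, v j ≠ 0)
    (hm : (Matrix.of fun i j ↦ b i j * l j ^ m i) *ᵥ v = 0) {i c d : Fin 3} (hb : b i ≠ 0)
    (hc : b i c = 0) (hd : b i d = 0) : c = d := by
  by_contra hcd
  obtain ⟨e, hce, hde⟩ : ∃ e, c ≠ e ∧ d ≠ e :=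
    (by decide : ∀ c d : Fin 3, ∃ e, c ≠ e ∧ d ≠ e) c d
  have h := congrFun hm i
  simp only [Matrix.mulVec, dotProduct, Matrix.of_apply, Pi.zero_apply,
    sum_eq_add_add_of_ne hcd hce hde, hc, hd, zero_mul, zero_add, mul_eq_zero, hv e, or_false,
    zpow_ne_zero _ (hl e)] at h
  refine hb (funext fun j ↦ ?_)
  obtain rfl | rfl | rfl : j = c ∨ j = d ∨ j = e := by lia
  exacts [hc, hd, h]

theorem RatioIndependent.exists_forall_mulVec_eq_zero [CharZero K] (hl : RatioIndependent l)
    (hb : ∀ i, b i ≠ 0) :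
    ∃ N : ℤ, ∀ (m : Fin 3 → ℤ) (v : Fin 3 → K), (∀ j, v j ≠ 0) →
      (Matrix.of fun i j ↦ b i j * l j ^ m i) *ᵥ v = 0 → ∃ i j, i ≠ j ∧ |m i - m j| < N := by
  by_cases hrow : ∃ i c d, c ≠ d ∧ b i c = 0 ∧ b i d = 0
  · obtain ⟨i, c, d, hcd, hc, hd⟩ := hrow
    exact ⟨0, fun m v hv hm ↦
      (hcd (eq_of_apply_eq_zero_of_mulVec_eq_zero hl.ne_zero hv hm (hb i) hc hd)).elim⟩
  push Not at hrow
  by_cases hcol : ∃ i i' c, i ≠ i' ∧ b i c = 0 ∧ b i' c = 0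
  · obtain ⟨i, i', c, hii', hc, hc'⟩ := hcol
    obtain ⟨n₀, hn₀⟩ := hl.exists_forall_sub_eq (fun j hj ↦ hrow i c j hj.symm hc)
      (fun j hj ↦ hrow i' c j hj.symm hc') hc hc'
    exact ⟨|n₀| + 1, fun m v hv hm ↦ ⟨i, i', hii', hn₀ m v hv hm ▸ lt_add_one _⟩⟩
  push Not at hcol
  obtain ⟨N, hN⟩ := boundedGap_of_biUnique hl
    ⟨fun i j c hi hj ↦ by_contra fun h ↦ hcol i j c h hi hj,
      fun i c d hc hd ↦ by_contra fun h ↦ hrow i c d h hc hd⟩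
  exact ⟨N, fun m v hv hm ↦ hN m <| Matrix.exists_mulVec_eq_zero_iff.1
    ⟨v, fun h ↦ hv 0 (congrFun h 0), hm⟩⟩

end BoundedGap

/-! ### Lines in the projective plane -/

section Lines
variable {K V : Type*} [Field K] [AddCommGroup V] [Module K V]

theorem finite_setOf_submodule_le_of_finrank_eq_two {W W' : Submodule K V}
    (h : Module.finrank K W = 2) (h' : Module.finrank K W' = 2) (hne : W ≠ W') :
    {P : ℙ K V | P.submodule ≤ W ∧ P.submodule ≤ W'}.Finite := by
  have := Module.finite_of_finrank_eq_succ h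
  have := Module.finite_of_finrank_eq_succ h'
  have hlt : W ⊓ W' < W := inf_le_left.lt_of_ne fun he ↦
    hne (Submodule.eq_of_le_of_finrank_eq (inf_eq_left.1 he) (h.trans h'.symm))
  have hrank := Submodule.finrank_lt_finrank_of_lt hlt
  have hinf {P : ℙ K V} (hP : P.submodule ≤ W ∧ P.submodule ≤ W') : P.submodule = W ⊓ W' :=
    Submodule.eq_of_le_of_finrank_le (le_inf hP.1 hP.2) (by rw [P.finrank_submodule]; lia)
  exact Set.Subsingleton.finite fun P hP Q hQ ↦
    submodule_injective ((hinf hP).trans (hinf hQ).symm)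

theorem submodule_smul (g : V ≃ₗ[K] V) (P : ℙ K V) :
    (g • P).submodule = P.submodule.map g.toLinearMap := by
  induction P using Projectivization.ind with
  | h v hv =>
    rw [smul_mk, submodule_mk, submodule_mk, Submodule.map_span, Set.image_singleton]
    rfl

theorem zpow_apply_of_forall_apply_eq_mul {n : Type*} {β : (n → K) ≃ₗ[K] (n → K)}
    {l : n → K} (hl : ∀ j, l j ≠ 0) (hβ : ∀ x j, β x j = l j * x j) (k : ℤ) (x : n → K) (j : n) :
    (β ^ k) x j = l j ^ k * x j := by
  induction k generalizing x with
  | zero => simp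
  | succ k ih => rw [zpow_add_one, LinearEquiv.mul_apply, ih, hβ, zpow_add_one₀ (hl j), mul_assoc]
  | pred k ih =>
    have hinv : β⁻¹ x j = (l j)⁻¹ * x j := by
      rw [eq_inv_mul_iff_mul_eq₀ (hl j), ← hβ, ← LinearEquiv.mul_apply, mul_inv_cancel,
        LinearEquiv.coe_one, id]
    rw [zpow_sub_one, LinearEquiv.mul_apply, ih, hinv, zpow_sub_one₀ (hl j), mul_assoc]

variable {n : Type*} [Fintype n]

theorem finrank_ker_proj_add_one (c : n) :
    Module.finrank K (LinearMap.ker (LinearMap.proj c : (n → K) →ₗ[K] K)) + 1 =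
      Fintype.card n := by
  classical
  rw [Module.Dual.finrank_ker_add_one_of_ne_zero, Module.finrank_fintype_fun_eq_card]
  exact fun h ↦ one_ne_zero (α := K) <| by simpa using LinearMap.congr_fun h (Pi.single c 1)

theorem exists_mem_iff_dotProduct_eq_zero {W : Submodule K (n → K)}
    (hW : Module.finrank K W + 1 = Fintype.card n) :
    ∃ b : n → K, b ≠ 0 ∧ ∀ x, x ∈ W ↔ b ⬝ᵥ x = 0 := by
  classical
  have hlt : W < ⊤ := lt_top_iff_ne_top.2 fun h ↦ by
    rw [h, finrank_top, Module.finrank_fintype_fun_eq_card] at hW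
    lia
  obtain ⟨f, hf, hle⟩ := W.exists_le_ker_of_lt_top hlt
  have hker : W = LinearMap.ker f := Submodule.eq_of_le_of_finrank_eq hle <| by
    have := Module.Dual.finrank_ker_add_one_of_ne_zero hf
    rw [Module.finrank_fintype_fun_eq_card] at this
    lia
  obtain ⟨b, rfl⟩ := (dotProductEquiv K n).surjective f
  exact ⟨b, (map_ne_zero_iff _ (dotProductEquiv K n).injective).1 hf, fun x ↦ by
    rw [hker, LinearMap.mem_ker, dotProductEquiv_apply_apply]⟩

end Lines

section Orbits
variable {K : Type*} [Field K] [CharZero K] {l : Fin 3 → K} {β : (Fin 3 → K) ≃ₗ[K] (Fin 3 → K)}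
  {W : Fin 3 → Submodule K (Fin 3 → K)}

theorem RatioIndependent.exists_forall_zpow_smul_submodule_le (hl : RatioIndependent l)
    (hβ : ∀ x j, β x j = l j * x j) (hrank : ∀ i, Module.finrank K (W i) = 2) :
    ∃ N : ℤ, ∀ (m : Fin 3 → ℤ) (P : ℙ K (Fin 3 → K)), (∀ i, (β ^ m i • P).submodule ≤ W i) →
      (∃ c, P.submodule ≤ LinearMap.ker (LinearMap.proj c)) ∨
        ∃ i j, i ≠ j ∧ |m i - m j| < N := by
  choose b hb hW using fun i ↦ exists_mem_iff_dotProduct_eq_zero (W := W i) (by simp [hrank])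
  obtain ⟨N, hN⟩ := hl.exists_forall_mulVec_eq_zero (b := .of b) hb
  refine ⟨N, fun m P hP ↦ ?_⟩
  induction P using Projectivization.ind with
  | h v hv =>
    simp only [smul_mk, submodule_mk, Submodule.span_singleton_le_iff_mem, LinearMap.mem_ker,
      LinearMap.proj_apply] at hP ⊢
    refine or_iff_not_imp_left.2 fun hne ↦ hN m v (not_exists.1 hne) (funext fun i ↦ ?_)
    have hi := (hW i _).1 (hP i)
    simp only [dotProduct, LinearEquiv.smul_def,
      zpow_apply_of_forall_apply_eq_mul hl.ne_zero hβ, ← mul_assoc] at hi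
    exact hi

theorem finiteness_orbits_diagonal_general (hl : RatioIndependent l)
    (hβ : ∀ x j, β x j = l j * x j) (hrank : ∀ i, Module.finrank K (W i) = 2)
    (horb : ∀ (k : ℤ) (i j : Fin 3), i ≠ j → Submodule.map (β ^ k).toLinearMap (W i) ≠ W j) :
    ∃ F : Set (ℙ K (Fin 3 → K)), F.Finite ∧
      ∀ P : ℙ K (Fin 3 → K), (∃ m : Fin 3 → ℤ, ∀ i, (β ^ m i • P).submodule ≤ W i) →
        ∃ Q ∈ F, ∃ k : ℤ, P = β ^ k • Q := by
  obtain ⟨N, hN⟩ := hl.exists_forall_zpow_smul_submodule_le hβ hrank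
  let H (c : Fin 3) : Submodule K (Fin 3 → K) := LinearMap.ker (LinearMap.proj c)
  let meet (U U' : Submodule K (Fin 3 → K)) : Set (ℙ K (Fin 3 → K)) :=
    {P | P.submodule ≤ U ∧ P.submodule ≤ U'}
  have hH (c : Fin 3) : Module.finrank K (H c) = 2 := by
    simpa using finrank_ker_proj_add_one (K := K) c
  refine ⟨(⋃ (i) (c) (_ : W i ≠ H c), meet (W i) (H c)) ∪
    ⋃ (i) (j) (_ : j ≠ i), ⋃ d ∈ Set.Ioo (-N) N, meet (W i) ((W j).map (β ^ d).toLinearMap),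
    .union ?_ ?_, ?_⟩
  · exact Set.finite_iUnion fun i ↦ Set.finite_iUnion fun c ↦ Set.finite_iUnion fun hne ↦
      finite_setOf_submodule_le_of_finrank_eq_two (hrank i) (hH c) hne
  · exact Set.finite_iUnion fun i ↦ Set.finite_iUnion fun j ↦ Set.finite_iUnion fun hij ↦
      (Set.finite_Ioo _ _).biUnion fun d _ ↦ finite_setOf_submodule_le_of_finrank_eq_two (hrank i)
        ((LinearEquiv.finrank_map_eq (β ^ d) (W j)).trans (hrank j)) (horb d j i hij).symm
  rintro P ⟨m, hm⟩
  suffices hs : ∃ i, β ^ m i • P ∈ _ from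
    hs.elim fun i hi ↦ ⟨_, hi, -m i, by rw [zpow_neg, inv_smul_smul]⟩
  obtain ⟨c, hc⟩ | ⟨i, j, hij, hlt⟩ := hN m P hm
  · obtain ⟨i, hi⟩ : ∃ i, W i ≠ H c := by
      by_contra! hW
      exact horb 0 0 1 (by decide) ((Submodule.map_id _).trans ((hW 0).trans (hW 1).symm))
    refine ⟨i, .inl (Set.mem_iUnion₂.2 ⟨i, c, Set.mem_iUnion.2 ⟨hi, hm i, ?_⟩⟩)⟩
    rw [submodule_smul, Submodule.map_le_iff_le_comap]
    intro x hx
    exact (zpow_apply_of_forall_apply_eq_mul hl.ne_zero hβ _ x c).trans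
      (mul_eq_zero_of_right _ (hc hx))
  · refine ⟨i, .inr (Set.mem_iUnion₂.2 ⟨i, j, Set.mem_iUnion.2 ⟨hij.symm,
      Set.mem_iUnion₂.2 ⟨m i - m j, abs_lt.1 hlt, hm i, ?_⟩⟩⟩)⟩
    rw [← sub_add_cancel (m i) (m j), zpow_add, mul_smul, submodule_smul, add_sub_cancel_right]
    exact Submodule.map_mono (hm j)

end Orbits

theorem ratioIndependent_cons_one {K : Type*} [Field K] {x y : K} (hx : x ≠ 0) (hy : y ≠ 0)
    (hxy : ∀ a b : ℤ, x ^ a * y ^ b = 1 → a = 0 ∧ b = 0) : RatioIndependent ![x, y, 1] := by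
  refine ⟨Fin.forall_fin_succ.2 ⟨hx, Fin.forall_fin_two.2 ⟨hy, one_ne_zero⟩⟩, fun e he hprod ↦ ?_⟩
  rw [Fin.sum_univ_three] at he
  obtain ⟨h0, h1⟩ := hxy (e 0) (e 1) (by simpa [Fin.prod_univ_three] using hprod)
  ext i
  fin_cases i
  exacts [h0, h1, by simpa [h0, h1] using he]

/-- For the automorphism of `ℙ²(ℂ)` induced by `diag(λ₁, λ₂, 1)` with `λ₁, λ₂`
multiplicatively independent, only finitely many orbits meet three given lines lying in
pairwise distinct orbits. -/
theorem finiteness_orbits_diagonal (lam₁ lam₂ : ℂ) (h₁ : lam₁ ≠ 0) (h₂ : lam₂ ≠ 0)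
    (hindep : ∀ a b : ℤ, lam₁ ^ a * lam₂ ^ b = 1 → a = 0 ∧ b = 0)
    (β : (Fin 3 → ℂ) ≃ₗ[ℂ] (Fin 3 → ℂ))
    (hβ : β.toLinearMap = Matrix.toLin' (Matrix.diagonal ![lam₁, lam₂, 1]))
    (W : Fin 3 → Submodule ℂ (Fin 3 → ℂ))
    (hrank : ∀ i, Module.finrank ℂ (W i) = 2)
    (horb : ∀ (k : ℤ) (i j : Fin 3), i ≠ j →
      Submodule.map (β ^ k).toLinearMap (W i) ≠ W j) :
    ∃ F : Set ProjPlane, F.Finite ∧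
      ∀ P : ProjPlane,
        (∃ m₁ m₂ m₃ : ℤ, OnLine (projAct (β ^ m₁) P) (W 0) ∧
          OnLine (projAct (β ^ m₂) P) (W 1) ∧ OnLine (projAct (β ^ m₃) P) (W 2)) →
        ∃ Q ∈ F, ∃ k : ℤ, P = projAct (β ^ k) Q := by
  have hβ' (x : Fin 3 → ℂ) (j : Fin 3) : β x j = ![lam₁, lam₂, 1] j * x j := by
    rw [← LinearEquiv.coe_coe, hβ, Matrix.toLin'_apply, Matrix.mulVec_diagonal]
  obtain ⟨F, hF, hP⟩ := finiteness_orbits_diagonal_general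
    (ratioIndependent_cons_one h₁ h₂ hindep) hβ' hrank horb
  exact ⟨F, hF, fun P ⟨m₁, m₂, m₃, hm₁, hm₂, hm₃⟩ ↦
    hP P ⟨![m₁, m₂, m₃], Fin.forall_fin_succ.2 ⟨hm₁, Fin.forall_fin_two.2 ⟨hm₂, hm₃⟩⟩⟩⟩
end
end
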